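/- arXiv:math-ph/9904013 — 2 statements merged into one kernel-verified Lean document; each statement's English description precedes it below -/
import Mathlib

section
/- Let n ≥ 4 be an integer. For every ν with 0 ≤ ν ≤ δ there is a constant c > 0 such that for all t ≥ 1 and all x ∈ ℝ, (|x|/t^α)^ν |φ(x,t)| ≤ c t^{−γ}; moreover there is a constant c' > 0 such that for all t ≥ 1 and all x ∈ ℝ, |2 ū(x,t) φ(x,t) + φ(x,t)²| ≤ c' t^{−2γ}. -/
noncomputable def kap : ℝ := 1 / Real.sqrt Real.pi

noncomputable def kap3 : ℝ := -kap / 12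

noncomputable def gam (n : ℕ) : ℝ := 1 / (2 * (n : ℝ) + 1)

noncomputable def eps (n : ℕ) : ℝ := 1 / ((n : ℝ) - 1)

noncomputable def alph (n : ℕ) : ℝ := 1 / 2 - gam n

noncomputable def del (n : ℕ) : ℝ := ((n : ℝ) + 2) / ((n : ℝ) - 1)

noncomputable def lam (n : ℕ) : ℝ :=
  (del n * (del n + 1) / (2 * kap) ^ n) ^ (1 / ((n : ℝ) - 1))

noncomputable def lam0 (n : ℕ) : ℝ :=
  (lam n / (2 * kap)) *
    (-2 * (n : ℝ) * kap3 * del n * (del n + 1) - kap * (del n - 2 * eps n)) /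
    (((n : ℝ) - 1) * del n * (del n + 1) + 2 * (2 * del n - 1))

def IsReactiveProfile (n : ℕ) (η : ℝ → ℝ) : Prop :=
  ContDiffOn ℝ 2 η (Set.Ici 0) ∧
  (∀ z ∈ Set.Ici (0:ℝ), 0 < η z) ∧
  (∀ z ∈ Set.Ici (0:ℝ),
    derivWithin (derivWithin η (Set.Ici 0)) (Set.Ici 0) z
      = (2 * kap * z * η z + (η z) ^ 2) ^ n) ∧
  derivWithin η (Set.Ici 0) 0 = -kap ∧
  Filter.Tendsto η Filter.atTop (nhds 0)

/-- The corrector h: C² on [0,∞), satisfies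
h'' + γη + αzη' = n(2κzη+η²)^{n−1}((2κz+2η)h + 2κ₃z³η), h'(0) = 0,
h(z) − λ₀ z^{2−δ} → 0 as z → ∞. -/
def IsCorrector (n : ℕ) (η h : ℝ → ℝ) : Prop :=
  ContDiffOn ℝ 2 h (Set.Ici 0) ∧
  (∀ z ∈ Set.Ici (0:ℝ),
    derivWithin (derivWithin h (Set.Ici 0)) (Set.Ici 0) z + gam n * η z
        + alph n * z * derivWithin η (Set.Ici 0) z
      = (n : ℝ) * (2 * kap * z * η z + (η z) ^ 2) ^ (n - 1)
          * ((2 * kap * z + 2 * η z) * h z + 2 * kap3 * z ^ 3 * η z)) ∧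
  derivWithin h (Set.Ici 0) 0 = 0 ∧
  Filter.Tendsto (fun z : ℝ => h z - lam0 n * z ^ (2 - del n)) Filter.atTop (nhds 0)

noncomputable def mu1 (y : ℝ) : ℝ :=
  (2 / Real.sqrt Real.pi) * ∫ σ in (0:ℝ)..(y / 2), Real.exp (-σ ^ 2)

def IsDiffusiveProfile (n : ℕ) (μ : ℝ → ℝ) : Prop :=
  ContDiffOn ℝ 2 μ (Set.Ioi 0) ∧
  (∀ y ∈ Set.Ioi (0:ℝ), 0 < μ y) ∧
  (∀ y ∈ Set.Ioi (0:ℝ),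
    deriv (deriv μ) y + y / 2 * deriv μ y + eps n * μ y = (2 * mu1 y * μ y) ^ n) ∧
  Filter.Tendsto (fun y : ℝ => y ^ del n * μ y) (nhdsWithin 0 (Set.Ioi 0)) (nhds (lam n)) ∧
  Filter.Tendsto (fun y : ℝ => y ^ (2 * eps n) * μ y) Filter.atTop (nhds 0)

/-- u(x,t) = −erf(x/(2√t)). -/
noncomputable def uu (x t : ℝ) : ℝ := -mu1 (x / Real.sqrt t)

/-- ū(x,t) = μ₁(|x|/√t). -/
noncomputable def ubar (x t : ℝ) : ℝ := mu1 (|x| / Real.sqrt t)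

/-- φ₁(z) = η(z) − λ z^{−δ}. -/
noncomputable def phi1 (n : ℕ) (η : ℝ → ℝ) (z : ℝ) : ℝ := η z - lam n * z ^ (-(del n))

/-- φ₂(z) = −λ₀ z^{2−δ} + h(z). -/
noncomputable def phi2 (n : ℕ) (h : ℝ → ℝ) (z : ℝ) : ℝ := -lam0 n * z ^ (2 - del n) + h z

/-- μ₃(y) = μ₂(y) − λ y^{−δ}. -/
noncomputable def mu3 (n : ℕ) (μ : ℝ → ℝ) (y : ℝ) : ℝ := μ y - lam n * y ^ (-(del n))

/-- The asymptotic profile v_∞. -/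
noncomputable def vInf (n : ℕ) (η μ h : ℝ → ℝ) (x t : ℝ) : ℝ :=
  mu1 (|x| / Real.sqrt t) + t ^ (-(eps n)) * μ (|x| / Real.sqrt t)
    + t ^ (-(gam n)) * phi1 n η (|x| / t ^ alph n)
    + t ^ (-(3 * gam n)) * phi2 n h (|x| / t ^ alph n)

/-- φ(x,t) = t^{−γ} η(|z|) + t^{−ε} μ₃(|y|) + t^{−3γ} φ₂(|z|). -/
noncomputable def phiFun (n : ℕ) (η μ h : ℝ → ℝ) (x t : ℝ) : ℝ :=
  t ^ (-(gam n)) * η (|x| / t ^ alph n) + t ^ (-(eps n)) * mu3 n μ (|x| / Real.sqrt t)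
    + t ^ (-(3 * gam n)) * phi2 n h (|x| / t ^ alph n)

namespace PhiAux

open Filter Topology Set

lemma max_pr {a b : ℝ} {w w1 w2 : ℝ → ℝ} (hc : ContinuousOn w (Icc a b))
    (hd : ∀ z ∈ Ioo a b, HasDerivAt w (w1 z) z ∧ HasDerivAt w1 (w2 z) z)
    (ha : w a ≤ 0) (hb : w b ≤ 0)
    (hp : ∀ z ∈ Ioo a b, 0 < w z → w1 z = 0 → 0 < w2 z) : ∀ z ∈ Icc a b, w z ≤ 0 := by
  intro z hz
  by_contra hcon
  push Not at hcon
  obtain ⟨x, hx, hmax⟩ := isCompact_Icc.exists_isMaxOn ⟨z, hz⟩ hc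
  have hxp : 0 < w x := lt_of_lt_of_le hcon (hmax hz)
  have hxa : x ≠ a := by rintro rfl; linarith
  have hxb : x ≠ b := by rintro rfl; linarith
  have hxI : x ∈ Ioo a b := ⟨lt_of_le_of_ne hx.1 (Ne.symm hxa), lt_of_le_of_ne hx.2 hxb⟩
  have hloc : IsLocalMax w x := hmax.isLocalMax (Icc_mem_nhds hxI.1 hxI.2)
  have h1 : w1 x = 0 := hloc.hasDerivAt_eq_zero (hd x hxI).1
  have h2 := hp x hxI hxp h1
  have hnh : Ioo a b ∈ 𝓝 x := Ioo_mem_nhds hxI.1 hxI.2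
  have heq : deriv w =ᶠ[𝓝 x] w1 := by
    filter_upwards [hnh] with y hy using (hd y hy).1.deriv
  have hdd : deriv (deriv w) x = w2 x := by
    rw [heq.deriv_eq]; exact (hd x hxI).2.deriv
  have hmin : IsLocalMin w x := isLocalMin_of_deriv_deriv_pos (by rw [hdd]; exact h2)
    (by rw [(hd x hxI).1.deriv, h1]) (hd x hxI).1.continuousAt
  have hconst : w =ᶠ[𝓝 x] fun _ => w x := by
    filter_upwards [hloc, hmin] with y h3 h4 using le_antisymm h3 h4
  have h5 : deriv w =ᶠ[𝓝 x] deriv (fun _ => w x) := hconst.deriv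
  have h6 : deriv (deriv w) x = 0 := by
    rw [h5.deriv_eq]; simp
  linarith

lemma hasDerivAt_pw {z : ℝ} (hz : 0 < z) (q : ℝ) :
    HasDerivAt (fun z : ℝ => z ^ q) (q * z ^ (q - 1)) z :=
  Real.hasDerivAt_rpow_const (Or.inl hz.ne')

lemma hasDerivAt_pw2 {z : ℝ} (hz : 0 < z) (q : ℝ) :
    HasDerivAt (fun z : ℝ => q * z ^ (q - 1)) (q * (q - 1) * z ^ (q - 2)) z := by
  have := (hasDerivAt_pw hz (q - 1)).const_mul q
  rw [show q - 1 - 1 = q - 2 by ring, ← mul_assoc] at this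
  exact this

lemma sq_pw {z : ℝ} (hz : 0 < z) (q : ℝ) : z ^ 2 * z ^ (q - 2) = z ^ q := by
  rw [← Real.rpow_natCast, ← Real.rpow_add hz]; congr 1; push_cast; ring

lemma LC {e e1 e2 : ℝ → ℝ} {A C p : ℝ} (hp : 0 < p) (hA : p * (p + 1) < A)
    (hd : ∀ᶠ z in atTop, HasDerivAt e (e1 z) z ∧ HasDerivAt e1 (e2 z) z)
    (ht : Tendsto e atTop (𝓝 0))
    (hc : ∀ᶠ z in atTop, 0 < e z → A * e z - C * z ^ (-p) ≤ z ^ 2 * e2 z) :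
    ∃ K, 0 ≤ K ∧ ∀ᶠ z in atTop, e z ≤ K * z ^ (-p) := by
  obtain ⟨Z, hZ⟩ := eventually_atTop.1 ((hd.and hc).and (eventually_gt_atTop (0:ℝ)))
  have hZ0 : 0 < Z := (hZ Z le_rfl).2
  set K := max (max (e Z * Z ^ p) (C / (A - p * (p + 1)))) 0 + 1 with hK
  have hK0 : 0 < K := by positivity
  have hA' : 0 < A - p * (p + 1) := by linarith
  have hK1 : e Z ≤ K * Z ^ (-p) := by
    have : e Z * Z ^ p ≤ K := by
      have := (le_max_left (e Z * Z ^ p) (C / (A - p * (p + 1)))).trans (le_max_left _ 0)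
      linarith
    rw [Real.rpow_neg hZ0.le, ← div_eq_mul_inv, le_div_iff₀ (by positivity)]
    exact this
  have hK2 : C < K * (A - p * (p + 1)) := by
    have : C / (A - p * (p + 1)) < K := by
      have := (le_max_right (e Z * Z ^ p) (C / (A - p * (p + 1)))).trans (le_max_left _ 0)
      linarith
    rwa [div_lt_iff₀ hA'] at this
  refine ⟨K, hK0.le, eventually_atTop.2 ⟨Z, fun z hz => ?_⟩⟩
  refine le_of_forall_pos_le_add fun m hm => ?_
  obtain ⟨b, hb⟩ := ((ht.eventually_lt_const hm).and (eventually_ge_atTop z)).exists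
  have hder : ∀ x, Z ≤ x → HasDerivAt (fun x => e x - K * x ^ (-p) - m)
      (e1 x - K * (-p * x ^ (-p - 1))) x ∧
      HasDerivAt (fun x => e1 x - K * (-p * x ^ (-p - 1)))
      (e2 x - K * (-p * (-p - 1) * x ^ (-p - 2))) x := by
    intro x hx
    have h1 := hZ x hx
    exact ⟨((h1.1.1.1).sub ((hasDerivAt_pw h1.2 (-p)).const_mul K)).sub_const m,
      (h1.1.1.2).sub ((hasDerivAt_pw2 h1.2 (-p)).const_mul K)⟩
  have := max_pr (a := Z) (b := b) (w := fun x => e x - K * x ^ (-p) - m)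
    (fun x hx => (hder x hx.1).1.continuousAt.continuousWithinAt)
    (fun x hx => hder x hx.1.le) (by linarith)
    (by
      have hb0 : 0 < b := by linarith [hb.2]
      have : 0 < b ^ (-p) := Real.rpow_pos_of_pos hb0 _
      nlinarith [hb.1])
    (fun x hx hw _ => by
      have h1 := hZ x hx.1.le
      have hxp := h1.2
      have hpw : 0 < x ^ (-p) := Real.rpow_pos_of_pos hxp _
      have hKp : 0 < K * x ^ (-p) := by positivity
      have hex : K * x ^ (-p) < e x := by linarith
      have h2 := h1.1.2 (by linarith)
      have hs := sq_pw hxp (-p)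
      have hA0 : 0 < A := by nlinarith
      have h3 : A * (K * x ^ (-p)) < A * e x := by nlinarith
      have h4 : C * x ^ (-p) < K * (A - p * (p + 1)) * x ^ (-p) := by nlinarith
      have h5 : 0 < x ^ 2 * (e2 x - K * (-p * (-p - 1) * x ^ (-p - 2))) := by
        have : x ^ 2 * (e2 x - K * (-p * (-p - 1) * x ^ (-p - 2)))
          = x ^ 2 * e2 x - K * (p * (p + 1)) * (x ^ 2 * x ^ (-p - 2)) := by ring
        rw [this, hs]
        nlinarith
      exact (pos_iff_pos_of_mul_pos h5).1 (by positivity))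
    z ⟨hz, hb.2⟩
  linarith

lemma LC0 {w w1 w2 : ℝ → ℝ} {A C d : ℝ} (hd0 : 0 < d) (hA : d * (d + 1) < A)
    (hd : ∀ y, 0 < y → HasDerivAt w (w1 y) y ∧ HasDerivAt w1 (w2 y) y)
    (ht : Tendsto (fun y : ℝ => y ^ d * w y) (𝓝[>] 0) (𝓝 0))
    (hc : ∀ᶠ y in 𝓝[>] (0:ℝ), 0 < w y → w1 y ≤ 0 → A * w y - C ≤ y ^ 2 * w2 y) :
    ∃ K, ∀ᶠ y in 𝓝[>] (0:ℝ), w y ≤ K := by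
  obtain ⟨Y, hY0, hY⟩ := mem_nhdsGT_iff_exists_Ioo_subset.1 hc
  have hY0 : 0 < Y := hY0
  set Y' := Y / 2 with hY'
  have hY'0 : 0 < Y' := by positivity
  set K := max (max (w Y') (C / A)) 0 + 1 with hK
  have hK0 : 0 < K := by positivity
  have hA0 : 0 < A := by nlinarith
  have hK1 : w Y' ≤ K := by
    have := (le_max_left (w Y') (C / A)).trans (le_max_left _ 0)
    linarith
  have hK2 : C < K * A := by
    have : C / A < K := by
      have := (le_max_right (w Y') (C / A)).trans (le_max_left _ 0)
      linarith
    rwa [div_lt_iff₀ hA0] at this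
  refine ⟨K, ?_⟩
  have hmem : Ioo 0 Y' ∈ 𝓝[>] (0:ℝ) := Ioo_mem_nhdsGT hY'0
  filter_upwards [hmem] with z hz
  have hzd : 0 < z ^ (-d) := Real.rpow_pos_of_pos hz.1 _
  -- for every θ > 0
  have key : ∀ θ > 0, w z ≤ K + θ * z ^ (-d) := by
    intro θ hθ
    have hmem2 : Ioo 0 z ∈ 𝓝[>] (0:ℝ) := Ioo_mem_nhdsGT hz.1
    obtain ⟨a, ha1, ha2⟩ := ((ht.eventually_lt_const hθ).and hmem2).exists
    have ha0 : 0 < a := ha2.1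
    have hder : ∀ x, 0 < x → HasDerivAt (fun x => w x - K - θ * x ^ (-d))
      (w1 x - θ * (-d * x ^ (-d - 1))) x ∧
      HasDerivAt (fun x => w1 x - θ * (-d * x ^ (-d - 1)))
      (w2 x - θ * (-d * (-d - 1) * x ^ (-d - 2))) x := by
      intro x hx
      have h1 := hd x hx
      exact ⟨((h1.1).sub_const K).sub ((hasDerivAt_pw hx (-d)).const_mul θ),
        (h1.2).sub ((hasDerivAt_pw2 hx (-d)).const_mul θ)⟩
    have := max_pr (a := a) (b := Y') (w := fun x => w x - K - θ * x ^ (-d))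
      (fun x hx => (hder x (by linarith [hx.1])).1.continuousAt.continuousWithinAt)
      (fun x hx => hder x (by linarith [hx.1]))
      (by
        have h1 : a ^ d * a ^ (-d) = 1 := by rw [← Real.rpow_add ha0]; simp
        have h2 : 0 < a ^ (-d) := Real.rpow_pos_of_pos ha0 _
        have h3 : w a = (a ^ d * w a) * a ^ (-d) := by
          rw [mul_right_comm, h1, one_mul]
        have : w a ≤ θ * a ^ (-d) := by
          rw [h3]; exact mul_le_mul_of_nonneg_right ha1.le h2.le
        linarith)
      (by
        have : 0 < Y' ^ (-d) := Real.rpow_pos_of_pos hY'0 _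
        nlinarith)
      (fun x hx hw hw1 => by
        have hxp : 0 < x := by linarith [hx.1]
        have hpw : 0 < x ^ (-d) := Real.rpow_pos_of_pos hxp _
        have hpw1 : 0 < x ^ (-d - 1) := Real.rpow_pos_of_pos hxp _
        have hKp : 0 < θ * x ^ (-d) := by positivity
        have hex : K + θ * x ^ (-d) < w x := by linarith
        have hw1' : w1 x ≤ 0 := by
          have : 0 < θ * (d * x ^ (-d - 1)) := by positivity
          linarith
        have h2 := hY (show x ∈ Ioo 0 Y from ⟨hxp, by linarith [hx.2]⟩) (by linarith) hw1'
        have hs := sq_pw hxp (-d)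
        have h3 : A * (K + θ * x ^ (-d)) < A * w x := by nlinarith
        have h4 : d * (d + 1) * (θ * x ^ (-d)) < A * (θ * x ^ (-d)) := by nlinarith
        have h5 : 0 < x ^ 2 * (w2 x - θ * (-d * (-d - 1) * x ^ (-d - 2))) := by
          have : x ^ 2 * (w2 x - θ * (-d * (-d - 1) * x ^ (-d - 2)))
            = x ^ 2 * w2 x - θ * (d * (d + 1)) * (x ^ 2 * x ^ (-d - 2)) := by ring
          rw [this, hs]
          nlinarith
        exact (pos_iff_pos_of_mul_pos h5).1 (by positivity))
      z ⟨ha2.2.le, hz.2.le⟩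
    linarith
  refine le_of_forall_pos_le_add fun m hm => ?_
  have := key (m / z ^ (-d)) (by positivity)
  rwa [div_mul_cancel₀ _ hzd.ne'] at this

lemma dd_Ici {f : ℝ → ℝ} (hf : ContDiffOn ℝ 2 f (Ici 0)) {z : ℝ} (hz : 0 < z) :
    HasDerivAt f (derivWithin f (Ici 0) z) z ∧
    HasDerivAt (derivWithin f (Ici 0)) (derivWithin (derivWithin f (Ici 0)) (Ici 0) z) z := by
  have hn : Ici (0:ℝ) ∈ 𝓝 z := Ici_mem_nhds hz
  have h1 : DifferentiableOn ℝ f (Ici 0) := hf.differentiableOn (by norm_num)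
  have h2 : ContDiffOn ℝ 1 (derivWithin f (Ici 0)) (Ici 0) :=
    hf.derivWithin (uniqueDiffOn_Ici 0) (by norm_num)
  have h3 := h2.differentiableOn (by norm_num)
  exact ⟨(h1 z hz.le).hasDerivWithinAt.hasDerivAt hn, (h3 z hz.le).hasDerivWithinAt.hasDerivAt hn⟩

lemma dd_Ioi {f : ℝ → ℝ} (hf : ContDiffOn ℝ 2 f (Ioi 0)) {z : ℝ} (hz : 0 < z) :
    HasDerivAt f (deriv f z) z ∧ HasDerivAt (deriv f) (deriv (deriv f) z) z := by
  have hn : Ioi (0:ℝ) ∈ 𝓝 z := Ioi_mem_nhds hz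
  have h1 : DifferentiableOn ℝ f (Ioi 0) := hf.differentiableOn (by norm_num)
  have h2 : ContDiffOn ℝ 1 (deriv f) (Ioi 0) :=
    hf.deriv_of_isOpen isOpen_Ioi (by norm_num)
  have h3 := h2.differentiableOn (by norm_num)
  exact ⟨((h1 z hz).differentiableAt hn).hasDerivAt, ((h3 z hz).differentiableAt hn).hasDerivAt⟩

lemma kap_pos : 0 < kap := by unfold kap; positivity

lemma cast_n {n : ℕ} (hn : 4 ≤ n) : (4:ℝ) ≤ n := by exact_mod_cast hn

lemma del_mul {n : ℕ} (hn : 4 ≤ n) : ((n:ℝ) - 1) * del n = n + 2 := by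
  have := cast_n hn
  unfold del
  have : (n:ℝ) - 1 ≠ 0 := by linarith
  field_simp

lemma del_gt_one {n : ℕ} (hn : 4 ≤ n) : 1 < del n := by
  have := cast_n hn
  have := del_mul hn
  nlinarith

lemma del_le_two {n : ℕ} (hn : 4 ≤ n) : del n ≤ 2 := by
  have := cast_n hn
  have := del_mul hn
  nlinarith

lemma lam_pos {n : ℕ} (hn : 4 ≤ n) : 0 < lam n := by
  have := del_gt_one hn
  have := kap_pos
  unfold lam
  positivity

lemma lam_pow {n : ℕ} (hn : 4 ≤ n) : lam n ^ (n - 1) * (2 * kap) ^ n = del n * (del n + 1) := by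
  have h1 := del_gt_one hn
  have h2 := kap_pos
  have h3 := cast_n hn
  have hc : ((n - 1 : ℕ) : ℝ) = (n:ℝ) - 1 := by
    rw [Nat.cast_sub (by omega)]; simp
  unfold lam
  rw [← Real.rpow_natCast, ← Real.rpow_mul (by positivity), hc,
    one_div_mul_cancel (by linarith), Real.rpow_one, div_mul_cancel₀]
  positivity

lemma pow_id {n : ℕ} (hn : 4 ≤ n) {z : ℝ} (hz : 0 < z) :
    z ^ 2 * (2 * kap * z * (lam n * z ^ (-del n))) ^ n
      = del n * (del n + 1) * (lam n * z ^ (-del n)) := by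
  have h1 : lam n ^ n = lam n ^ (n - 1) * lam n := by
    rw [← pow_succ]; congr 1; omega
  have h2 : z ^ 2 * z ^ n * (z ^ (-del n)) ^ n = z ^ (-del n) := by
    rw [← Real.rpow_natCast, ← Real.rpow_natCast, ← Real.rpow_natCast (z ^ (-del n)),
      ← Real.rpow_mul hz.le, ← Real.rpow_add hz, ← Real.rpow_add hz]
    congr 1
    have := del_mul hn
    push_cast
    linarith
  calc z ^ 2 * (2 * kap * z * (lam n * z ^ (-del n))) ^ n
      = (2 * kap) ^ n * lam n ^ n * (z ^ 2 * z ^ n * (z ^ (-del n)) ^ n) := by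
        rw [mul_pow, mul_pow, mul_pow (lam n)]; ring
    _ = (lam n ^ (n - 1) * (2 * kap) ^ n) * (lam n * z ^ (-del n)) := by
        rw [h2, h1]; ring
    _ = _ := by rw [lam_pow hn]

lemma pow_sub_le {n : ℕ} (hn : 4 ≤ n) {v : ℝ} (h0 : 0 ≤ v) (h1 : v ≤ 1 / (2 * (n:ℝ) ^ 2)) :
    (1 - v) ^ n ≤ 1 - ((n:ℝ) - 1 / 2) * v := by
  have hn' := cast_n hn
  have hv1 : v * (2 * (n:ℝ) ^ 2) ≤ 1 := by rwa [le_div_iff₀ (by positivity)] at h1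
  have hv2 : v ≤ 1 := by nlinarith
  have hb : 1 + (n:ℝ) * v ≤ (1 + v) ^ n := one_add_mul_le_pow (by linarith) n
  have hm : (1 - v) ^ n * (1 + v) ^ n ≤ 1 := by
    rw [← mul_pow]
    exact pow_le_one₀ (by nlinarith) (by nlinarith)
  have hp : 0 ≤ (1 - v) ^ n := pow_nonneg (by linarith) n
  have h3 : (1 - v) ^ n * (1 + n * v) ≤ 1 := (mul_le_mul_of_nonneg_left hb hp).trans hm
  have hpos : 0 < 1 + (n:ℝ) * v := by positivity
  have h4 : 1 ≤ (1 - ((n:ℝ) - 1 / 2) * v) * (1 + n * v) := by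
    have : 0 ≤ v * (1 - v * (2 * (n:ℝ) ^ 2)) := mul_nonneg h0 (by linarith)
    nlinarith [mul_nonneg h0 h0]
  exact le_of_mul_le_mul_right (h3.trans h4) hpos

lemma mu1_le {y : ℝ} (hy : 0 ≤ y) : mu1 y ≤ kap * y := by
  have hc : Continuous fun σ : ℝ => Real.exp (-σ ^ 2) := by fun_prop
  have h : ∫ σ in (0:ℝ)..(y / 2), Real.exp (-σ ^ 2) ≤ ∫ σ in (0:ℝ)..(y / 2), (1:ℝ) := by
    apply intervalIntegral.integral_mono_on (by positivity) (hc.intervalIntegrable _ _)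
      (by simp)
    intro x _
    apply Real.exp_le_one_iff.2
    nlinarith [sq_nonneg x]
  simp only [intervalIntegral.integral_const, smul_eq_mul, mul_one, sub_zero] at h
  unfold mu1 kap
  calc _ ≤ 2 / √Real.pi * (y / 2) := by gcongr
    _ = _ := by ring

lemma mu1_ge {y : ℝ} (hy : 0 ≤ y) : kap * y * (1 - y ^ 2 / 12) ≤ mu1 y := by
  have hc : Continuous fun σ : ℝ => Real.exp (-σ ^ 2) := by fun_prop
  have h : ∫ σ in (0:ℝ)..(y / 2), (1 - σ ^ 2) ≤ ∫ σ in (0:ℝ)..(y / 2), Real.exp (-σ ^ 2) := by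
    apply intervalIntegral.integral_mono_on (by positivity)
      ((by fun_prop : Continuous fun σ : ℝ => 1 - σ ^ 2).intervalIntegrable _ _)
      (hc.intervalIntegrable _ _)
    intro x _
    have := Real.add_one_le_exp (-x ^ 2)
    linarith
  rw [intervalIntegral.integral_sub (by simp)
    ((by fun_prop : Continuous fun σ : ℝ => σ ^ 2).intervalIntegrable _ _), integral_pow] at h
  simp only [intervalIntegral.integral_const, smul_eq_mul, mul_one, sub_zero] at h
  unfold mu1 kap
  calc _ = 2 / √Real.pi * (y / 2 - y ^ 3 / 24) := by ring
    _ ≤ _ := by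
      gcongr
      refine le_trans (le_of_eq ?_) h
      push_cast; ring

lemma mu1_nonneg {y : ℝ} (hy : 0 ≤ y) : 0 ≤ mu1 y := by
  unfold mu1
  apply mul_nonneg (by positivity)
  exact intervalIntegral.integral_nonneg (by positivity) (fun x _ => (Real.exp_pos _).le)


lemma p_cond {n : ℕ} (hn : 4 ≤ n) :
    (del n + 2) * (del n + 2 + 1) < ((n:ℝ) - 1 / 2) * (del n * (del n + 1)) := by
  have h1 := del_gt_one hn
  have h2 := del_le_two hn
  have h3 := del_mul hn
  have h4 := cast_n hn
  have : ((n:ℝ) - 1 / 2) * (del n * (del n + 1))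
    = (((n:ℝ) - 1) * del n) * (del n + 1) + del n * (del n + 1) / 2 := by ring
  rw [this, h3]
  nlinarith

lemma dd_P (n : ℕ) {z : ℝ} (hz : 0 < z) :
    HasDerivAt (fun z : ℝ => lam n * z ^ (-del n)) (lam n * (-del n * z ^ (-del n - 1))) z ∧
    HasDerivAt (fun z : ℝ => lam n * (-del n * z ^ (-del n - 1)))
      (lam n * (-del n * (-del n - 1) * z ^ (-del n - 2))) z :=
  ⟨(hasDerivAt_pw hz _).const_mul _, (hasDerivAt_pw2 hz _).const_mul _⟩

lemma sq_P2 (n : ℕ) {z : ℝ} (hz : 0 < z) :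
    z ^ 2 * (lam n * (-del n * (-del n - 1) * z ^ (-del n - 2)))
      = del n * (del n + 1) * (lam n * z ^ (-del n)) := by
  rw [← sq_pw hz (-del n)]; ring

lemma tendsto_P {n : ℕ} (hn : 4 ≤ n) :
    Tendsto (fun z : ℝ => lam n * z ^ (-del n)) atTop (𝓝 0) := by
  have := (tendsto_rpow_neg_atTop (y := del n) (by linarith [del_gt_one hn])).const_mul (lam n)
  simpa using this

lemma eta_upper {n : ℕ} (hn : 4 ≤ n) {η : ℝ → ℝ} (hη : IsReactiveProfile n η) :
    ∃ K, 0 ≤ K ∧ ∀ᶠ z in atTop, η z - lam n * z ^ (-del n) ≤ K * z ^ (-(del n + 2)) := by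
  obtain ⟨hs, hpos, hode, -, hlim⟩ := hη
  have h1 := del_gt_one hn
  have h4 := cast_n hn
  refine LC (e := fun z => η z - lam n * z ^ (-del n)) (C := 0)
    (A := n * (del n * (del n + 1)))
    (e1 := fun z => derivWithin η (Ici 0) z - lam n * (-del n * z ^ (-del n - 1)))
    (e2 := fun z => derivWithin (derivWithin η (Ici 0)) (Ici 0) z
      - (lam n * (-del n * (-del n - 1) * z ^ (-del n - 2)))) (by linarith) ?_ ?_ ?_ ?_
  · have := p_cond hn
    nlinarith
  · filter_upwards [eventually_gt_atTop 0] with z hz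
    exact ⟨(dd_Ici hs hz).1.sub (dd_P n hz).1, (dd_Ici hs hz).2.sub (dd_P n hz).2⟩
  · simpa using hlim.sub (tendsto_P hn)
  · filter_upwards [eventually_gt_atTop 0] with z hz he
    rw [mul_sub (z ^ 2), sq_P2 n hz, hode z hz.le]
    have hid := pow_id hn hz
    set P := lam n * z ^ (-del n) with hP
    have hP0 : 0 < P := mul_pos (lam_pos hn) (Real.rpow_pos_of_pos hz _)
    have hk := kap_pos
    have hη0 := hpos z hz.le
    have hv : 0 < (η z - P) / P := div_pos he hP0
    have e1 : η z = P * (1 + (η z - P) / P) := by field_simp; ring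
    have e2 : (2 * kap * z * P) ^ n * (1 + n * ((η z - P) / P))
        ≤ (2 * kap * z * η z + η z ^ 2) ^ n := by
      calc (2 * kap * z * P) ^ n * (1 + n * ((η z - P) / P))
          ≤ (2 * kap * z * P) ^ n * (1 + ((η z - P) / P)) ^ n := by
            gcongr
            exact one_add_mul_le_pow (by linarith) n
        _ = (2 * kap * z * η z) ^ n := by
            rw [← mul_pow, mul_assoc (2 * kap * z), ← e1]
        _ ≤ _ := by
            gcongr
            nlinarith [sq_nonneg (η z)]
    have e3 := mul_le_mul_of_nonneg_left e2 (sq_nonneg z)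
    rw [← mul_assoc, hid] at e3
    have e4 : del n * (del n + 1) * P * (1 + n * ((η z - P) / P))
      = del n * (del n + 1) * P + n * (del n * (del n + 1)) * (η z - P) := by
      field_simp
    linarith

/-- First lower bound. -/
lemma eta_lower1 {n : ℕ} (hn : 4 ≤ n) {η : ℝ → ℝ} (hη : IsReactiveProfile n η) :
    ∃ b, 0 < b ∧ ∀ z, 1 ≤ z → lam n * (z + b) ^ (-del n) ≤ η z := by
  obtain ⟨hs, hpos, hode, -, hlim⟩ := hη
  have h1 := del_gt_one hn
  have h4 := cast_n hn
  have hk := kap_pos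
  have hl := lam_pos hn
  have hcont : ContinuousOn η (Ici 0) := hs.continuousOn
  -- bound on η
  obtain ⟨C, hC⟩ : ∃ C, ∀ z, 1 ≤ z → η z ≤ C := by
    obtain ⟨M, hM⟩ := eventually_atTop.1 (hlim.eventually_lt_const (zero_lt_one))
    obtain ⟨C, hC⟩ := (isCompact_Icc (a := (1:ℝ)) (b := M)).bddAbove_image
      (hcont.mono (fun x hx => by simp at hx ⊢; linarith))
    refine ⟨max C 1, fun z hz => ?_⟩
    rcases le_total z M with h | h
    · exact (hC ⟨z, ⟨hz, h⟩, rfl⟩).trans (le_max_left _ _)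
    · exact (hM z h).le.trans (le_max_right _ _)
  have hη1 : 0 < η 1 := hpos 1 (by simp)
  obtain ⟨b, ⟨hb1, hb2⟩, hb3⟩ := ((((tendsto_P hn).eventually_lt_const hη1).and
    (eventually_gt_atTop 0)).and (eventually_ge_atTop (C / (2 * kap)))).exists
  have hCb : C ≤ 2 * kap * b := by rwa [div_le_iff₀' (by positivity)] at hb3
  refine ⟨b, hb2, fun z hz => ?_⟩
  refine le_of_forall_pos_le_add fun m hm => ?_
  have htb : Tendsto (fun z : ℝ => lam n * (z + b) ^ (-del n)) atTop (𝓝 0) :=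
    (tendsto_P hn).comp (tendsto_atTop_add_const_right _ b tendsto_id)
  obtain ⟨B, hB1, hB2⟩ := ((htb.eventually_lt_const hm).and (eventually_ge_atTop z)).exists
  have hder : ∀ x, 1 ≤ x → HasDerivAt (fun x => lam n * (x + b) ^ (-del n) - η x - m)
      (lam n * (-del n * (x + b) ^ (-del n - 1)) - derivWithin η (Ici 0) x) x ∧
      HasDerivAt (fun x => lam n * (-del n * (x + b) ^ (-del n - 1)) - derivWithin η (Ici 0) x)
      (lam n * (-del n * (-del n - 1) * (x + b) ^ (-del n - 2))
        - derivWithin (derivWithin η (Ici 0)) (Ici 0) x) x := by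
    intro x hx
    have hx0 : 0 < x := by linarith
    have hp := dd_P n (show 0 < x + b by linarith)
    have hd := dd_Ici hs hx0
    exact ⟨((hp.1.comp_add_const x b).sub hd.1).sub_const m, (hp.2.comp_add_const x b).sub hd.2⟩
  have := max_pr (a := 1) (b := B) (w := fun x => lam n * (x + b) ^ (-del n) - η x - m)
    (fun x hx => (hder x hx.1).1.continuousAt.continuousWithinAt)
    (fun x hx => hder x hx.1.le)
    (by
      have : (1 + b) ^ (-del n) ≤ b ^ (-del n) :=
        Real.rpow_le_rpow_of_nonpos hb2 (by linarith) (by linarith)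
      have := mul_le_mul_of_nonneg_left this hl.le
      linarith)
    (by
      have := hpos B (by simp; linarith)
      linarith)
    (fun x hx hw _ => by
      have hx0 : 0 < x := by linarith [hx.1]
      have hxb : 0 < x + b := by linarith
      rw [hode x hx0.le]
      have hid := pow_id hn hxb
      rw [← sq_P2 n hxb] at hid
      have hid' := mul_left_cancel₀ (by positivity) hid
      rw [← hid', sub_pos]
      have hη0 := hpos x hx0.le
      have hηC := hC x hx.1.le
      have hlt : η x < lam n * (x + b) ^ (-del n) := by linarith
      apply pow_lt_pow_left₀ _ (by positivity) (by omega)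
      have : 2 * kap * x * η x + η x ^ 2 ≤ 2 * kap * (x + b) * η x := by nlinarith
      refine this.trans_lt ?_
      gcongr)
    z ⟨hz, hB2⟩
  linarith

/-- eventually the relative deficit is small -/
lemma eta_lower2 {n : ℕ} (hn : 4 ≤ n) {η : ℝ → ℝ} (hη : IsReactiveProfile n η) {v : ℝ}
    (hv : 0 < v) : ∀ᶠ z in atTop, (1 - v) * (lam n * z ^ (-del n)) ≤ η z := by
  obtain ⟨b, hb, hbz⟩ := eta_lower1 hn hη
  have hl := lam_pos hn
  have ht : Tendsto (fun z : ℝ => (1 + b / z) ^ (-del n)) atTop (𝓝 1) := by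
    have h0 : Tendsto (fun z : ℝ => 1 + b / z) atTop (𝓝 (1 + 0)) :=
      tendsto_const_nhds.add (tendsto_const_nhds.div_atTop tendsto_id)
    have := h0.rpow_const (p := -del n) (Or.inl (by norm_num))
    simpa using this
  filter_upwards [eventually_ge_atTop 1, ht.eventually_const_lt (show 1 - v < 1 by linarith)]
    with z hz h1
  refine le_trans ?_ (hbz z hz)
  have hz0 : 0 < z := by linarith
  have : z + b = z * (1 + b / z) := by field_simp
  rw [this, Real.mul_rpow hz0.le (by positivity)]
  have hp : 0 < z ^ (-del n) := Real.rpow_pos_of_pos hz0 _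
  calc (1 - v) * (lam n * z ^ (-del n)) ≤ (1 + b / z) ^ (-del n) * (lam n * z ^ (-del n)) := by
        gcongr
    _ = _ := by ring

lemma pow_lip {R q : ℝ} (hR : 0 ≤ R) (hq : |q| ≤ R) (m : ℕ) :
    |(1 + q) ^ m - 1| ≤ m * (1 + R) ^ m * |q| := by
  induction m with
  | zero => simp
  | succ k ih =>
    have h1 : |1 + q| ≤ 1 + R := (abs_add_le _ _).trans (by simpa using hq)
    have e : (1 + q) ^ (k + 1) - 1 = (1 + q) * ((1 + q) ^ k - 1) + q := by ring
    rw [e]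
    refine (abs_add_le _ _).trans ?_
    rw [abs_mul]
    have h2 : |1 + q| * |(1 + q) ^ k - 1| ≤ (1 + R) * (k * (1 + R) ^ k * |q|) := by
      gcongr
    have h3 : 1 ≤ (1 + R) ^ (k + 1) := one_le_pow₀ (by linarith)
    have h4 : 1 * |q| ≤ (1 + R) ^ (k + 1) * |q| := by gcongr
    push_cast
    calc _ ≤ (1 + R) * (k * (1 + R) ^ k * |q|) + (1 + R) ^ (k + 1) * |q| := by linarith
      _ = _ := by ring

lemma eta_lower {n : ℕ} (hn : 4 ≤ n) {η : ℝ → ℝ} (hη : IsReactiveProfile n η) :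
    ∃ K, 0 ≤ K ∧ ∀ᶠ z in atTop, lam n * z ^ (-del n) - η z ≤ K * z ^ (-(del n + 2)) := by
  have hlow := eta_lower2 hn hη (v := 1 / (2 * (n:ℝ) ^ 2)) (by have := cast_n hn; positivity)
  obtain ⟨hs, hpos, hode, -, hlim⟩ := hη
  have h1 := del_gt_one hn
  have h4 := cast_n hn
  have hk := kap_pos
  have hl := lam_pos hn
  set R := lam n / (2 * kap) with hR
  have hR0 : 0 < R := by positivity
  refine LC (e := fun z => lam n * z ^ (-del n) - η z)
    (C := del n * (del n + 1) * lam n * (n * (1 + R) ^ n * R))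
    (A := (n - 1 / 2) * (del n * (del n + 1)))
    (e1 := fun z => lam n * (-del n * z ^ (-del n - 1)) - derivWithin η (Ici 0) z)
    (e2 := fun z => (lam n * (-del n * (-del n - 1) * z ^ (-del n - 2)))
      - derivWithin (derivWithin η (Ici 0)) (Ici 0) z) (by linarith) (p_cond hn) ?_ ?_ ?_
  · filter_upwards [eventually_gt_atTop 0] with z hz
    exact ⟨(dd_P n hz).1.sub (dd_Ici hs hz).1, (dd_P n hz).2.sub (dd_Ici hs hz).2⟩
  · simpa using (tendsto_P hn).sub hlim
  · filter_upwards [eventually_ge_atTop 1, hlow] with z hz1 hlo he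
    have hz : 0 < z := by linarith
    rw [mul_sub (z ^ 2), sq_P2 n hz, hode z hz.le]
    have hid := pow_id hn hz
    have hzz : z ^ (-(del n + 2)) = z ^ (-del n) * (z ^ 2)⁻¹ := by
      rw [neg_add, Real.rpow_add hz, Real.rpow_neg hz.le 2]; norm_num
    have hzd : z ^ (-del n) ≤ z⁻¹ := by
      rw [← Real.rpow_neg_one]
      exact Real.rpow_le_rpow_of_exponent_le hz1 (by linarith)
    have hPl : lam n * z ^ (-(del n + 2)) = lam n * z ^ (-del n) * (z ^ 2)⁻¹ := by
      rw [hzz]; ring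
    have hPz : lam n * z ^ (-del n) ≤ lam n * z⁻¹ := by gcongr
    set P := lam n * z ^ (-del n) with hP
    have hP0 : 0 < P := mul_pos hl (Real.rpow_pos_of_pos hz _)
    have hη0 := hpos z hz.le
    set v := (P - η z) / P with hv
    have hv0 : 0 < v := div_pos he hP0
    have e1 : η z = P * (1 - v) := by rw [hv]; field_simp; ring
    have hv1 : v ≤ 1 / (2 * (n:ℝ) ^ 2) := by
      rw [hv, div_le_iff₀ hP0]; linarith
    set r := η z / (2 * kap * z) with hr
    have hr0 : 0 < r := by positivity
    have hrR : r ≤ R * (z ^ 2)⁻¹ := by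
      calc r ≤ (lam n * z⁻¹) / (2 * kap * z) := by rw [hr]; gcongr; linarith
        _ = _ := by rw [hR]; field_simp
    have hz2 : (z ^ 2)⁻¹ ≤ 1 := inv_le_one_of_one_le₀ (one_le_pow₀ hz1)
    have hrR' : r ≤ R := hrR.trans (by nlinarith)
    have e2 : 2 * kap * z * η z + η z ^ 2 = (2 * kap * z * P) * ((1 - v) * (1 + r)) := by
      have : 2 * kap * z * η z + η z ^ 2 = (2 * kap * z * η z) * (1 + r) := by
        rw [hr]; field_simp
      rw [this]; nth_rewrite 1 [e1]; ring
    have e3 := pow_sub_le hn hv0.le hv1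
    have e4 := pow_lip hR0.le (by rwa [abs_of_pos hr0]) n (q := r)
    rw [abs_of_pos hr0] at e4
    have e5 : (1 + r) ^ n ≤ 1 + n * (1 + R) ^ n * R * (z ^ 2)⁻¹ := by
      have := (le_abs_self _).trans e4
      have h' : n * (1 + R) ^ n * r ≤ n * (1 + R) ^ n * (R * (z ^ 2)⁻¹) := by gcongr
      linarith
    have hv11 : v ≤ 1 := hv1.trans (by rw [div_le_one (by positivity)]; nlinarith)
    have hv2 : 0 ≤ (1 - v) ^ n := pow_nonneg (by linarith) n
    have hv3 : (1 - v) ^ n ≤ 1 := pow_le_one₀ (by linarith) (by linarith)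
    set M := (n:ℝ) * (1 + R) ^ n * R with hM
    have hM0 : 0 ≤ M := by positivity
    have e6 : ((1 - v) * (1 + r)) ^ n ≤ 1 - (n - 1 / 2) * v + M * (z ^ 2)⁻¹ := by
      rw [mul_pow]
      have a1 := mul_le_mul_of_nonneg_left e5 hv2
      have a2 : (1 - v) ^ n * (M * (z ^ 2)⁻¹) ≤ 1 * (M * (z ^ 2)⁻¹) := by gcongr
      linarith
    rw [e2, mul_pow, ← mul_assoc (z ^ 2), hid]
    have hD : 0 < del n * (del n + 1) * P := by positivity
    have e7 := mul_le_mul_of_nonneg_left e6 hD.le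
    have e8 : del n * (del n + 1) * P * (1 - (n - 1 / 2) * v + M * (z ^ 2)⁻¹)
      = del n * (del n + 1) * P - (n - 1 / 2) * (del n * (del n + 1)) * (P - η z)
        + del n * (del n + 1) * M * (P * (z ^ 2)⁻¹) := by
      have : P * v = P - η z := by rw [hv]; field_simp
      rw [← this]; ring
    rw [e8, ← hPl] at e7
    linarith


open Asymptotics in
lemma eta_bigO {n : ℕ} (hn : 4 ≤ n) {η : ℝ → ℝ} (hη : IsReactiveProfile n η) :
    (fun z => η z - lam n * z ^ (-del n)) =O[atTop] (fun z : ℝ => z ^ (-(del n + 2))) := by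
  obtain ⟨K, hK0, hK⟩ := eta_upper hn hη
  obtain ⟨L, hL0, hL⟩ := eta_lower hn hη
  refine IsBigO.of_bound (max K L) ?_
  filter_upwards [hK, hL, eventually_gt_atTop 0] with z h1 h2 hz
  have hp : 0 < z ^ (-(del n + 2)) := Real.rpow_pos_of_pos hz _
  rw [Real.norm_eq_abs, Real.norm_eq_abs, abs_of_pos hp, abs_le]
  have h3 : K * z ^ (-(del n + 2)) ≤ max K L * z ^ (-(del n + 2)) := by
    gcongr; exact le_max_left _ _
  have h4 : L * z ^ (-(del n + 2)) ≤ max K L * z ^ (-(del n + 2)) := by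
    gcongr; exact le_max_right _ _
  constructor <;> linarith

lemma deriv_interp {e e1 e2 : ℝ → ℝ} {p K K' : ℝ} (hp : 0 ≤ p) (hK : 0 ≤ K) (hK' : 0 ≤ K')
    (hd : ∀ᶠ z in atTop, HasDerivAt e (e1 z) z ∧ HasDerivAt e1 (e2 z) z)
    (h0 : ∀ᶠ z in atTop, |e z| ≤ K * z ^ (-p))
    (h2 : ∀ᶠ z in atTop, |z ^ 2 * e2 z| ≤ K' * z ^ (-p)) :
    ∀ᶠ z in atTop, |z * e1 z| ≤ (2 * K + K') * z ^ (-p) := by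
  obtain ⟨Z, hZ⟩ := eventually_atTop.1 ((hd.and (h0.and h2)).and (eventually_gt_atTop (0:ℝ)))
  refine eventually_atTop.2 ⟨Z, fun z hz => ?_⟩
  have hz0 : 0 < z := (hZ z hz).2
  have hzp : 0 < z ^ (-p) := Real.rpow_pos_of_pos hz0 _
  have hmono : ∀ x, z ≤ x → x ^ (-p) ≤ z ^ (-p) := fun x hx =>
    Real.rpow_le_rpow_of_nonpos hz0 hx (by linarith)
  obtain ⟨ξ, hξ, hξe⟩ := exists_hasDerivAt_eq_slope e e1 (show z < 2 * z by linarith)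
    (fun x hx => (hZ x (hz.trans hx.1)).1.1.1.continuousAt.continuousWithinAt)
    (fun x hx => (hZ x (hz.trans hx.1.le)).1.1.1)
  obtain ⟨ζ, hζ, hζe⟩ := exists_hasDerivAt_eq_slope e1 e2 hξ.1
    (fun x hx => (hZ x (hz.trans hx.1)).1.1.2.continuousAt.continuousWithinAt)
    (fun x hx => (hZ x (hz.trans hx.1.le)).1.1.2)
  have a1 : z * e1 ξ = e (2 * z) - e z := by
    rw [hξe]; field_simp; ring
  have hξz : 0 < ξ - z := by linarith [hξ.1]
  have a2 : e1 ξ - e1 z = e2 ζ * (ξ - z) := by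
    rw [hζe]; field_simp
  have a3 : z * e1 z = e (2 * z) - e z - z * (ξ - z) * e2 ζ := by
    rw [← a1]; linear_combination (-z) * a2
  have hζ0 : 0 < ζ := by linarith [hζ.1]
  have b1 := (hZ z hz).1.2.1
  have b2 := (hZ (2 * z) (by linarith)).1.2.1
  have b3 := (hZ ζ (by linarith [hζ.1])).1.2.2
  have b2' : |e (2 * z)| ≤ K * z ^ (-p) :=
    b2.trans (mul_le_mul_of_nonneg_left (hmono _ (by linarith)) hK)
  have b3' : |ζ ^ 2 * e2 ζ| ≤ K' * z ^ (-p) :=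
    b3.trans (mul_le_mul_of_nonneg_left (hmono _ hζ.1.le) hK')
  have b4 : |z * (ξ - z) * e2 ζ| ≤ |ζ ^ 2 * e2 ζ| := by
    rw [abs_mul, abs_mul (ζ ^ 2)]
    refine mul_le_mul_of_nonneg_right ?_ (abs_nonneg _)
    rw [abs_of_nonneg (by positivity), abs_of_nonneg (by positivity)]
    nlinarith [hξ.2, hζ.1]
  rw [a3]
  have c1 := abs_sub (e (2 * z) - e z) (z * (ξ - z) * e2 ζ)
  have c2 := abs_sub (e (2 * z)) (e z)
  linarith

open Asymptotics in
lemma pow_bigO {q s : ℝ → ℝ} (hq : q =O[atTop] s) (hs : Tendsto s atTop (𝓝 0)) (m : ℕ) :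
    (fun z => (1 + q z) ^ m - 1) =O[atTop] s := by
  have hq0 : Tendsto q atTop (𝓝 0) := hq.trans_tendsto hs
  refine IsBigO.trans ?_ hq
  refine IsBigO.of_bound (m * (1 + 1) ^ m) ?_
  have : ∀ᶠ z in atTop, |q z| < 1 := by
    have := hq0.abs.eventually_lt_const (show |(0:ℝ)| < 1 by simp)
    exact this
  filter_upwards [this] with z hz
  exact pow_lip zero_le_one hz.le m

lemma lam0_id {n : ℕ} (hn : 4 ≤ n) :
    n * (del n * (del n + 1)) * (lam0 n + (-1 / 12) * lam n) - gam n * lam n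
      + alph n * del n * lam n - lam0 n * ((2 - del n) * (1 - del n)) = 0 := by
  have h4 := cast_n hn
  have hk := kap_pos
  have h1 := del_gt_one hn
  have hden : 0 < ((n : ℝ) - 1) * del n * (del n + 1) + 2 * (2 * del n - 1) := by
    have : 0 < ((n:ℝ) - 1) * del n * (del n + 1) := by
      apply mul_pos (mul_pos _ _) <;> linarith
    linarith
  have hge : gam n * (1 + del n) = eps n := by
    unfold gam eps del
    have : (n:ℝ) - 1 ≠ 0 := by linarith
    field_simp; ring
  have hl0 : lam0 n * (((n : ℝ) - 1) * del n * (del n + 1) + 2 * (2 * del n - 1))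
      = (lam n / 2) * ((n : ℝ) / 6 * del n * (del n + 1) - (del n - 2 * eps n)) := by
    unfold lam0
    rw [div_mul_cancel₀ _ hden.ne']
    unfold kap3
    field_simp
    ring
  rw [← hge] at hl0
  unfold alph
  linear_combination hl0

open Asymptotics in
lemma corr_asym {n : ℕ} (hn : 4 ≤ n) {η h : ℝ → ℝ} (hη : IsReactiveProfile n η)
    (hh : IsCorrector n η h) :
    (fun z => h z - lam0 n * z ^ (2 - del n)) =O[atTop] (fun z : ℝ => z ^ (-del n)) := by
  have hE := eta_bigO hn hη
  obtain ⟨hs, hpos, hode, -, hlim⟩ := hη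
  obtain ⟨hhs, hhode, -, hhlim⟩ := hh
  have h1 := del_gt_one hn
  have h2 := del_le_two hn
  have h4 := cast_n hn
  have hk := kap_pos
  have hl := lam_pos hn
  have hz0 : ∀ᶠ z in atTop, (0:ℝ) < z := eventually_gt_atTop 0
  set s : ℝ → ℝ := fun z => (z ^ 2)⁻¹ with hs_def
  have hs0 : Tendsto s atTop (𝓝 0) := (tendsto_pow_atTop (by norm_num)).inv_tendsto_atTop
  have hs1 : s =O[atTop] (fun _ => (1:ℝ)) := hs0.isBigO_one ℝ
  set P : ℝ → ℝ := fun z => lam n * z ^ (-del n) with hPdef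
  have hP0 : ∀ z, 0 < z → 0 < P z := fun z hz => mul_pos hl (Real.rpow_pos_of_pos hz _)
  have hsp : ∀ z : ℝ, 0 < z → z ^ (-(del n + 2)) = z ^ (-del n) * s z := by
    intro z hz
    rw [neg_add, Real.rpow_add hz, Real.rpow_neg hz.le 2]; norm_num [s]
  have hPO : P =O[atTop] (fun z : ℝ => z ^ (-del n)) := isBigO_const_mul_self _ _ _
  have hPO' : (fun z : ℝ => z ^ (-del n)) =O[atTop] P := isBigO_self_const_mul hl.ne' _ _
  -- relative errors
  set u : ℝ → ℝ := fun z => η z / P z - 1 with hu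
  have hηu : ∀ z, 0 < z → η z = P z * (1 + u z) := fun z hz => by
    have := (hP0 z hz).ne'
    simp only [hu]; field_simp; ring
  have huO : u =O[atTop] s := by
    have a1 : (fun z => (P z)⁻¹ * (η z - P z)) =O[atTop] (fun z => (P z)⁻¹ * (P z * s z)) := by
      refine (isBigO_refl _ _).mul (hE.trans ?_)
      refine ((hPO'.mul (isBigO_refl s _))).congr' ?_ EventuallyEq.rfl
      filter_upwards [hz0] with z hz using (hsp z hz).symm
    refine a1.congr' ?_ ?_
    · filter_upwards [hz0] with z hz
      have := (hP0 z hz).ne'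
      simp only [hu]; field_simp
    · filter_upwards [hz0] with z hz
      have := (hP0 z hz).ne'
      field_simp
  have h1O : (fun _ : ℝ => (1:ℝ)) =O[atTop] (fun _ : ℝ => (1:ℝ)) := isBigO_refl _ _
  have hu1 : (fun z => 1 + u z) =O[atTop] (fun _ => (1:ℝ)) := h1O.add (huO.trans hs1)
  set r : ℝ → ℝ := fun z => η z / (2 * kap * z) with hr
  have hrO : r =O[atTop] s := by
    have a1 : P =O[atTop] (fun z : ℝ => z⁻¹) := by
      refine hPO.trans (IsBigO.of_bound 1 ?_)
      filter_upwards [eventually_ge_atTop 1] with z hz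
      have hz0 : 0 < z := by linarith
      rw [one_mul, Real.norm_of_nonneg (Real.rpow_nonneg hz0.le _),
        Real.norm_of_nonneg (by positivity), ← Real.rpow_neg_one]
      exact Real.rpow_le_rpow_of_exponent_le hz (by linarith)
    have a2 : η =O[atTop] (fun z : ℝ => z⁻¹ * 1) := by
      refine (a1.mul hu1).congr' ?_ EventuallyEq.rfl
      filter_upwards [hz0] with z hz using (hηu z hz).symm
    have a3 := (a2.mul (isBigO_refl (fun z : ℝ => z⁻¹) atTop)).const_mul_left (2 * kap)⁻¹
    refine a3.congr' ?_ ?_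
    · filter_upwards [hz0] with z hz
      simp only [hr]; field_simp
    · filter_upwards [hz0] with z hz
      simp only [hs_def]; field_simp
  set q : ℝ → ℝ := fun z => u z + (1 + u z) * r z with hq
  have hqO : q =O[atTop] s := by
    refine huO.add ?_
    simpa using hu1.mul hrO
  set F : ℝ → ℝ := fun z => (1 + q z) ^ (n - 1) with hF
  have hFO : (fun z => F z - 1) =O[atTop] s := pow_bigO hqO hs0 _
  have hF1 : F =O[atTop] (fun _ => (1:ℝ)) := by
    have := (hFO.trans hs1).add h1O
    simpa using this
  have hNO : (fun z => (1 + q z) ^ n - 1) =O[atTop] s := pow_bigO hqO hs0 _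
  set g : ℝ → ℝ := fun z => F z * (1 + 2 * r z) - 1 with hg
  have hgO : g =O[atTop] s := by
    have hFr : (fun z => F z * (2 * r z)) =O[atTop] s := by
      simpa using hF1.mul (hrO.const_mul_left 2)
    have := hFO.add hFr
    refine this.congr_left fun z => ?_
    simp only [hg]; ring
  have hB : ∀ z, 0 < z → 2 * kap * z * η z + η z ^ 2 = (2 * kap * z * P z) * (1 + q z) := by
    intro z hz
    have e1 : η z = 2 * kap * z * r z := by simp only [hr]; field_simp
    have e2 := hηu z hz
    have : 1 + q z = (1 + u z) * (1 + r z) := by simp only [hq]; ring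
    rw [this]
    calc _ = (2 * kap * z) * (η z) * (1 + r z) := by
          linear_combination η z * e1
      _ = _ := by rw [e2]; ring
  have hid : ∀ z, 0 < z → z ^ 2 * (2 * kap * z * P z) ^ n = del n * (del n + 1) * P z :=
    fun z hz => pow_id hn hz
  have hid' : ∀ z, 0 < z → z ^ 2 * (2 * kap * z * P z) ^ (n - 1) * (2 * kap * z)
      = del n * (del n + 1) := by
    intro z hz
    have a1 := hid z hz
    have a2 : (2 * kap * z * P z) ^ n = (2 * kap * z * P z) ^ (n - 1) * (2 * kap * z * P z) := by
      rw [← pow_succ]; congr 1; omega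
    rw [a2] at a1
    apply mul_right_cancel₀ (hP0 z hz).ne'
    rw [← a1]; ring
  -- derivative of the error
  set η1 := derivWithin η (Ici 0) with hη1
  set e1 : ℝ → ℝ := fun z => η1 z - lam n * (-del n * z ^ (-del n - 1)) with he1
  have he1O : (fun z => z * e1 z) =O[atTop] (fun z : ℝ => z ^ (-(del n + 2))) := by
    obtain ⟨K, hK0, hK⟩ := hE.exists_pos
    have hE2 : (fun z => z ^ 2 * (derivWithin η1 (Ici 0) z
        - (lam n * (-del n * (-del n - 1) * z ^ (-del n - 2))))) =O[atTop]
        (fun z : ℝ => z ^ (-(del n + 2))) := by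
      have := ((hPO.mul hNO).const_mul_left (del n * (del n + 1)))
      refine this.congr' ?_ ?_
      · filter_upwards [hz0] with z hz
        rw [mul_sub (z ^ 2), sq_P2 n hz, hode z hz.le, hB z hz, mul_pow, ← mul_assoc (z ^ 2), hid z hz]
        ring
      · filter_upwards [hz0] with z hz using (hsp z hz).symm
    obtain ⟨K', hK'0, hK'⟩ := hE2.exists_pos
    have hnorm : ∀ z : ℝ, 0 < z → ‖z ^ (-(del n + 2))‖ = z ^ (-(del n + 2)) := fun z hz =>
      Real.norm_of_nonneg (Real.rpow_nonneg hz.le _)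
    refine IsBigO.of_bound (2 * K + K') ?_
    have := deriv_interp (e := fun z => η z - lam n * z ^ (-del n)) (e1 := e1)
      (e2 := fun z => derivWithin η1 (Ici 0) z
        - (lam n * (-del n * (-del n - 1) * z ^ (-del n - 2)))) (p := del n + 2)
      (by linarith) hK0.le hK'0.le
      (by
        filter_upwards [hz0] with z hz
        exact ⟨(dd_Ici hs hz).1.sub (dd_P n hz).1, (dd_Ici hs hz).2.sub (dd_P n hz).2⟩)
      (by
        filter_upwards [hz0, hK.bound] with z hz hb
        rwa [hnorm z hz] at hb)
      (by
        filter_upwards [hz0, hK'.bound] with z hz hb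
        rwa [hnorm z hz] at hb)
    filter_upwards [this, hz0] with z hb hz
    rwa [hnorm z hz]
  -- the remainder
  set X : ℝ → ℝ := fun z => z ^ (2 - del n) with hX
  have hXP : ∀ z : ℝ, 0 < z → X z = z ^ 2 * z ^ (-del n) := by
    intro z hz
    simp only [hX]
    rw [show 2 - del n = 2 + -del n by ring, Real.rpow_add hz]; norm_num
  have hXs : ∀ z : ℝ, 0 < z → X z * s z = z ^ (-del n) := by
    intro z hz
    rw [hXP z hz]; simp only [hs_def]; field_simp
  set D := del n * (del n + 1) with hD
  have hD0 : 0 < D := by positivity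
  set R : ℝ → ℝ := fun z => n * D * lam0 n * (X z * g z)
      + (n * D * (-1 / 12) * lam n) * (X z * ((F z - 1) * (1 + u z) + u z))
      - (gam n * lam n) * (X z * u z) - alph n * (z ^ 2 * (z * e1 z)) with hR
  have hRO : R =O[atTop] (fun z : ℝ => z ^ (-del n)) := by
    have hXO : ∀ f : ℝ → ℝ, f =O[atTop] s → (fun z => X z * f z) =O[atTop]
        (fun z : ℝ => z ^ (-del n)) := by
      intro f hf
      refine ((isBigO_refl X atTop).mul hf).congr' EventuallyEq.rfl ?_
      filter_upwards [hz0] with z hz using hXs z hz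
    have t1 := (hXO g hgO).const_mul_left (n * D * lam0 n)
    have t2 := (hXO (fun z => (F z - 1) * (1 + u z) + u z)
      ((by simpa using hFO.mul hu1 : (fun z => (F z - 1) * (1 + u z)) =O[atTop] s).add huO)).const_mul_left
        (n * D * (-1 / 12) * lam n)
    have t3 := (hXO u huO).const_mul_left (gam n * lam n)
    have t4 : (fun z => alph n * (z ^ 2 * (z * e1 z))) =O[atTop] (fun z : ℝ => z ^ (-del n)) := by
      refine IsBigO.const_mul_left ?_ _
      refine ((isBigO_refl (fun z : ℝ => z ^ 2) atTop).mul he1O).congr' EventuallyEq.rfl ?_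
      filter_upwards [hz0] with z hz
      rw [hsp z hz]; simp only [hs_def]; field_simp
    exact ((t1.add t2).sub t3).sub t4
  -- equation
  set w : ℝ → ℝ := fun z => h z - lam0 n * z ^ (2 - del n) with hw
  set w1 : ℝ → ℝ := fun z => derivWithin h (Ici 0) z
    - lam0 n * ((2 - del n) * z ^ (2 - del n - 1)) with hw1
  set w2 : ℝ → ℝ := fun z => derivWithin (derivWithin h (Ici 0)) (Ici 0) z
    - lam0 n * ((2 - del n) * (2 - del n - 1) * z ^ (2 - del n - 2)) with hw2
  have hwd : ∀ z, 0 < z → HasDerivAt w (w1 z) z ∧ HasDerivAt w1 (w2 z) z := fun z hz =>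
    ⟨(dd_Ici hhs hz).1.sub ((hasDerivAt_pw hz _).const_mul _),
      (dd_Ici hhs hz).2.sub ((hasDerivAt_pw2 hz _).const_mul _)⟩
  have hweq : ∀ z, 0 < z → z ^ 2 * w2 z = n * D * (1 + g z) * w z + R z := by
    intro z hz
    have o1 := hhode z hz.le
    rw [hB z hz, mul_pow] at o1
    have i1 := hid' z hz
    have i2 : η z = 2 * kap * z * r z := by simp only [hr]; field_simp
    have i3 : kap3 = kap * (-1 / 12) := by unfold kap3; ring
    have o2 : (n:ℝ) * ((2 * kap * z * P z) ^ (n - 1) * (1 + q z) ^ (n - 1))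
        * ((2 * kap * z + 2 * η z) * h z + 2 * kap3 * z ^ 3 * η z)
        = n * ((2 * kap * z * P z) ^ (n - 1) * (2 * kap * z)) *
          (F z * ((1 + 2 * r z) * h z + (-1 / 12) * (z ^ 2 * η z))) := by
      have : (2 * kap * z + 2 * η z) = 2 * kap * z * (1 + 2 * r z) := by
        rw [i2]; ring
      rw [this, i3]; ring
    rw [o2] at o1
    have o3 : z ^ 2 * derivWithin (derivWithin h (Ici 0)) (Ici 0) z
        = n * D * (F z * ((1 + 2 * r z) * h z + (-1 / 12) * (z ^ 2 * η z)))
          - gam n * (z ^ 2 * η z) - alph n * (z ^ 3 * η1 z) := by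
      rw [← i1]; linear_combination z ^ 2 * o1
    have o4 : z ^ 2 * η z = lam n * X z * (1 + u z) := by
      rw [hηu z hz, hXP z hz]; simp only [hPdef]; ring
    have o5 : z ^ 3 * η1 z = z ^ 2 * (z * e1 z) - del n * lam n * X z := by
      have : z * z ^ (-del n - 1) = z ^ (-del n) := by
        rw [Real.rpow_sub_one hz.ne']; field_simp
      rw [hXP z hz, ← this]; simp only [he1]; ring
    have o6 : h z = w z + lam0 n * X z := by simp only [hw, hX]; ring
    have o7 : F z * (1 + 2 * r z) = 1 + g z := by simp only [hg]; ring
    have o8 := sq_pw hz (2 - del n)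
    have o9 : z ^ 2 * w2 z = z ^ 2 * derivWithin (derivWithin h (Ici 0)) (Ici 0) z
        - lam0 n * ((2 - del n) * (1 - del n)) * X z := by
      simp only [hw2, hX]; rw [← o8]; ring
    have o10 := lam0_id hn
    rw [← hD] at o10
    rw [o9, o3, o4, o5]
    simp only [hR]
    have : F z * ((1 + 2 * r z) * h z + (-1 / 12) * (lam n * X z * (1 + u z)))
      = (1 + g z) * (w z + lam0 n * X z) + (-1 / 12) * (lam n * X z) * (F z * (1 + u z)) := by
      rw [← o6, ← o7]; ring
    rw [this]
    linear_combination X z * o10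
  -- conclusion
  obtain ⟨C, hC0, hC⟩ := hRO.exists_pos
  have hg0 : Tendsto g atTop (𝓝 0) := hgO.trans_tendsto hs0
  have hghalf : ∀ᶠ z in atTop, -(1/2 : ℝ) < g z := hg0.eventually_const_lt (by norm_num)
  have hA : del n * (del n + 1) < n * D * (1 / 2) := by rw [← hD]; nlinarith
  have hRb : ∀ᶠ z in atTop, |R z| ≤ C * z ^ (-del n) := by
    filter_upwards [hC.bound, hz0] with z hb hz
    rwa [Real.norm_of_nonneg (Real.rpow_nonneg hz.le _)] at hb
  obtain ⟨K, hK0, hK⟩ := LC (e := w) (e1 := w1) (e2 := w2) (C := C) (p := del n)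
    (A := n * D * (1 / 2)) (by linarith) hA (hz0.mono hwd) hhlim (by
      filter_upwards [hz0, hRb, hghalf] with z hz hb hg1 hwp
      rw [hweq z hz]
      have := (abs_le.1 hb).1
      have : n * D * (1 / 2) * w z ≤ n * D * (1 + g z) * w z := by
        gcongr; linarith
      linarith)
  obtain ⟨L, hL0, hL⟩ := LC (e := fun z => - w z) (e1 := fun z => - w1 z) (e2 := fun z => - w2 z)
    (C := C) (p := del n)
    (A := n * D * (1 / 2)) (by linarith) hA (hz0.mono fun z hz => ⟨(hwd z hz).1.neg, (hwd z hz).2.neg⟩)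
    (by simpa using hhlim.neg) (by
      filter_upwards [hz0, hRb, hghalf] with z hz hb hg1 hwp
      rw [mul_neg (z ^ 2), hweq z hz]
      have := (abs_le.1 hb).2
      have : n * D * (1 / 2) * (-w z) ≤ n * D * (1 + g z) * (-w z) := by
        gcongr; linarith
      linarith)
  refine IsBigO.of_bound (max K L) ?_
  filter_upwards [hK, hL, hz0] with z h1 h2 hz
  have hp : 0 < z ^ (-del n) := Real.rpow_pos_of_pos hz _
  rw [Real.norm_eq_abs, Real.norm_eq_abs, abs_of_pos hp, abs_le]
  have h3 : K * z ^ (-del n) ≤ max K L * z ^ (-del n) := by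
    gcongr; exact le_max_left _ _
  have h4 : L * z ^ (-del n) ≤ max K L * z ^ (-del n) := by
    gcongr; exact le_max_right _ _
  constructor <;> linarith


lemma eps_pos {n : ℕ} (hn : 4 ≤ n) : 0 < eps n := by
  have := cast_n hn
  unfold eps
  apply one_div_pos.2; linarith

lemma eps_le {n : ℕ} (hn : 4 ≤ n) : eps n ≤ 1 / 3 := by
  have := cast_n hn
  unfold eps
  apply one_div_le_one_div_of_le <;> linarith

set_option maxHeartbeats 1000000 in
lemma mu3_near {n : ℕ} (hn : 4 ≤ n) {μ : ℝ → ℝ} (hμ : IsDiffusiveProfile n μ) :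
    ∃ K, ∀ᶠ y in 𝓝[>] (0:ℝ), |mu3 n μ y| ≤ K := by
  obtain ⟨hs, hpos, hode, hlim0, -⟩ := hμ
  have h1 := del_gt_one hn
  have h2 := del_le_two hn
  have h4 := cast_n hn
  have hk := kap_pos
  have hl := lam_pos hn
  have he0 := eps_pos hn
  have he1 := eps_le hn
  set P : ℝ → ℝ := fun z => lam n * z ^ (-del n) with hPdef
  have hP0 : ∀ z, 0 < z → 0 < P z := fun z hz => mul_pos hl (Real.rpow_pos_of_pos hz _)
  set D := del n * (del n + 1) with hD
  have hD2 : 2 < D := by nlinarith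
  set w : ℝ → ℝ := fun y => μ y - lam n * y ^ (-del n) with hw
  set w1 : ℝ → ℝ := fun y => deriv μ y - lam n * (-del n * y ^ (-del n - 1)) with hw1
  set w2 : ℝ → ℝ := fun y => deriv (deriv μ) y
    - lam n * (-del n * (-del n - 1) * y ^ (-del n - 2)) with hw2
  have hwd : ∀ y, 0 < y → HasDerivAt w (w1 y) y ∧ HasDerivAt w1 (w2 y) y := fun y hy =>
    ⟨(dd_Ioi hs hy).1.sub (dd_P n hy).1, (dd_Ioi hs hy).2.sub (dd_P n hy).2⟩
  have hcancel : ∀ y : ℝ, 0 < y → y ^ del n * y ^ (-del n) = 1 := fun y hy => by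
    rw [← Real.rpow_add hy]; simp
  have hwlim : Tendsto (fun y : ℝ => y ^ del n * w y) (𝓝[>] 0) (𝓝 0) := by
    have := hlim0.sub_const (lam n)
    rw [sub_self] at this
    refine this.congr' ?_
    filter_upwards [self_mem_nhdsWithin] with y hy
    have := hcancel y hy
    simp only [hw]
    linear_combination lam n * this
  have hweq : ∀ y, 0 < y → y ^ 2 * w2 y = y ^ 2 * (2 * mu1 y * μ y) ^ n - D * P y
      - y ^ 3 / 2 * w1 y + del n / 2 * (y ^ 2 * P y) - eps n * (y ^ 2 * μ y) := by
    intro y hy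
    have a1 := hode y hy
    have a2 := sq_P2 n hy
    have a3 : y * y ^ (-del n - 1) = y ^ (-del n) := by
      rw [Real.rpow_sub_one hy.ne']; field_simp
    have a4 : y ^ 2 * w2 y = y ^ 2 * deriv (deriv μ) y - D * P y := by
      simp only [hw2, hPdef, hD]; rw [mul_sub, a2]
    rw [a4, ← a1]
    simp only [hw1, hPdef]
    linear_combination (del n / 2 * y ^ 2 * lam n) * a3
  have hid : ∀ z, 0 < z → z ^ 2 * (2 * kap * z * P z) ^ n = D * P z :=
    fun z hz => pow_id hn hz
  have hyP : ∀ y, 0 < y → y ≤ 1 → y ^ 2 * P y ≤ lam n := by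
    intro y hy hy1
    have : y ^ 2 * y ^ (-del n) ≤ 1 := by
      rw [← Real.rpow_natCast, ← Real.rpow_add hy]
      apply Real.rpow_le_one hy.le hy1
      push_cast; linarith
    simp only [hPdef]
    nlinarith
  have hsm : ∀ᶠ y : ℝ in 𝓝[>] (0:ℝ), 0 < y ∧ y ≤ 1 / (n:ℝ) := by
    have hm : Ioo (0:ℝ) (1 / (n:ℝ)) ∈ 𝓝[>] (0:ℝ) := Ioo_mem_nhdsGT (by positivity)
    filter_upwards [hm] with y hy using ⟨hy.1, hy.2.le⟩
  have hwμ : ∀ y, μ y = P y + w y := fun y => by simp only [hw, hPdef]; ring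
  obtain ⟨K, hK⟩ := LC0 (w := w) (w1 := w1) (w2 := w2) (d := del n) (A := 2 * D)
    (C := D * n / 12 * lam n + eps n * lam n) (by linarith) (by rw [← hD]; linarith) hwd hwlim (by
      filter_upwards [hsm] with y hy hwp hw1n
      obtain ⟨hy0, hyn⟩ := hy
      have hyn' : y * n ≤ 1 := by rwa [le_div_iff₀ (by positivity)] at hyn
      have hy1 : y ≤ 1 := by nlinarith
      have hP := hP0 y hy0
      have hyP' := hyP y hy0 hy1
      have hy2 : n * y ^ 2 ≤ 1 := by nlinarith
      rw [hweq y hy0]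
      have hv : 0 < w y / P y := div_pos hwp hP
      have b1 : 2 * kap * y * P y * ((1 + -(y ^ 2 / 12)) * (1 + w y / P y)) ≤ 2 * mu1 y * μ y := by
        have : P y * (1 + w y / P y) = μ y := by rw [hwμ y]; field_simp
        have hμ0 := hpos y hy0
        calc _ = 2 * (kap * y * (1 - y ^ 2 / 12)) * (P y * (1 + w y / P y)) := by ring
          _ = 2 * (kap * y * (1 - y ^ 2 / 12)) * μ y := by rw [this]
          _ ≤ _ := by gcongr; exact mu1_ge hy0.le
      have hq : 0 < 1 + -(y ^ 2 / 12) := by nlinarith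
      have b2 : (2 * kap * y * P y * ((1 + -(y ^ 2 / 12)) * (1 + w y / P y))) ^ n
          ≤ (2 * mu1 y * μ y) ^ n := by
        gcongr
      rw [mul_pow, mul_pow (1 + -(y ^ 2 / 12))] at b2
      have b3 : 1 + (n:ℝ) * (-(y ^ 2 / 12)) ≤ (1 + -(y ^ 2 / 12)) ^ n :=
        one_add_mul_le_pow (by linarith) n
      have b4 : 1 + (n:ℝ) * (w y / P y) ≤ (1 + w y / P y) ^ n :=
        one_add_mul_le_pow (by linarith) n
      have b5 : (1 + (n:ℝ) * (-(y ^ 2 / 12))) * (1 + (n:ℝ) * (w y / P y)) ≤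
          (1 + -(y ^ 2 / 12)) ^ n * (1 + w y / P y) ^ n :=
        mul_le_mul b3 b4 (by positivity) (by positivity)
      have b6 : D * P y * ((1 + (n:ℝ) * (-(y ^ 2 / 12))) * (1 + (n:ℝ) * (w y / P y)))
          ≤ y ^ 2 * (2 * mu1 y * μ y) ^ n := by
        rw [← hid y hy0, mul_assoc]
        refine mul_le_mul_of_nonneg_left (le_trans ?_ b2) (sq_nonneg y)
        exact mul_le_mul_of_nonneg_left b5 (by positivity)
      have b7 : D * P y * ((1 + (n:ℝ) * (-(y ^ 2 / 12))) * (1 + (n:ℝ) * (w y / P y)))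
          = D * P y - D * n / 12 * (y ^ 2 * P y) + n * D * w y * (1 - n * y ^ 2 / 12) := by
        field_simp; ring
      rw [b7] at b6
      have c1 : 0 ≤ -(y ^ 3 / 2 * w1 y) := by
        have : 0 ≤ y ^ 3 / 2 * (- w1 y) := mul_nonneg (by positivity) (by linarith)
        linarith
      have c2 : 0 ≤ del n / 2 * (y ^ 2 * P y) := by positivity
      have c3 : D * n / 12 * (y ^ 2 * P y) ≤ D * n / 12 * lam n := by gcongr
      have c4 : eps n * (y ^ 2 * P y) ≤ eps n * lam n := by gcongr
      have c5 : eps n * (y ^ 2 * w y) ≤ D * w y := by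
        have : eps n * y ^ 2 ≤ D := by nlinarith
        nlinarith
      have c6 : 4 * (D * w y) * (11 / 12) ≤ n * D * w y * (1 - n * y ^ 2 / 12) := by
        have hDw : 0 < D * w y := by positivity
        have : 4 * (D * w y) * (11 / 12) ≤ n * (D * w y) * (1 - n * y ^ 2 / 12) := by
          gcongr
          linarith
        linarith
      have c7 : eps n * (y ^ 2 * μ y) = eps n * (y ^ 2 * P y) + eps n * (y ^ 2 * w y) := by
        rw [hwμ y]; ring
      have hDw : 0 < D * w y := by positivity
      linarith)
  have hvs : ∀ᶠ y in 𝓝[>] (0:ℝ), -(lam n * (1 / (2 * (n:ℝ) ^ 2))) < y ^ del n * w y :=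
    hwlim.eventually_const_lt (by
      have : 0 < lam n * (1 / (2 * (n:ℝ) ^ 2)) := by positivity
      linarith)
  obtain ⟨L, hL⟩ := LC0 (w := fun y => - w y) (w1 := fun y => - w1 y) (w2 := fun y => - w2 y)
    (d := del n) (A := 2 * D)
    (C := del n / 2 * lam n) (by linarith) (by rw [← hD]; linarith)
    (fun y hy => ⟨(hwd y hy).1.neg, (hwd y hy).2.neg⟩) (by simpa using hwlim.neg) (by
      filter_upwards [hsm, hvs] with y hy hvy hwp hw1n
      obtain ⟨hy0, hyn⟩ := hy
      have hyn' : y * n ≤ 1 := by rwa [le_div_iff₀ (by positivity)] at hyn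
      have hy1 : y ≤ 1 := by nlinarith
      have hP := hP0 y hy0
      have hyP' := hyP y hy0 hy1
      have hμ0 := hpos y hy0
      rw [mul_neg (y ^ 2), hweq y hy0]
      have hPv : P y * y ^ del n = lam n := by
        simp only [hPdef]; linear_combination lam n * hcancel y hy0
      set v := -w y / P y with hv
      have hv0 : 0 < v := div_pos hwp hP
      have hv1 : v ≤ 1 / (2 * (n:ℝ) ^ 2) := by
        rw [hv, div_le_iff₀ hP]
        have hyd : 0 < y ^ del n := Real.rpow_pos_of_pos hy0 _
        apply le_of_mul_le_mul_right _ hyd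
        rw [mul_assoc, hPv]
        linarith
      have e1 : μ y = P y * (1 - v) := by rw [hwμ y, hv]; field_simp; ring
      have hv11 : 0 ≤ 1 - v := by
        by_contra hc
        push Not at hc
        nlinarith
      have b1 : 2 * mu1 y * μ y ≤ 2 * kap * y * P y * (1 - v) := by
        calc 2 * mu1 y * μ y ≤ 2 * (kap * y) * μ y := by gcongr; exact mu1_le hy0.le
          _ = _ := by rw [e1]; ring
      have b2 : (2 * mu1 y * μ y) ^ n ≤ (2 * kap * y * P y * (1 - v)) ^ n :=
        pow_le_pow_left₀ (by have := mu1_nonneg hy0.le; positivity) b1 n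
      rw [mul_pow (2 * kap * y * P y)] at b2
      have b3 := mul_le_mul_of_nonneg_left b2 (sq_nonneg y)
      rw [← mul_assoc (y ^ 2) ((2 * kap * y * P y) ^ n), hid y hy0] at b3
      have b4 := mul_le_mul_of_nonneg_left (pow_sub_le hn hv0.le hv1)
        (show 0 ≤ D * P y by positivity)
      have b5 : D * P y * (1 - ((n:ℝ) - 1 / 2) * v) = D * P y - (n - 1 / 2) * (D * (-w y)) := by
        rw [hv]; field_simp
      rw [b5] at b4
      have c1 : 0 ≤ y ^ 3 / 2 * w1 y := mul_nonneg (by positivity) (by linarith)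
      have c2 : del n / 2 * (y ^ 2 * P y) ≤ del n / 2 * lam n := by gcongr
      have c3 : 0 ≤ eps n * (y ^ 2 * μ y) := by positivity
      have c4 : 2 * (D * (-w y)) ≤ (n - 1 / 2) * (D * (-w y)) := by
        have : 0 < D * (-w y) := mul_pos (by linarith) hwp
        gcongr; linarith
      linarith)
  refine ⟨max K L, ?_⟩
  filter_upwards [hK, hL] with y h1 h2
  show |w y| ≤ _
  exact abs_le.2 ⟨by linarith [le_max_right K L], by linarith [le_max_left K L]⟩

set_option maxHeartbeats 1000000 in
lemma mu_far {n : ℕ} (hn : 4 ≤ n) {μ : ℝ → ℝ} (hμ : IsDiffusiveProfile n μ) :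
    ∃ K, ∀ y, 5 ≤ y → y ^ del n * μ y ≤ K := by
  obtain ⟨hs, hpos, hode, -, hlim⟩ := hμ
  have h1 := del_gt_one hn
  have h2 := del_le_two hn
  have he0 := eps_pos hn
  have he1 := eps_le hn
  set a := 2 * eps n with ha
  have ha0 : 0 < a := by positivity
  set m : ℝ → ℝ := fun s => s ^ a * μ (s + 1) with hm
  have hm0 : ∀ s, 0 < s → 0 < m s := fun s hs => mul_pos (Real.rpow_pos_of_pos hs _)
    (hpos _ (by simp only [mem_Ioi]; linarith))
  have hmlim : Tendsto m atTop (𝓝 0) := by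
    have h' : Tendsto (fun s : ℝ => (s + 1) ^ a * μ (s + 1)) atTop (𝓝 0) :=
      hlim.comp (tendsto_atTop_add_const_right _ 1 tendsto_id)
    refine tendsto_of_tendsto_of_tendsto_of_le_of_le' tendsto_const_nhds h' ?_ ?_
    · filter_upwards [eventually_gt_atTop 0] with s hs using (hm0 s hs).le
    · filter_upwards [eventually_gt_atTop 0] with s hs
      have := hpos (s + 1) (by simp only [mem_Ioi]; linarith)
      simp only [hm]
      gcongr
      linarith
  set p := del n with hp
  set K := m 4 * 4 ^ p with hK
  have hm4 := hm0 4 (by norm_num)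
  have hK0 : 0 < K := by positivity
  set m1 : ℝ → ℝ := fun s => a * s ^ (a - 1) * μ (s + 1) + s ^ a * deriv μ (s + 1) with hm1
  set m2 : ℝ → ℝ := fun s => (a * (a - 1) * s ^ (a - 2) * μ (s + 1)
    + a * s ^ (a - 1) * deriv μ (s + 1)) + (a * s ^ (a - 1) * deriv μ (s + 1)
      + s ^ a * deriv (deriv μ) (s + 1)) with hm2
  have hmd : ∀ s, 0 < s → HasDerivAt m (m1 s) s ∧ HasDerivAt m1 (m2 s) s := by
    intro s hs'
    have hd := dd_Ioi hs (show 0 < s + 1 by linarith)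
    have d1 := hd.1.comp_add_const s 1
    have d2 := hd.2.comp_add_const s 1
    exact ⟨(hasDerivAt_pw hs' a).mul d1,
      ((hasDerivAt_pw2 hs' a).mul d1).add ((hasDerivAt_pw hs' a).mul d2)⟩
  have key : ∀ s, 4 ≤ s → m s ≤ K * s ^ (-p) := by
    intro s hs4
    refine le_of_forall_pos_le_add fun θ hθ => ?_
    obtain ⟨b, hb1, hb2⟩ := ((hmlim.eventually_lt_const hθ).and (eventually_ge_atTop s)).exists
    have hder : ∀ x, 0 < x → HasDerivAt (fun x => m x - K * x ^ (-p) - θ)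
      (m1 x - K * (-p * x ^ (-p - 1))) x ∧
      HasDerivAt (fun x => m1 x - K * (-p * x ^ (-p - 1)))
      (m2 x - K * (-p * (-p - 1) * x ^ (-p - 2))) x := by
      intro x hx
      have h1 := hmd x hx
      exact ⟨((h1.1).sub ((hasDerivAt_pw hx (-p)).const_mul K)).sub_const θ,
        (h1.2).sub ((hasDerivAt_pw2 hx (-p)).const_mul K)⟩
    have := max_pr (a := 4) (b := b) (w := fun x => m x - K * x ^ (-p) - θ)
      (fun x hx => (hder x (by linarith [hx.1])).1.continuousAt.continuousWithinAt)
      (fun x hx => hder x (by linarith [hx.1]))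
      (by
        have : (4:ℝ) ^ p * 4 ^ (-p) = 1 := by rw [← Real.rpow_add (by norm_num)]; simp
        have : K * 4 ^ (-p) = m 4 := by rw [hK, mul_assoc, this, mul_one]
        linarith)
      (by
        have : 0 < b ^ (-p) := Real.rpow_pos_of_pos (by linarith) _
        nlinarith)
      (fun x hx hw hw1 => by
        have hx4 := hx.1
        have hxp : 0 < x := by linarith
        have hpw : 0 < x ^ (-p) := Real.rpow_pos_of_pos hxp _
        set E := K * x ^ (-p) with hE
        have hE0 : 0 < E := by positivity
        have hmE : E < m x := by linarith
        have s1 : x * x ^ (a - 1) = x ^ a := by rw [Real.rpow_sub_one hxp.ne']; field_simp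
        have s2 := sq_pw hxp a
        have s3 : x * x ^ (-p - 1) = x ^ (-p) := by rw [Real.rpow_sub_one hxp.ne']; field_simp
        have s4 := sq_pw hxp (-p)
        set M1 := x ^ a * deriv μ (x + 1) with hM1
        set M2 := x ^ a * deriv (deriv μ) (x + 1) with hM2
        have t1 : x * m1 x = a * m x + x * M1 := by
          simp only [hm1, hm, hM1]; linear_combination (a * μ (x + 1)) * s1
        have t2 : x ^ 2 * m2 x = a * (a - 1) * m x + 2 * a * (x * M1) + x ^ 2 * M2 := by
          simp only [hm2, hm, hM1, hM2]
          linear_combination (a * (a - 1) * μ (x + 1)) * s2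
            + (2 * a * x * deriv μ (x + 1)) * s1
        have t3 : x * M1 = -p * E - a * m x := by
          simp only [hE]
          linear_combination x * hw1 - t1 - K * p * s3
        have t4 : 0 ≤ M2 + (x + 1) / 2 * M1 + eps n * m x := by
          have hμ0 := hpos (x + 1) (by simp only [mem_Ioi]; linarith)
          have hm0 := mu1_nonneg (show 0 ≤ x + 1 by linarith)
          have o := hode (x + 1) (by simp only [mem_Ioi]; linarith)
          have : M2 + (x + 1) / 2 * M1 + eps n * m x
            = x ^ a * (2 * mu1 (x + 1) * μ (x + 1)) ^ n := by
            rw [← o]; simp only [hm, hM1, hM2]; ring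
          rw [this]; positivity
        have t5 : 0 ≤ x ^ 2 * M2 + x * (x + 1) / 2 * (x * M1) + a / 2 * x ^ 2 * m x := by
          have := mul_nonneg (sq_nonneg x) t4
          have e : x ^ 2 * (M2 + (x + 1) / 2 * M1 + eps n * m x)
            = x ^ 2 * M2 + x * (x + 1) / 2 * (x * M1) + a / 2 * x ^ 2 * m x := by
            rw [ha]; ring
          linarith
        rw [t3] at t2 t5
        have t6 : x ^ 2 * m2 x ≥ m x * (a * (x / 2 - a - 1)) + E * (p * (x * (x + 1) / 2 - 2 * a)) := by
          linarith
        have t7 : 0 ≤ m x * (a * (x / 2 - a - 1)) :=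
          mul_nonneg (by linarith) (mul_nonneg ha0.le (by linarith))
        have t8 : E * (p * (p + 1)) < E * (p * (x * (x + 1) / 2 - 2 * a)) := by
          have : p + 1 < x * (x + 1) / 2 - 2 * a := by nlinarith
          have hp0 : 0 < p := by linarith
          gcongr
        have h5 : 0 < x ^ 2 * (m2 x - K * (-p * (-p - 1) * x ^ (-p - 2))) := by
          have : x ^ 2 * (m2 x - K * (-p * (-p - 1) * x ^ (-p - 2)))
            = x ^ 2 * m2 x - K * (p * (p + 1)) * (x ^ 2 * x ^ (-p - 2)) := by ring
          rw [this, s4]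
          have : K * (p * (p + 1)) * x ^ (-p) = E * (p * (p + 1)) := by rw [hE]; ring
          linarith
        exact (pos_iff_pos_of_mul_pos h5).1 (by positivity))
      s ⟨hs4, hb2⟩
    linarith
  refine ⟨2 ^ p * K, fun y hy => ?_⟩
  have k := key (y - 1) (by linarith)
  simp only [hm, sub_add_cancel] at k
  have hy1 : 1 ≤ y - 1 := by linarith
  have hμ0 := hpos y (by simp only [mem_Ioi]; linarith)
  have k1 : 1 ≤ (y - 1) ^ a := Real.one_le_rpow hy1 ha0.le
  have k2 : μ y ≤ K * (y - 1) ^ (-p) := by nlinarith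
  have k3 : y ^ p ≤ 2 ^ p * (y - 1) ^ p := by
    rw [← Real.mul_rpow (by norm_num) (by linarith)]
    apply Real.rpow_le_rpow <;> linarith
  have k4 : (y - 1) ^ p * (y - 1) ^ (-p) = 1 := by
    rw [← Real.rpow_add (by linarith)]; simp
  calc y ^ p * μ y ≤ (2 ^ p * (y - 1) ^ p) * (K * (y - 1) ^ (-p)) := by
        apply mul_le_mul k3 k2 hμ0.le (by positivity)
    _ = 2 ^ p * K * ((y - 1) ^ p * (y - 1) ^ (-p)) := by ring
    _ = _ := by rw [k4, mul_one]



/-- A function continuous on `[0,∞)` and `O(z^{-d})` at infinity is bounded along with `z^d f`. -/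
lemma glob_bound {f : ℝ → ℝ} {d : ℝ} (hd : 0 ≤ d) (hf : ContinuousOn f (Ici 0))
    (hO : f =O[atTop] fun z : ℝ => z ^ (-d)) :
    ∃ C, 0 ≤ C ∧ ∀ z, 0 ≤ z → |f z| ≤ C ∧ z ^ d * |f z| ≤ C := by
  obtain ⟨c, hc⟩ := hO.bound
  obtain ⟨M, hM⟩ := eventually_atTop.1 hc
  set R := max M 1 with hR
  have hR1 : 1 ≤ R := le_max_right _ _
  obtain ⟨B, hB⟩ := isCompact_Icc.exists_bound_of_continuousOn
    (hf.mono (Icc_subset_Ici_self : Icc 0 R ⊆ Ici 0))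
  have hB0 : 0 ≤ B := (norm_nonneg _).trans (hB 0 ⟨le_rfl, by linarith⟩)
  have hRd : 0 ≤ R ^ d := Real.rpow_nonneg (by linarith) _
  refine ⟨B + R ^ d * B + |c|, by positivity, fun z hz => ?_⟩
  have hRB : 0 ≤ R ^ d * B := by positivity
  have hca := abs_nonneg c
  rcases le_total z R with h | h
  · have b := hB z ⟨hz, h⟩
    rw [Real.norm_eq_abs] at b
    have : z ^ d * |f z| ≤ R ^ d * B :=
      mul_le_mul (Real.rpow_le_rpow hz h hd) b (abs_nonneg _) hRd
    constructor <;> linarith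
  · have b := hM z ((le_max_left _ _).trans h)
    have hz0 : 0 < z := by linarith
    have hzd : 0 < z ^ d := Real.rpow_pos_of_pos hz0 _
    have hzm : 0 < z ^ (-d) := Real.rpow_pos_of_pos hz0 _
    rw [Real.norm_eq_abs, Real.norm_eq_abs, abs_of_pos hzm] at b
    have e : z ^ d * z ^ (-d) = 1 := by rw [← Real.rpow_add hz0]; simp
    have h1 : 1 ≤ z ^ d := Real.one_le_rpow (by linarith) hd
    have h2 : z ^ d * |f z| ≤ c := by
      calc z ^ d * |f z| ≤ z ^ d * (c * z ^ (-d)) := by gcongr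
        _ = c * (z ^ d * z ^ (-d)) := by ring
        _ = c := by rw [e, mul_one]
    have h3 : |f z| ≤ z ^ d * |f z| := le_mul_of_one_le_left (abs_nonneg _) h1
    have := le_abs_self c
    constructor <;> linarith

lemma eta_bound {n : ℕ} (hn : 4 ≤ n) {η : ℝ → ℝ} (hη : IsReactiveProfile n η) :
    ∃ C, 0 ≤ C ∧ ∀ z, 0 ≤ z → |η z| ≤ C ∧ z ^ del n * |η z| ≤ C := by
  have h1 := del_gt_one hn
  refine glob_bound (by linarith) hη.1.continuousOn ?_
  have e := eta_bigO hn hη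
  have e1 : (fun z : ℝ => z ^ (-(del n + 2))) =O[atTop] fun z : ℝ => z ^ (-del n) := by
    refine Asymptotics.IsBigO.of_bound 1 ?_
    filter_upwards [eventually_ge_atTop 1] with z hz
    have hz0 : 0 < z := by linarith
    rw [Real.norm_eq_abs, Real.norm_eq_abs, abs_of_pos (Real.rpow_pos_of_pos hz0 _),
      abs_of_pos (Real.rpow_pos_of_pos hz0 _), one_mul]
    exact Real.rpow_le_rpow_of_exponent_le hz (by linarith)
  have e2 : (fun z : ℝ => lam n * z ^ (-del n)) =O[atTop] fun z : ℝ => z ^ (-del n) :=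
    Asymptotics.isBigO_const_mul_self _ _ _
  refine ((e.trans e1).add e2).congr_left fun z => ?_
  simp

lemma phi2_bound {n : ℕ} (hn : 4 ≤ n) {η h : ℝ → ℝ} (hη : IsReactiveProfile n η)
    (hh : IsCorrector n η h) :
    ∃ C, 0 ≤ C ∧ ∀ z, 0 ≤ z → |phi2 n h z| ≤ C ∧ z ^ del n * |phi2 n h z| ≤ C := by
  have h1 := del_gt_one hn
  have h2 := del_le_two hn
  refine glob_bound (by linarith) ?_ ?_
  · have hc : ContinuousOn (fun z : ℝ => z ^ (2 - del n)) (Ici 0) :=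
      (Real.continuous_rpow_const (by linarith)).continuousOn
    exact (continuousOn_const.mul hc).add hh.1.continuousOn
  · refine (corr_asym hn hη hh).congr_left fun z => ?_
    simp only [phi2]; ring

lemma mu3_bound {n : ℕ} (hn : 4 ≤ n) {μ : ℝ → ℝ} (hμ : IsDiffusiveProfile n μ) :
    ∃ C, 0 ≤ C ∧ ∀ y, 0 ≤ y → |mu3 n μ y| ≤ C ∧ y ^ del n * |mu3 n μ y| ≤ C := by
  have h1 := del_gt_one hn
  have hl := lam_pos hn
  obtain ⟨K, hK⟩ := mu3_near hn hμ
  obtain ⟨F, hF⟩ := mu_far hn hμ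
  obtain ⟨u, hu0, hu⟩ := mem_nhdsGT_iff_exists_Ioc_subset.1 hK
  simp only [mem_Ioi] at hu0
  have hcont : ContinuousOn (mu3 n μ) (Icc u 5) := by
    have hsub : Icc u 5 ⊆ Ioi 0 := fun y hy => lt_of_lt_of_le hu0 hy.1
    refine (hμ.1.continuousOn.mono hsub).sub (continuousOn_const.mul ?_)
    exact fun y hy => (Real.continuousAt_rpow_const y _ (Or.inl (hsub hy).ne')).continuousWithinAt
  obtain ⟨B, hB⟩ := isCompact_Icc.exists_bound_of_continuousOn hcont
  set S := |K| + |B| + |mu3 n μ 0| with hS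
  have hS0 : 0 ≤ S := by positivity
  have h5 : (1:ℝ) ≤ 5 ^ del n := Real.one_le_rpow (by norm_num) (by linarith)
  refine ⟨5 ^ del n * S + (|F| + lam n), by positivity, fun y hy => ?_⟩
  have a1 := abs_nonneg K
  have a2 := abs_nonneg B
  have a3 := abs_nonneg (mu3 n μ 0)
  have a4 := abs_nonneg F
  have a5 := le_abs_self K
  have a6 := le_abs_self B
  have a7 := le_abs_self F
  rcases le_total y 5 with h | h
  · have hm : |mu3 n μ y| ≤ S := by
      rcases hy.eq_or_lt with h0 | h0
      · rw [← h0]; linarith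
      · rcases le_total y u with h' | h'
        · have := hu ⟨h0, h'⟩
          simp only [Set.mem_ofPred_eq] at this
          linarith
        · have := hB y ⟨h', h⟩
          rw [Real.norm_eq_abs] at this
          linarith
    have b1 : y ^ del n * |mu3 n μ y| ≤ 5 ^ del n * S :=
      mul_le_mul (Real.rpow_le_rpow hy h (by linarith)) hm (abs_nonneg _) (by positivity)
    have b2 : S ≤ 5 ^ del n * S := le_mul_of_one_le_left hS0 h5
    constructor <;> linarith
  · have hy0 : 0 < y := by linarith
    have f := hF y h
    have hμ0 := hμ.2.1 y hy0
    have hyd : 0 < y ^ del n := Real.rpow_pos_of_pos hy0 _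
    have e : y ^ del n * y ^ (-del n) = 1 := by rw [← Real.rpow_add hy0]; simp
    have h3 : 1 ≤ y ^ del n := Real.one_le_rpow (by linarith) (by linarith)
    have hP : 0 < y ^ (-del n) := Real.rpow_pos_of_pos hy0 _
    have b0 : |mu3 n μ y| ≤ μ y + lam n * y ^ (-del n) := by
      have : 0 < lam n * y ^ (-del n) := by positivity
      unfold mu3
      exact abs_le.2 ⟨by linarith, by linarith⟩
    have b1 : y ^ del n * |mu3 n μ y| ≤ |F| + lam n := by
      have := mul_le_mul_of_nonneg_left b0 hyd.le
      have e2 : y ^ del n * (μ y + lam n * y ^ (-del n)) = y ^ del n * μ y + lam n := by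
        linear_combination lam n * e
      linarith
    have b2 : |mu3 n μ y| ≤ y ^ del n * |mu3 n μ y| := le_mul_of_one_le_left (abs_nonneg _) h3
    have b3 : 0 ≤ 5 ^ del n * S := by positivity
    constructor <;> linarith

lemma gam_pos (n : ℕ) : 0 < gam n := by
  unfold gam; positivity

lemma gam_del {n : ℕ} (hn : 4 ≤ n) : gam n * (1 + del n) = eps n := by
  have := cast_n hn
  have h1 : (n:ℝ) - 1 ≠ 0 := by linarith
  have h2 : 2 * (n:ℝ) + 1 ≠ 0 := by linarith
  unfold gam del eps
  field_simp
  ring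

lemma main_bound {n : ℕ} (hn : 4 ≤ n) {η μ h : ℝ → ℝ}
    (hη : IsReactiveProfile n η) (hμ : IsDiffusiveProfile n μ) (hh : IsCorrector n η h) :
    ∃ C, 0 < C ∧ ∀ t ≥ (1 : ℝ), ∀ x : ℝ,
      |phiFun n η μ h x t| ≤ C * t ^ (-(gam n)) ∧
      (|x| / t ^ alph n) ^ del n * |phiFun n η μ h x t| ≤ C * t ^ (-(gam n)) := by
  obtain ⟨A, hA0, hA⟩ := eta_bound hn hη
  obtain ⟨B, hB0, hB⟩ := mu3_bound hn hμ
  obtain ⟨D, hD0, hD⟩ := phi2_bound hn hη hh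
  refine ⟨A + B + D + 1, by linarith, fun t ht x => ?_⟩
  have h1 := del_gt_one hn
  have hg := gam_pos n
  have hgd := gam_del hn
  have ht0 : 0 < t := by linarith
  set z := |x| / t ^ alph n with hz
  set y := |x| / Real.sqrt t with hy
  have hz0 : 0 ≤ z := by positivity
  have hy0 : 0 ≤ y := by positivity
  have hzy : z = y * t ^ gam n := by
    have : Real.sqrt t = t ^ alph n * t ^ gam n := by
      rw [Real.sqrt_eq_rpow, ← Real.rpow_add ht0]
      congr 1; unfold alph; ring
    have ha : 0 < t ^ alph n := Real.rpow_pos_of_pos ht0 _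
    have hb : 0 < t ^ gam n := Real.rpow_pos_of_pos ht0 _
    rw [hz, hy, this]
    field_simp
  have hzd : t ^ (-(eps n)) * z ^ del n = t ^ (-(gam n)) * y ^ del n := by
    rw [hzy, Real.mul_rpow hy0 (Real.rpow_nonneg ht0.le _), ← Real.rpow_mul ht0.le,
      mul_left_comm, ← Real.rpow_add ht0, mul_comm]
    congr 2
    linarith
  have g0 : 0 < t ^ (-(gam n)) := Real.rpow_pos_of_pos ht0 _
  have g1 : 0 < t ^ (-(eps n)) := Real.rpow_pos_of_pos ht0 _
  have g2 : 0 < t ^ (-(3 * gam n)) := Real.rpow_pos_of_pos ht0 _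
  have l1 : t ^ (-(eps n)) ≤ t ^ (-(gam n)) :=
    Real.rpow_le_rpow_of_exponent_le ht (by nlinarith)
  have l2 : t ^ (-(3 * gam n)) ≤ t ^ (-(gam n)) :=
    Real.rpow_le_rpow_of_exponent_le ht (by linarith)
  have habs : |phiFun n η μ h x t| ≤ t ^ (-(gam n)) * |η z| + t ^ (-(eps n)) * |mu3 n μ y|
      + t ^ (-(3 * gam n)) * |phi2 n h z| := by
    unfold phiFun
    refine (abs_add_three _ _ _).trans_eq ?_
    rw [abs_mul, abs_mul, abs_mul, abs_of_pos g0, abs_of_pos g1, abs_of_pos g2]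
  obtain ⟨A1, A2⟩ := hA z hz0
  obtain ⟨B1, B2⟩ := hB y hy0
  obtain ⟨D1, D2⟩ := hD z hz0
  have hzp : 0 ≤ z ^ del n := Real.rpow_nonneg hz0 _
  constructor
  · have p1 : t ^ (-(gam n)) * |η z| ≤ t ^ (-(gam n)) * A := by gcongr
    have p2 : t ^ (-(eps n)) * |mu3 n μ y| ≤ t ^ (-(gam n)) * B := by gcongr
    have p3 : t ^ (-(3 * gam n)) * |phi2 n h z| ≤ t ^ (-(gam n)) * D := by gcongr
    linarith
  · have p0 := mul_le_mul_of_nonneg_left habs hzp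
    have p1 : t ^ (-(gam n)) * (z ^ del n * |η z|) ≤ t ^ (-(gam n)) * A := by gcongr
    have p2 : t ^ (-(gam n)) * (y ^ del n * |mu3 n μ y|) ≤ t ^ (-(gam n)) * B := by gcongr
    have p3 : t ^ (-(3 * gam n)) * (z ^ del n * |phi2 n h z|) ≤ t ^ (-(gam n)) * D := by gcongr
    have p4 : z ^ del n * (t ^ (-(gam n)) * |η z| + t ^ (-(eps n)) * |mu3 n μ y|
      + t ^ (-(3 * gam n)) * |phi2 n h z|) = t ^ (-(gam n)) * (z ^ del n * |η z|)
        + t ^ (-(gam n)) * (y ^ del n * |mu3 n μ y|)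
        + t ^ (-(3 * gam n)) * (z ^ del n * |phi2 n h z|) := by
      linear_combination |mu3 n μ y| * hzd
    linarith

lemma nu_bound {n : ℕ} (hn : 4 ≤ n) {η μ h : ℝ → ℝ}
    (hη : IsReactiveProfile n η) (hμ : IsDiffusiveProfile n μ) (hh : IsCorrector n η h) :
    ∀ ν : ℝ, 0 ≤ ν → ν ≤ del n → ∃ c : ℝ, 0 < c ∧ ∀ t ≥ (1 : ℝ), ∀ x : ℝ,
      (|x| / t ^ alph n) ^ ν * |phiFun n η μ h x t| ≤ c * t ^ (-(gam n)) := by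
  intro ν h0 h1
  obtain ⟨C, hC, hb⟩ := main_bound hn hη hμ hh
  refine ⟨2 * C, by linarith, fun t ht x => ?_⟩
  obtain ⟨b1, b2⟩ := hb t ht x
  have ht0 : 0 < t := by linarith
  set z := |x| / t ^ alph n with hz
  have hz0 : 0 ≤ z := by positivity
  have hzp : 0 ≤ z ^ del n := Real.rpow_nonneg hz0 _
  have hle : z ^ ν ≤ 1 + z ^ del n := by
    rcases le_total z 1 with h | h
    · have := Real.rpow_le_one hz0 h h0
      linarith
    · have := Real.rpow_le_rpow_of_exponent_le h h1
      linarith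
  have := mul_le_mul_of_nonneg_right hle (abs_nonneg (phiFun n η μ h x t))
  linarith

lemma quad_bound {n : ℕ} (hn : 4 ≤ n) {η μ h : ℝ → ℝ}
    (hη : IsReactiveProfile n η) (hμ : IsDiffusiveProfile n μ) (hh : IsCorrector n η h) :
    ∃ c' : ℝ, 0 < c' ∧ ∀ t ≥ (1 : ℝ), ∀ x : ℝ,
      |2 * ubar x t * phiFun n η μ h x t + phiFun n η μ h x t ^ 2|
        ≤ c' * t ^ (-(2 * gam n)) := by
  have h1 := del_gt_one hn
  have hk := kap_pos
  obtain ⟨c, hc, hcb⟩ := nu_bound hn hη hμ hh 1 zero_le_one h1.le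
  obtain ⟨C, hC, hb⟩ := main_bound hn hη hμ hh
  refine ⟨2 * kap * c + C ^ 2, by positivity, fun t ht x => ?_⟩
  have b0 := hcb t ht x
  have b1 := (hb t ht x).1
  rw [Real.rpow_one] at b0
  have ht0 : 0 < t := by linarith
  set f := phiFun n η μ h x t with hf
  set G := t ^ (-(gam n)) with hG
  have hG0 : 0 < G := Real.rpow_pos_of_pos ht0 _
  have hGG : t ^ (-(2 * gam n)) = G ^ 2 := by
    rw [hG, sq, ← Real.rpow_add ht0]; congr 1; ring
  have hy0 : 0 ≤ |x| / Real.sqrt t := by positivity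
  have hzy : |x| / Real.sqrt t = |x| / t ^ alph n * G := by
    have : Real.sqrt t = t ^ alph n * t ^ gam n := by
      rw [Real.sqrt_eq_rpow, ← Real.rpow_add ht0]
      congr 1; unfold alph; ring
    rw [this, hG, Real.rpow_neg ht0.le, div_mul_eq_div_div, div_eq_mul_inv _ (t ^ gam n)]
  have u1 := mu1_le hy0
  have u0 := mu1_nonneg hy0
  have q1 : |2 * ubar x t * f| ≤ 2 * kap * c * G ^ 2 := by
    rw [abs_mul, abs_mul, abs_two]
    unfold ubar
    rw [abs_of_nonneg u0]
    calc 2 * mu1 (|x| / Real.sqrt t) * |f| ≤ 2 * (kap * (|x| / Real.sqrt t)) * |f| := by gcongr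
      _ = 2 * kap * G * (|x| / t ^ alph n * |f|) := by rw [hzy]; ring
      _ ≤ 2 * kap * G * (c * G) := by gcongr
      _ = _ := by ring
  have q2 : |f ^ 2| ≤ C ^ 2 * G ^ 2 := by
    rw [abs_pow, ← mul_pow]
    gcongr
  rw [hGG]
  refine (abs_add_le _ _).trans ?_
  linarith

end PhiAux

/-- Uniform bounds on the correction φ: for 0 ≤ ν ≤ δ,
(|x|/t^α)^ν |φ(x,t)| ≤ c t^{−γ}, and |2ūφ + φ²| ≤ c' t^{−2γ}, for all t ≥ 1. -/
theorem phi_uniform_bounds (n : ℕ) (hn : 4 ≤ n) (η μ h : ℝ → ℝ)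
    (hη : IsReactiveProfile n η) (hμ : IsDiffusiveProfile n μ) (hh : IsCorrector n η h) :
    (∀ ν : ℝ, 0 ≤ ν → ν ≤ del n → ∃ c : ℝ, 0 < c ∧ ∀ t ≥ (1 : ℝ), ∀ x : ℝ,
      (|x| / t ^ alph n) ^ ν * |phiFun n η μ h x t| ≤ c * t ^ (-(gam n))) ∧
    (∃ c' : ℝ, 0 < c' ∧ ∀ t ≥ (1 : ℝ), ∀ x : ℝ,
      |2 * ubar x t * phiFun n η μ h x t + phiFun n η μ h x t ^ 2|
        ≤ c' * t ^ (-(2 * gam n))) := by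
  exact ⟨PhiAux.nu_bound hn hη hμ hh, PhiAux.quad_bound hn hη hμ hh⟩
end

section
/- Let n ≥ 4 be an integer. For every fixed ξ with 0 < ξ < ξ_m there exists a unique number c₀(ξ) with λ < c₀(ξ) < c₂(ξ) such that the solution m of the equation m''(x) + (x/2 − 2δ/x) m'(x) + (δ(δ+1)/x² − (δ/2 − ε)) m(x) = (1/x²)(2 μ₁(x) m(x)/x)^n with initial data m(ξ) = c₀(ξ), m'(ξ) = 0 is positive on (0,ξ] and satisfies lim_{x→0⁺} m(x) = λ. Furthermore, the function ξ ↦ c₀(ξ) is continuous on (0, ξ_m). -/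
/-- ξ₀ = √(δ(δ+1)/(nε/2)). -/
noncomputable def xi0 (n : ℕ) : ℝ :=
  Real.sqrt (del n * (del n + 1) / ((n : ℝ) * eps n / 2))

/-- c₂(ξ) = ((nε/2)/(2μ₁(ξ)/ξ)ⁿ · (ξ₀² − ξ²))^ε. -/
noncomputable def c2 (n : ℕ) (ξ : ℝ) : ℝ :=
  (((n : ℝ) * eps n / 2) / (2 * mu1 ξ / ξ) ^ n * (xi0 n ^ 2 - ξ ^ 2)) ^ eps n

/-- ω₁(ξ) = (2μ₁(ξ)/ξ)ⁿ/ξ². -/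
noncomputable def om1 (n : ℕ) (ξ : ℝ) : ℝ := (2 * mu1 ξ / ξ) ^ n / ξ ^ 2

/-- ω₂(ξ) = nε/2 − δ(δ+1)/ξ². -/
noncomputable def om2 (n : ℕ) (ξ : ℝ) : ℝ :=
  (n : ℝ) * eps n / 2 - del n * (del n + 1) / ξ ^ 2

/-- m is a solution on (0,ξ] of the equation for m = y^δ μ₂ with initial data
m(ξ) = ρ, m'(ξ) = 0, positive on (0,ξ], and m(x) → λ as x → 0⁺. -/
def IsShootSol (n : ℕ) (ξ ρ : ℝ) (m : ℝ → ℝ) : Prop :=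
  ContDiffOn ℝ 2 m (Set.Ioc 0 ξ) ∧
  (∀ x ∈ Set.Ioc (0:ℝ) ξ,
    derivWithin (derivWithin m (Set.Ioc 0 ξ)) (Set.Ioc 0 ξ) x
        + (x / 2 - 2 * del n / x) * derivWithin m (Set.Ioc 0 ξ) x
        + (del n * (del n + 1) / x ^ 2 - (del n / 2 - eps n)) * m x
      = (1 / x ^ 2) * (2 * mu1 x * m x / x) ^ n) ∧
  m ξ = ρ ∧
  derivWithin m (Set.Ioc 0 ξ) ξ = 0 ∧
  (∀ x ∈ Set.Ioc (0:ℝ) ξ, 0 < m x) ∧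
  Filter.Tendsto m (nhdsWithin 0 (Set.Ioi 0)) (nhds (lam n))

section helpers
open Set Filter Topology

noncomputable def EE (s : ℝ) : ℝ := ∫ σ in (0:ℝ)..s, Real.exp (-σ ^ 2)

theorem EE_deriv (s : ℝ) : HasDerivAt EE (Real.exp (-s ^ 2)) s := by
  have hc : Continuous fun σ : ℝ => Real.exp (-σ ^ 2) := by fun_prop
  exact intervalIntegral.integral_hasDerivAt_right (hc.intervalIntegrable _ _)
    (hc.stronglyMeasurableAtFilter _ _) hc.continuousAt

theorem EE_zero : EE 0 = 0 := by simp [EE]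

theorem nonneg_of_deriv (f f' : ℝ → ℝ) (h : ∀ x, HasDerivAt f (f' x) x) (h0 : f 0 = 0)
    (hp : ∀ x, 0 ≤ x → 0 ≤ f' x) (x : ℝ) (hx : 0 ≤ x) : 0 ≤ f x := by
  have : MonotoneOn f (Ici 0) := by
    apply monotoneOn_of_deriv_nonneg (convex_Ici 0)
    · exact fun x _ => (h x).continuousAt.continuousWithinAt
    · exact fun x _ => (h x).differentiableAt.differentiableWithinAt
    · intro x hx
      rw [interior_Ici] at hx
      rw [(h x).deriv]; exact hp x (le_of_lt hx)
  have := this (mem_Ici.2 le_rfl) (mem_Ici.2 hx) hx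
  rwa [h0] at this

theorem EE_pos (s : ℝ) (hs : 0 < s) : 0 < EE s := by
  have : StrictMono EE := strictMono_of_deriv_pos fun x => by
    rw [(EE_deriv x).deriv]; exact Real.exp_pos _
  have := this hs
  rwa [EE_zero] at this

theorem EE_le (s : ℝ) (hs : 0 ≤ s) : EE s ≤ s := by
  have := nonneg_of_deriv (fun s => s - EE s) (fun s => 1 - Real.exp (-s ^ 2))
    (fun x => (hasDerivAt_id x).sub (EE_deriv x)) (by simp [EE_zero])
    (fun x _ => by
      have : Real.exp (-x ^ 2) ≤ 1 := Real.exp_le_one_iff.2 (by nlinarith [sq_nonneg x])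
      linarith) s hs
  linarith

theorem gauss_deriv (s : ℝ) : HasDerivAt (fun s : ℝ => Real.exp (-s ^ 2)) (-(2 * s) * Real.exp (-s ^ 2)) s := by
  have h1 : HasDerivAt (fun s : ℝ => - s ^ 2) (-(2 * s)) s := by
    refine ((hasDerivAt_pow 2 s).fun_neg).congr_deriv ?_
    simp
  exact h1.exp.congr_deriv (by ring)

theorem R_nonneg (s : ℝ) (hs : 0 ≤ s) :
    0 ≤ EE s * (4 * s ^ 4 - 4 * s ^ 2 + 3) - Real.exp (-s ^ 2) * (3 * s - 2 * s ^ 3) := by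
  have hP : ∀ s : ℝ, 0 < 4 * s ^ 4 - 4 * s ^ 2 + 3 := fun s => by nlinarith [sq_nonneg (2 * s ^ 2 - 1)]
  have key := nonneg_of_deriv
    (fun s => EE s - Real.exp (-s ^ 2) * (3 * s - 2 * s ^ 3) / (4 * s ^ 4 - 4 * s ^ 2 + 3))
    (fun s => 32 * s ^ 4 * Real.exp (-s ^ 2) / (4 * s ^ 4 - 4 * s ^ 2 + 3) ^ 2)
    (fun x => by
      have h1 : HasDerivAt (fun s : ℝ => 3 * s - 2 * s ^ 3) (3 - 6 * x ^ 2) x := by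
        refine (((hasDerivAt_id x).const_mul 3).fun_sub ((hasDerivAt_pow 3 x).const_mul 2)).congr_deriv ?_
        norm_num; ring
      have h2 : HasDerivAt (fun s : ℝ => 4 * s ^ 4 - 4 * s ^ 2 + 3) (16 * x ^ 3 - 8 * x) x := by
        refine ((((hasDerivAt_pow 4 x).const_mul 4).fun_sub ((hasDerivAt_pow 2 x).const_mul 4)).add_const 3).congr_deriv ?_
        norm_num; ring
      have := (EE_deriv x).fun_sub (((gauss_deriv x).fun_mul h1).fun_div h2 (hP x).ne')
      refine this.congr_deriv ?_
      have hne := pow_ne_zero 2 (hP x).ne'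
      rw [eq_div_iff hne, sub_mul, div_mul_cancel₀ _ hne]
      ring)
    (by simp [EE_zero]) (fun x _ => by have := hP x; positivity) s hs
  have := mul_nonneg key (hP s).le
  rw [sub_mul, div_mul_cancel₀ _ (hP s).ne'] at this
  exact this

theorem Q_nonneg (s : ℝ) (hs : 0 ≤ s) :
    0 ≤ 2 * EE s ^ 2 - (1 + 2 * s ^ 2) * s * Real.exp (-s ^ 2) * EE s - s ^ 2 * Real.exp (-s ^ 2) ^ 2 := by
  refine nonneg_of_deriv
    (fun s => 2 * EE s ^ 2 - (1 + 2 * s ^ 2) * s * Real.exp (-s ^ 2) * EE s - s ^ 2 * Real.exp (-s ^ 2) ^ 2)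
    (fun s => Real.exp (-s ^ 2) * (EE s * (4 * s ^ 4 - 4 * s ^ 2 + 3) - Real.exp (-s ^ 2) * (3 * s - 2 * s ^ 3)))
    (fun x => ?_) (by simp [EE_zero]) (fun x hx => mul_nonneg (Real.exp_pos _).le (R_nonneg x hx)) s hs
  have h1 : HasDerivAt (fun s : ℝ => (1 + 2 * s ^ 2) * s) (1 + 6 * x ^ 2) x := by
    have : (fun s : ℝ => (1 + 2 * s ^ 2) * s) = fun s => s + 2 * s ^ 3 := by ext; ring
    rw [this]
    refine ((hasDerivAt_id x).fun_add ((hasDerivAt_pow 3 x).const_mul 2)).congr_deriv ?_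
    norm_num; ring
  have := ((((EE_deriv x).fun_pow 2).const_mul 2).fun_sub ((h1.fun_mul (gauss_deriv x)).fun_mul (EE_deriv x))).fun_sub
    ((hasDerivAt_pow 2 x).fun_mul ((gauss_deriv x).fun_pow 2))
  refine this.congr_deriv ?_
  norm_num; ring

theorem psi_anti : AntitoneOn (fun s => (EE s - s * Real.exp (-s ^ 2)) / (s ^ 2 * EE s)) (Ioi 0) := by
  have hd : ∀ x ∈ Ioi (0:ℝ), HasDerivAt (fun s => (EE s - s * Real.exp (-s ^ 2)) / (s ^ 2 * EE s))
      (-(x * (2 * EE x ^ 2 - (1 + 2 * x ^ 2) * x * Real.exp (-x ^ 2) * EE x - x ^ 2 * Real.exp (-x ^ 2) ^ 2)) /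
        (x ^ 2 * EE x) ^ 2) x := by
    intro x hx
    have hx : 0 < x := hx
    have hE := EE_pos x hx
    have := ((EE_deriv x).fun_sub ((hasDerivAt_id x).fun_mul (gauss_deriv x))).fun_div
      ((hasDerivAt_pow 2 x).fun_mul (EE_deriv x)) (by positivity)
    refine this.congr_deriv ?_
    congr 1
    norm_num; ring
  apply antitoneOn_of_deriv_nonpos (convex_Ioi 0)
  · exact fun x hx => (hd x hx).continuousAt.continuousWithinAt
  · intro x hx
    rw [interior_Ioi] at hx
    exact (hd x hx).differentiableAt.differentiableWithinAt
  · intro x hx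
    rw [interior_Ioi] at hx
    rw [(hd x hx).deriv]
    have hx : 0 < x := hx
    have := mul_nonneg hx.le (Q_nonneg x hx.le)
    apply div_nonpos_of_nonpos_of_nonneg
    · linarith
    · positivity

theorem mu1_eq (x : ℝ) : mu1 x = 2 / Real.sqrt Real.pi * EE (x / 2) := rfl

noncomputable def dmu (x : ℝ) : ℝ := 1 / Real.sqrt Real.pi * Real.exp (-(x / 2) ^ 2)

theorem mu1_deriv (x : ℝ) : HasDerivAt mu1 (dmu x) x := by
  have h := ((EE_deriv (x / 2)).comp x ((hasDerivAt_id x).div_const 2)).const_mul (2 / Real.sqrt Real.pi)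
  refine h.congr_deriv ?_
  unfold dmu; ring

theorem mu1_pos (x : ℝ) (hx : 0 < x) : 0 < mu1 x := by
  rw [mu1_eq]
  have := EE_pos (x / 2) (by linarith)
  have := Real.pi_pos
  positivity

theorem mu1_le (x : ℝ) (hx : 0 < x) : mu1 x ≤ kap * x := by
  rw [mu1_eq, kap]
  have h := EE_le (x / 2) (by linarith)
  have h2 : 0 < 1 / Real.sqrt Real.pi := by have := Real.pi_pos; positivity
  have := mul_le_mul_of_nonneg_left h h2.le
  have e : 2 / Real.sqrt Real.pi * EE (x / 2) = 2 * (1 / Real.sqrt Real.pi * EE (x / 2)) := by ring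
  rw [e]; linarith

theorem phi_anti : AntitoneOn (fun x => (mu1 x - x * dmu x) / (x ^ 2 * mu1 x)) (Ioi 0) := by
  have e : ∀ x, (mu1 x - x * dmu x) / (x ^ 2 * mu1 x) =
      1 / 4 * ((EE (x / 2) - x / 2 * Real.exp (-(x / 2) ^ 2)) / ((x / 2) ^ 2 * EE (x / 2))) := by
    intro x
    have hp : 0 < 2 / Real.sqrt Real.pi := by have := Real.pi_pos; positivity
    have e1 : mu1 x - x * dmu x = 2 / Real.sqrt Real.pi * (EE (x / 2) - x / 2 * Real.exp (-(x / 2) ^ 2)) := by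
      rw [mu1_eq, dmu]; ring
    have e2 : x ^ 2 * mu1 x = 2 / Real.sqrt Real.pi * (4 * ((x / 2) ^ 2 * EE (x / 2))) := by
      rw [mu1_eq]; ring
    rw [e1, e2, mul_div_mul_left _ _ hp.ne', mul_comm 4 _, ← div_div]; ring
  intro x hx y hy hxy
  have hx : 0 < x := hx
  have hy : 0 < y := hy
  simp only [e]
  have := psi_anti (show x / 2 ∈ Ioi 0 from half_pos hx) (show y / 2 ∈ Ioi 0 from half_pos hy) (by linarith : x / 2 ≤ y / 2)
  simp only at this
  linarith

theorem g_deriv (x : ℝ) (hx : 0 < x) : HasDerivAt (fun x => 2 * mu1 x / x) (-(2 * (mu1 x - x * dmu x) / x ^ 2)) x := by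
  refine (((mu1_deriv x).const_mul 2).fun_div (hasDerivAt_id x) hx.ne').congr_deriv ?_
  simp only [id]; ring

theorem g_lim : Tendsto (fun x => 2 * mu1 x / x) (𝓝[>] 0) (𝓝 (2 * kap)) := by
  have h := (hasDerivAt_iff_tendsto_slope.1 (mu1_deriv 0)).mono_left
    (nhdsWithin_mono _ (fun x (hx : 0 < x) => ne_of_gt hx) : 𝓝[>] (0:ℝ) ≤ _)
  have h2 := h.const_mul 2
  have e : dmu 0 = kap := by simp [dmu, kap]
  rw [e] at h2
  refine h2.congr fun x => ?_
  rw [slope_def_field, mu1_eq 0]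
  simp [EE_zero]; ring


theorem nr (n : ℕ) (hn : 4 ≤ n) : (4:ℝ) ≤ n := by exact_mod_cast hn

theorem eps_pos (n : ℕ) (hn : 4 ≤ n) : 0 < eps n := by
  have := nr n hn
  unfold eps; apply div_pos <;> linarith

theorem b_pos (n : ℕ) (hn : 4 ≤ n) : 0 < (n:ℝ) * eps n / 2 := by
  have := nr n hn
  have := eps_pos n hn
  positivity

theorem del_pos (n : ℕ) (hn : 4 ≤ n) : 0 < del n := by
  have := nr n hn
  unfold del; apply div_pos <;> linarith

theorem b_eq (n : ℕ) (hn : 4 ≤ n) : del n / 2 - eps n = (n:ℝ) * eps n / 2 := by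
  have := nr n hn
  have : (n:ℝ) - 1 ≠ 0 := by linarith
  unfold del eps; field_simp; ring

theorem xi0_sq (n : ℕ) (hn : 4 ≤ n) : (n:ℝ) * eps n / 2 * xi0 n ^ 2 = del n * (del n + 1) := by
  have hb := b_pos n hn
  have hd := del_pos n hn
  unfold xi0
  rw [Real.sq_sqrt (by positivity)]
  exact mul_div_cancel₀ _ hb.ne'

theorem xi0_A (n : ℕ) (hn : 4 ≤ n) : xi0 n ^ 2 / 2 ≤ 1 + 2 * del n := by
  have hb := b_pos n hn
  have h := xi0_sq n hn
  have h4 := nr n hn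
  have hn1 : 0 < (n:ℝ) - 1 := by linarith
  have : del n * (del n + 1) ≤ (n:ℝ) * eps n / 2 * (2 * (1 + 2 * del n)) := by
    have e : (n:ℝ) * eps n / 2 * (2 * (1 + 2 * del n)) - del n * (del n + 1) = (n ^ 2 - 2 * n - 2) / ((n:ℝ) - 1) ^ 2 := by
      unfold del eps; field_simp; ring
    have : 0 ≤ ((n:ℝ) ^ 2 - 2 * n - 2) / ((n:ℝ) - 1) ^ 2 := div_nonneg (by nlinarith) (sq_nonneg _)
    linarith
  rw [← h] at this
  have := le_of_mul_le_mul_left this hb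
  linarith

theorem g_pos (x : ℝ) (hx : 0 < x) : 0 < 2 * mu1 x / x := by
  have := mu1_pos x hx
  positivity

theorem H_pos (n : ℕ) (hn : 4 ≤ n) (x : ℝ) (hx : x ∈ Ioo 0 (xi0 n)) :
    0 < ((n : ℝ) * eps n / 2) / (2 * mu1 x / x) ^ n * (xi0 n ^ 2 - x ^ 2) := by
  have hb := b_pos n hn
  have hg := g_pos x hx.1
  have : x ^ 2 < xi0 n ^ 2 := pow_lt_pow_left₀ hx.2 hx.1.le (by norm_num)
  have : 0 < xi0 n ^ 2 - x ^ 2 := by linarith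
  positivity

theorem rpow_eps_pow (n : ℕ) (hn : 4 ≤ n) (a : ℝ) (ha : 0 ≤ a) : (a ^ eps n) ^ (n - 1) = a := by
  have e : eps n = ((n - 1 : ℕ) : ℝ)⁻¹ := by
    rw [eps, Nat.cast_sub (by omega), one_div]; simp
  rw [e]
  exact Real.rpow_inv_natCast_pow ha (by omega)

theorem c2_pow (n : ℕ) (hn : 4 ≤ n) (x : ℝ) (hx : x ∈ Ioo 0 (xi0 n)) :
    c2 n x ^ (n - 1) = ((n : ℝ) * eps n / 2) / (2 * mu1 x / x) ^ n * (xi0 n ^ 2 - x ^ 2) :=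
  rpow_eps_pow n hn _ (H_pos n hn x hx).le

theorem c2_pos (n : ℕ) (hn : 4 ≤ n) (x : ℝ) (hx : x ∈ Ioo 0 (xi0 n)) : 0 < c2 n x :=
  Real.rpow_pos_of_pos (H_pos n hn x hx) _

theorem G_c2 (n : ℕ) (hn : 4 ≤ n) (x : ℝ) (hx : x ∈ Ioo 0 (xi0 n)) :
    (2 * mu1 x / x) ^ n * c2 n x ^ (n - 1) = del n * (del n + 1) - (n : ℝ) * eps n / 2 * x ^ 2 := by
  have hg := g_pos x hx.1
  rw [c2_pow n hn x hx, ← xi0_sq n hn]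
  generalize 2 * mu1 x / x = g at hg ⊢
  field_simp

theorem lam_pos (n : ℕ) (hn : 4 ≤ n) : 0 < lam n := by
  have hd := del_pos n hn
  have : 0 < kap := by unfold kap; have := Real.pi_pos; positivity
  unfold lam; positivity

theorem lam_pow (n : ℕ) (hn : 4 ≤ n) : (2 * kap) ^ n * lam n ^ (n - 1) = del n * (del n + 1) := by
  have hd := del_pos n hn
  have : 0 < kap := by unfold kap; have := Real.pi_pos; positivity
  have h := rpow_eps_pow n hn (del n * (del n + 1) / (2 * kap) ^ n) (by positivity)
  have : lam n ^ (n - 1) = del n * (del n + 1) / (2 * kap) ^ n := h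
  rw [this]; field_simp

theorem c2_deriv (n : ℕ) (hn : 4 ≤ n) (x : ℝ) (hx : x ∈ Ioo 0 (xi0 n)) : ∃ p, 0 < p ∧ HasDerivAt (c2 n)
    (p * (n * (xi0 n ^ 2 - x ^ 2) * ((mu1 x - x * dmu x) / (x ^ 2 * mu1 x)) - 2)) x := by
  have hx0 := hx.1
  have hb := b_pos n hn
  have he := eps_pos n hn
  have hg := g_pos x hx.1
  have hmu := mu1_pos x hx.1
  have hH := H_pos n hn x hx
  have h4 := nr n hn
  have h1 : HasDerivAt (fun x => ((n : ℝ) * eps n / 2) / (2 * mu1 x / x) ^ n * (xi0 n ^ 2 - x ^ 2))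
      (((n : ℝ) * eps n / 2) / (2 * mu1 x / x) ^ n * x * (n * (xi0 n ^ 2 - x ^ 2) * ((mu1 x - x * dmu x) / (x ^ 2 * mu1 x)) - 2)) x := by
    have h2 := ((hasDerivAt_const x ((n : ℝ) * eps n / 2)).fun_div ((g_deriv x hx.1).fun_pow n) (by positivity)).fun_mul
      ((hasDerivAt_pow 2 x).const_sub (xi0 n ^ 2))
    refine h2.congr_deriv ?_
    have e : (2 * mu1 x / x) ^ n = (2 * mu1 x / x) ^ (n - 1) * (2 * mu1 x / x) := by
      rw [← pow_succ]; congr 1; omega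
    rw [e]
    have hq : 0 < (2 * mu1 x / x) ^ (n - 1) := by positivity
    generalize (2 * mu1 x / x) ^ (n - 1) = q at hq ⊢
    generalize (n:ℝ) * eps n / 2 = b at hb ⊢
    norm_num
    field_simp
    ring
  refine ⟨((n : ℝ) * eps n / 2) / (2 * mu1 x / x) ^ n * x * eps n *
    (((n : ℝ) * eps n / 2) / (2 * mu1 x / x) ^ n * (xi0 n ^ 2 - x ^ 2)) ^ (eps n - 1), ?_, ?_⟩
  · have := Real.rpow_pos_of_pos hH (eps n - 1)
    positivity
  · exact (h1.rpow_const (Or.inl hH.ne')).congr_deriv (by ring)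

theorem hchar_use (n : ℕ) (hn : 4 ≤ n) (ξm : ℝ) (hξm : ξm ∈ Ioo 0 (xi0 n))
    (hchar : deriv (om1 n) ξm * c2 n ξm ^ (n - 1) + deriv (om2 n) ξm = 0) :
    n * (xi0 n ^ 2 - ξm ^ 2) * ((mu1 ξm - ξm * dmu ξm) / (ξm ^ 2 * mu1 ξm)) = 2 := by
  have hx := hξm.1
  have hb := b_pos n hn
  have hg := g_pos ξm hx
  have hmu := mu1_pos ξm hx
  have h1 : HasDerivAt (om1 n) _ ξm := ((g_deriv ξm hx).fun_pow n).fun_div (hasDerivAt_pow 2 ξm) (by positivity)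
  have h2 : HasDerivAt (om2 n) _ ξm := ((hasDerivAt_const ξm (del n * (del n + 1))).fun_div (hasDerivAt_pow 2 ξm) (by positivity)).const_sub
    ((n : ℝ) * eps n / 2)
  rw [h1.deriv, h2.deriv, c2_pow n hn ξm hξm, ← xi0_sq n hn] at hchar
  have e : (2 * mu1 ξm / ξm) ^ n = (2 * mu1 ξm / ξm) ^ (n - 1) * (2 * mu1 ξm / ξm) := by
    rw [← pow_succ]; congr 1; omega
  rw [e] at hchar
  have hq : 0 < (2 * mu1 ξm / ξm) ^ (n - 1) := by positivity
  generalize (2 * mu1 ξm / ξm) ^ (n - 1) = q at hq hchar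
  generalize (n:ℝ) * eps n / 2 = b at hb hchar
  norm_num at hchar
  field_simp at hchar ⊢
  have hz : b * (n * (xi0 n ^ 2 - ξm ^ 2) * (mu1 ξm - ξm * dmu ξm) - 2 * ξm ^ 2 * mu1 ξm) = 0 := by
    linear_combination -hchar
  rcases mul_eq_zero.1 hz with h | h
  · exact absurd h hb.ne'
  · linarith

/-- Last-zero argument. -/
theorem lemG (R : ℝ → ℝ) (s0 t0 : ℝ) (hst : s0 < t0)
    (hc : ∀ s ∈ Ico s0 t0, ContinuousAt R s)
    (hev : ∀ᶠ t in 𝓝[<] t0, R t < 0)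
    (hD : ∀ s ∈ Ico s0 t0, R s = 0 → (∀ t ∈ Ioo s t0, R t < 0) → ∃ d, 0 < d ∧ HasDerivAt R d s) :
    R s0 < 0 := by
  by_contra hcon
  push Not at hcon
  obtain ⟨l, hl, hl2⟩ := (mem_nhdsLT_iff_exists_Ioo_subset).1 hev
  set b := max ((s0 + t0) / 2) ((l + t0) / 2) with hb
  have hl' : l < t0 := hl
  have hbt : b < t0 := by rw [hb]; apply max_lt <;> linarith
  have hbs : s0 < b := lt_of_lt_of_le (by linarith) (le_max_left _ _)
  have hbl : l < b := lt_of_lt_of_le (by linarith) (le_max_right _ _)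
  have hbneg : ∀ t ∈ Ico b t0, R t < 0 := fun t ht => hl2 ⟨lt_of_lt_of_le hbl ht.1, ht.2⟩
  have hcon2 : ContinuousOn R (Icc s0 b) := fun s hs =>
    (hc s ⟨hs.1, lt_of_le_of_lt hs.2 hbt⟩).continuousWithinAt
  have hcomp : IsCompact (Icc s0 b ∩ R ⁻¹' Ici 0) :=
    (isCompact_Icc).of_isClosed_subset (hcon2.preimage_isClosed_of_isClosed isClosed_Icc isClosed_Ici)
      inter_subset_left
  obtain ⟨s, hs⟩ := hcomp.exists_isGreatest ⟨s0, ⟨le_refl _, hbs.le⟩, hcon⟩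
  obtain ⟨⟨hsI, hsR⟩, hsmax⟩ := hs
  have hsR : 0 ≤ R s := hsR
  have hsb : s < b := by
    rcases hsI.2.lt_or_eq with h | h
    · exact h
    · have := hbneg b ⟨le_refl _, hbt⟩
      rw [← h] at this; linarith
  have hneg : ∀ t ∈ Ioo s t0, R t < 0 := by
    intro t ht
    rcases le_or_gt b t with h | h
    · exact hbneg t ⟨h, ht.2⟩
    · by_contra h2
      push Not at h2
      have := hsmax ⟨⟨hsI.1.trans ht.1.le, h.le⟩, h2⟩
      linarith [ht.1]
  have hst0 : s ∈ Ico s0 t0 := ⟨hsI.1, hsb.trans hbt⟩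
  have hevr : ∀ᶠ t in 𝓝[>] s, t ∈ Ioo s t0 := Ioo_mem_nhdsGT hst0.2
  have hs0 : R s = 0 := by
    apply le_antisymm _ hsR
    apply le_of_tendsto ((hc s hst0).tendsto.mono_left nhdsWithin_le_nhds : Tendsto R (𝓝[>] s) _)
    filter_upwards [hevr] with t ht using (hneg t ht).le
  obtain ⟨d, hd, hder⟩ := hD s hst0 hs0 hneg
  have h1 : Tendsto (slope R s) (𝓝[>] s) (𝓝 d) :=
    (hasDerivAt_iff_tendsto_slope.1 hder).mono_left (nhdsWithin_mono _ (fun x hx => ne_of_gt hx))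
  have h2 := h1.eventually (lt_mem_nhds hd)
  obtain ⟨t, ht, ht2⟩ := (h2.and hevr).exists
  have := hneg t ht2
  rw [slope_def_field, hs0] at ht
  have h3 : (R t - 0) / (t - s) < 0 := div_neg_of_neg_of_pos (by linarith) (by linarith [ht2.1])
  linarith

/-- positive left derivative gives smaller values on the left -/
theorem left_lt (R : ℝ → ℝ) (t0 d : ℝ) (hd : 0 < d) (h : HasDerivWithinAt R d (Iio t0) t0) :
    ∀ᶠ t in 𝓝[<] t0, R t < R t0 := by
  have h1 : Tendsto (slope R t0) (𝓝[<] t0) (𝓝 d) := by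
    have := hasDerivWithinAt_iff_tendsto_slope.1 h
    simpa using this
  filter_upwards [h1.eventually (lt_mem_nhds hd), self_mem_nhdsWithin] with t ht ht2
  have ht2 : t < t0 := ht2
  rw [slope_def_field] at ht
  by_contra hc
  push Not at hc
  have : (R t - R t0) / (t - t0) ≤ 0 := div_nonpos_of_nonneg_of_nonpos (by linarith) (by linarith)
  linarith

theorem int_bound {E : Type*} [NormedAddCommGroup E] [NormedSpace ℝ E]
    (h : ℝ → E) (C K t0 t : ℝ) (hK : 0 < K)
    (hh : ∀ s, ‖h s‖ ≤ C * Real.exp (2 * K * |s - t0|)) :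
    ‖∫ s in t0..t, h s‖ ≤ C * Real.exp (2 * K * |t - t0|) / (2 * K) := by
  have hC : 0 ≤ C := by
    have := (norm_nonneg _).trans (hh t0)
    simpa using this
  rcases le_total t0 t with ht | ht
  · have h1 : ‖∫ s in t0..t, h s‖ ≤ ∫ s in t0..t, C * Real.exp (2 * K * (s - t0)) := by
      apply intervalIntegral.norm_integral_le_of_norm_le ht
      · refine Filter.Eventually.of_forall fun s hs => ?_
        have := hh s
        rwa [abs_of_pos (by linarith [hs.1])] at this
      · apply Continuous.intervalIntegrable; fun_prop
    have h2 : ∫ s in t0..t, C * Real.exp (2 * K * (s - t0)) =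
        C * Real.exp (2 * K * (t - t0)) / (2 * K) - C * Real.exp (2 * K * (t0 - t0)) / (2 * K) := by
      apply intervalIntegral.integral_eq_sub_of_hasDerivAt
      · intro x _
        have := ((((hasDerivAt_id x).sub_const t0).const_mul (2 * K)).exp.const_mul C).div_const (2 * K)
        refine this.congr_deriv ?_
        simp only [id]; field_simp
      · apply Continuous.intervalIntegrable; fun_prop
    rw [h2] at h1
    rw [abs_of_nonneg (by linarith)]
    have : 0 ≤ C * Real.exp (2 * K * (t0 - t0)) / (2 * K) := by positivity
    linarith
  · rw [intervalIntegral.integral_symm, norm_neg]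
    have h1 : ‖∫ s in t..t0, h s‖ ≤ ∫ s in t..t0, C * Real.exp (2 * K * (t0 - s)) := by
      apply intervalIntegral.norm_integral_le_of_norm_le ht
      · refine Filter.Eventually.of_forall fun s hs => ?_
        have := hh s
        rwa [abs_of_nonpos (by linarith [hs.2]), neg_sub] at this
      · apply Continuous.intervalIntegrable; fun_prop
    have h2 : ∫ s in t..t0, C * Real.exp (2 * K * (t0 - s)) =
        -(C * Real.exp (2 * K * (t0 - t0)) / (2 * K)) - -(C * Real.exp (2 * K * (t0 - t)) / (2 * K)) := by
      apply intervalIntegral.integral_eq_sub_of_hasDerivAt (f := fun s => -(C * Real.exp (2 * K * (t0 - s)) / (2 * K)))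
      · intro x _
        have := (((((hasDerivAt_id x).const_sub t0).const_mul (2 * K)).exp.const_mul C).div_const (2 * K)).neg
        refine this.congr_deriv ?_
        simp only [id]; field_simp
      · apply Continuous.intervalIntegrable; fun_prop
    rw [h2] at h1
    rw [abs_of_nonpos (by linarith), neg_sub]
    have : 0 ≤ C * Real.exp (2 * K * (t0 - t0)) / (2 * K) := by positivity
    linarith

theorem global_ode {E : Type*} [NormedAddCommGroup E] [NormedSpace ℝ E] [CompleteSpace E]
    (v : ℝ → E → E) (hv : Continuous (Function.uncurry v)) (K B : ℝ) (hK0 : 0 < K)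
    (hK : ∀ t x y, ‖v t x - v t y‖ ≤ K * ‖x - y‖) (hB : ∀ t, ‖v t 0‖ ≤ B) (t0 : ℝ) (y0 : E) :
    ∃ y : ℝ → E, y t0 = y0 ∧ ∀ t, HasDerivAt y (v t (y t)) t := by
  have hB0 : 0 ≤ B := (norm_nonneg _).trans (hB 0)
  set e : ℝ → ℝ := fun t => Real.exp (2 * K * |t - t0|) with he
  have hec : Continuous e := by rw [he]; fun_prop
  have hepos : ∀ t, 0 < e t := fun t => Real.exp_pos _
  have he1 : ∀ t, 1 ≤ e t := fun t => Real.one_le_exp (by positivity)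
  have hcont : ∀ u : BoundedContinuousFunction ℝ E, Continuous fun s => v s (e s • u s) := fun u =>
    hv.comp (continuous_id.prodMk (hec.smul u.continuous))
  have hbd : ∀ (u : BoundedContinuousFunction ℝ E) s, ‖v s (e s • u s)‖ ≤ (B + K * ‖u‖) * e s := by
    intro u s
    have h1 := hK s (e s • u s) 0
    have h2 : ‖v s (e s • u s)‖ ≤ ‖v s (e s • u s) - v s 0‖ + ‖v s 0‖ := by
      simpa using norm_add_le (v s (e s • u s) - v s 0) (v s 0)
    have h3 : ‖e s • u s‖ ≤ e s * ‖u‖ := by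
      rw [norm_smul, Real.norm_of_nonneg (hepos s).le]
      exact mul_le_mul_of_nonneg_left (u.norm_coe_le_norm s) (hepos s).le
    rw [sub_zero] at h1
    have h4 := hB s
    have h5 := he1 s
    nlinarith [mul_le_mul_of_nonneg_left h3 hK0.le]
  let T : BoundedContinuousFunction ℝ E → BoundedContinuousFunction ℝ E := fun u =>
    BoundedContinuousFunction.ofNormedAddCommGroup
      (fun t => (e t)⁻¹ • (y0 + ∫ s in t0..t, v s (e s • u s)))
      ((hec.inv₀ fun t => (hepos t).ne').smul
        (continuous_const.add (intervalIntegral.continuous_primitive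
          (fun a b => (hcont u).intervalIntegrable a b) t0)))
      (‖y0‖ + (B + K * ‖u‖) / (2 * K))
      (by
        intro t
        rw [norm_smul, norm_inv, Real.norm_of_nonneg (hepos t).le, inv_mul_le_iff₀ (hepos t)]
        have h1 := int_bound (fun s => v s (e s • u s)) (B + K * ‖u‖) K t0 t hK0 (hbd u)
        have h2 := norm_add_le y0 (∫ s in t0..t, v s (e s • u s))
        have h3 : ‖y0‖ ≤ e t * ‖y0‖ := le_mul_of_one_le_left (norm_nonneg _) (he1 t)
        have h4 : (B + K * ‖u‖) * Real.exp (2 * K * |t - t0|) / (2 * K) = e t * ((B + K * ‖u‖) / (2 * K)) := by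
          simp only [he]; ring
        rw [h4] at h1
        linarith)
  have hT : ContractingWith (1/2) T := by
    refine ⟨by norm_num, LipschitzWith.of_dist_le_mul fun u w => ?_⟩
    rw [BoundedContinuousFunction.dist_le (by positivity)]
    intro t
    have h0 : T u t - T w t = (e t)⁻¹ • ∫ s in t0..t, (v s (e s • u s) - v s (e s • w s)) := by
      rw [intervalIntegral.integral_sub ((hcont u).intervalIntegrable _ _) ((hcont w).intervalIntegrable _ _)]
      simp only [T, BoundedContinuousFunction.coe_ofNormedAddCommGroup, ← smul_sub]
      congr 1; abel
    rw [dist_eq_norm, h0, norm_smul, norm_inv, Real.norm_of_nonneg (hepos t).le, inv_mul_le_iff₀ (hepos t)]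
    have h1 := int_bound (fun s => v s (e s • u s) - v s (e s • w s)) (K * dist u w) K t0 t hK0 (by
      intro s
      refine (hK s _ _).trans ?_
      rw [← smul_sub, norm_smul, Real.norm_of_nonneg (hepos s).le]
      have := BoundedContinuousFunction.dist_coe_le_dist (f := u) (g := w) s
      rw [dist_eq_norm] at this
      have h7 := mul_le_mul_of_nonneg_left this (hepos s).le
      have h8 := mul_le_mul_of_nonneg_left h7 hK0.le
      calc _ ≤ _ := h8
        _ = _ := by simp only [he]; ring)
    refine h1.trans (le_of_eq ?_)
    simp only [he]; push_cast; field_simp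
  obtain ⟨u, hu⟩ : ∃ u, T u = u := ⟨_, hT.fixedPoint_isFixedPt⟩
  have hy : ∀ t, e t • u t = y0 + ∫ s in t0..t, v s (e s • u s) := by
    intro t
    conv_lhs => rw [← hu]
    simp only [T, BoundedContinuousFunction.coe_ofNormedAddCommGroup]
    rw [smul_smul, mul_inv_cancel₀ (hepos t).ne', one_smul]
  refine ⟨fun t => e t • u t, (hy t0).trans (by simp), fun t => ?_⟩
  have h1 : HasDerivAt (fun t => y0 + ∫ s in t0..t, v s (e s • u s)) (v t (e t • u t)) t :=
    (intervalIntegral.integral_hasDerivAt_right ((hcont u).intervalIntegrable _ _)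
      ((hcont u).stronglyMeasurableAtFilter _ _) (hcont u).continuousAt).const_add y0
  exact h1.congr_of_eventuallyEq (Eventually.of_forall hy)

theorem gron {E : Type*} [NormedAddCommGroup E] [NormedSpace ℝ E]
    (v : ℝ → E → E) (K : ℝ) (hK0 : 0 < K)
    (hK : ∀ t x y, ‖v t x - v t y‖ ≤ K * ‖x - y‖) (y z : ℝ → E)
    (hy : ∀ t, HasDerivAt y (v t (y t)) t) (hz : ∀ t, HasDerivAt z (v t (z t)) t)
    (s t : ℝ) (hts : t ≤ s) : dist (y t) (z t) ≤ dist (y s) (z s) * Real.exp (K * (s - t)) := by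
  have key := dist_le_of_trajectories_ODE (v := fun t x => - v (-t) x) (K := K.toNNReal)
    (f := fun t => y (-t)) (g := fun t => z (-t)) (a := -s) (b := -t) (δ := dist (y s) (z s)) (fun τ => by
      apply LipschitzWith.of_dist_le_mul
      intro a b
      rw [dist_neg_neg, dist_eq_norm, dist_eq_norm, Real.coe_toNNReal _ hK0.le]
      exact hK _ _ _)
    (fun τ _ => by
      have := (hy (-τ)).scomp τ (hasDerivAt_neg τ)
      exact this.continuousAt.continuousWithinAt)
    (fun τ _ => by
      have := (hy (-τ)).scomp τ (hasDerivAt_neg τ)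
      simp only [neg_smul, one_smul] at this
      exact this.hasDerivWithinAt)
    (fun τ _ => by
      have := (hz (-τ)).scomp τ (hasDerivAt_neg τ)
      exact this.continuousAt.continuousWithinAt)
    (fun τ _ => by
      have := (hz (-τ)).scomp τ (hasDerivAt_neg τ)
      simp only [neg_smul, one_smul] at this
      exact this.hasDerivWithinAt)
    (by simp) (-t) ⟨by linarith, le_refl _⟩
  rw [Real.coe_toNNReal _ hK0.le] at key
  simpa [neg_add_eq_sub, sub_eq_add_neg, add_comm] using key

theorem right_gt (R : ℝ → ℝ) (t0 d : ℝ) (hd : 0 < d) (h : HasDerivAt R d t0) :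
    ∀ᶠ t in 𝓝[>] t0, R t0 < R t := by
  have h1 : Tendsto (slope R t0) (𝓝[>] t0) (𝓝 d) :=
    (hasDerivAt_iff_tendsto_slope.1 h).mono_left (nhdsWithin_mono _ (fun x hx => ne_of_gt hx))
  filter_upwards [h1.eventually (lt_mem_nhds hd), self_mem_nhdsWithin] with t ht ht2
  have ht2 : t0 < t := ht2
  rw [slope_def_field] at ht
  by_contra hc
  push Not at hc
  have : (R t - R t0) / (t - t0) ≤ 0 := div_nonpos_of_nonpos_of_nonneg (by linarith) (by linarith)
  linarith

structure Dat where
  k : ℕ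
  hk : 1 ≤ k
  D : ℝ
  b : ℝ
  l : ℝ
  M : ℝ
  G0 : ℝ
  xm : ℝ
  A : ℝ
  G : ℝ → ℝ
  C : ℝ → ℝ
  hl : 0 < l
  hxm : 0 < xm
  hb : 0 ≤ b
  hA : xm ^ 2 / 2 ≤ A
  hG : ContinuousOn G (Ioc 0 xm)
  hGpos : ∀ x ∈ Ioc 0 xm, 0 < G x
  hGle : ∀ x ∈ Ioc 0 xm, G x ≤ G0
  hGlim : Tendsto G (𝓝[>] 0) (𝓝 G0)
  hlG : G0 * l ^ k = D
  hC : ∀ x ∈ Ioc 0 xm, G x * C x ^ k = D - b * x ^ 2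
  hCl : ∀ x ∈ Ioc 0 xm, l < C x
  hCM : ∀ x ∈ Ioc 0 xm, C x < M
  hCd : ∀ x ∈ Ioo 0 xm, ∃ d, 0 < d ∧ HasDerivAt C d x
  hCmono : StrictMonoOn C (Ioc 0 xm)

namespace Dat
variable (d : Dat)

noncomputable def X (t : ℝ) : ℝ := min (Real.exp t) d.xm

noncomputable def fld (t m : ℝ) : ℝ :=
  max d.l (min m d.M) * (d.G (d.X t) * max d.l (min m d.M) ^ d.k - (d.D - d.b * d.X t ^ 2))

noncomputable def vec (t : ℝ) (y : ℝ × ℝ) : ℝ × ℝ :=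
  (y.2, (d.A - d.X t ^ 2 / 2) * y.2 + d.fld t y.1)

theorem X_mem (t : ℝ) : d.X t ∈ Ioc 0 d.xm :=
  ⟨lt_min (Real.exp_pos _) d.hxm, min_le_right _ _⟩

theorem X_eq {t : ℝ} (ht : t ≤ Real.log d.xm) : d.X t = Real.exp t := by
  apply min_eq_left
  rwa [← Real.le_log_iff_exp_le d.hxm]

theorem X_cont : Continuous d.X := by unfold X; fun_prop

theorem GX_cont : Continuous fun t => d.G (d.X t) :=
  d.hG.comp_continuous d.X_cont d.X_mem

theorem lM : d.l < d.M :=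
  (d.hCl d.xm ⟨d.hxm, le_refl _⟩).trans (d.hCM d.xm ⟨d.hxm, le_refl _⟩)

theorem fld_cont : Continuous (Function.uncurry d.fld) := by
  have h1 := d.X_cont
  have h2 := d.GX_cont
  unfold fld
  have : Continuous fun p : ℝ × ℝ => max d.l (min p.2 d.M) * (d.G (d.X p.1) * max d.l (min p.2 d.M) ^ d.k - (d.D - d.b * d.X p.1 ^ 2)) := by
    have h3 : Continuous fun p : ℝ × ℝ => d.G (d.X p.1) := h2.comp continuous_fst
    have h4 : Continuous fun p : ℝ × ℝ => d.X p.1 := h1.comp continuous_fst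
    fun_prop
  exact this

theorem vec_cont : Continuous (Function.uncurry d.vec) := by
  have h4 : Continuous fun p : ℝ × (ℝ × ℝ) => d.X p.1 := d.X_cont.comp continuous_fst
  have h5 : Continuous fun p : ℝ × (ℝ × ℝ) => d.fld p.1 p.2.1 :=
    d.fld_cont.comp (continuous_fst.prodMk (continuous_fst.comp continuous_snd))
  have : Continuous fun p : ℝ × (ℝ × ℝ) => (p.2.2, (d.A - d.X p.1 ^ 2 / 2) * p.2.2 + d.fld p.1 p.2.1) := by
    fun_prop
  exact this

theorem fld_form (t m : ℝ) : d.fld t m = max d.l (min m d.M) *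
    (d.G (d.X t) * (max d.l (min m d.M) ^ d.k - d.C (d.X t) ^ d.k)) := by
  unfold fld
  rw [← d.hC _ (d.X_mem t)]; ring

theorem fld_eq (t m : ℝ) (h1 : d.l ≤ m) (h2 : m ≤ d.M) :
    d.fld t m = m * (d.G (d.X t) * m ^ d.k - (d.D - d.b * d.X t ^ 2)) := by
  unfold fld
  rw [min_eq_left h2, max_eq_right h1]

theorem fld_pos (t m : ℝ) (h : d.C (d.X t) < m) : 0 < d.fld t m := by
  rw [fld_form]
  have hw : d.C (d.X t) < max d.l (min m d.M) :=
    lt_max_of_lt_right (lt_min h (d.hCM _ (d.X_mem t)))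
  have hC : 0 < d.C (d.X t) := d.hl.trans (d.hCl _ (d.X_mem t))
  have := pow_lt_pow_left₀ hw hC.le (Nat.one_le_iff_ne_zero.1 d.hk)
  exact mul_pos (hC.trans hw) (mul_pos (d.hGpos _ (d.X_mem t)) (by linarith))

theorem fld_neg (t m : ℝ) (h : m < d.C (d.X t)) : d.fld t m < 0 := by
  rw [fld_form]
  have hw : max d.l (min m d.M) < d.C (d.X t) :=
    max_lt (d.hCl _ (d.X_mem t)) (lt_of_le_of_lt (min_le_left _ _) h)
  have h0 : 0 < max d.l (min m d.M) := lt_of_lt_of_le d.hl (le_max_left _ _)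
  have := pow_lt_pow_left₀ hw h0.le (Nat.one_le_iff_ne_zero.1 d.hk)
  exact mul_neg_of_pos_of_neg h0 (mul_neg_of_pos_of_neg (d.hGpos _ (d.X_mem t)) (by linarith))

noncomputable def Lf : ℝ := d.G0 * ((d.k + 1 : ℕ) * d.M ^ d.k) + (|d.D| + d.b * d.xm ^ 2)

theorem coef_bd (t : ℝ) : |d.D - d.b * d.X t ^ 2| ≤ |d.D| + d.b * d.xm ^ 2 := by
  have h1 := d.X_mem t
  have h2 : d.X t ^ 2 ≤ d.xm ^ 2 := pow_le_pow_left₀ h1.1.le h1.2 2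
  have h3 := mul_le_mul_of_nonneg_left h2 d.hb
  have h4 : 0 ≤ d.b * d.X t ^ 2 := mul_nonneg d.hb (sq_nonneg _)
  have := abs_sub d.D (d.b * d.X t ^ 2)
  rw [abs_of_nonneg h4] at this
  linarith

theorem G0_pos : 0 < d.G0 :=
  (d.hGpos d.xm ⟨d.hxm, le_refl _⟩).trans_le (d.hGle d.xm ⟨d.hxm, le_refl _⟩)

theorem Lf_nonneg : 0 ≤ d.Lf := by
  have := d.G0_pos
  have := d.lM
  have := d.hl
  have := d.hb
  have h : 0 < d.M := by linarith
  unfold Lf; positivity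

theorem fld_lip (t m1 m2 : ℝ) : |d.fld t m1 - d.fld t m2| ≤ d.Lf * |m1 - m2| := by
  unfold fld
  set w1 := max d.l (min m1 d.M)
  set w2 := max d.l (min m2 d.M)
  have hM : 0 < d.M := d.hl.trans d.lM
  have hw : |w1 - w2| ≤ |m1 - m2| := by
    refine (abs_max_sub_max_le_max d.l (min m1 d.M) d.l (min m2 d.M)).trans ?_
    rw [sub_self, abs_zero]
    refine max_le (abs_nonneg _) ?_
    refine (abs_min_sub_min_le_max m1 d.M m2 d.M).trans ?_
    rw [sub_self, abs_zero]
    exact max_le le_rfl (abs_nonneg _)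
  have hwb : ∀ m, |max d.l (min m d.M)| ≤ d.M := by
    intro m
    rw [abs_of_nonneg (d.hl.le.trans (le_max_left _ _))]
    exact max_le d.lM.le (min_le_right _ _)
  have h1 : |w1 ^ (d.k + 1) - w2 ^ (d.k + 1)| ≤ ((d.k + 1 : ℕ) * d.M ^ d.k) * |w1 - w2| := by
    have h := abs_pow_sub_pow_le w1 w2 (d.k + 1)
    have h2 : max |w1| |w2| ^ (d.k + 1 - 1) ≤ d.M ^ d.k := by
      rw [Nat.add_sub_cancel]
      exact pow_le_pow_left₀ (le_max_of_le_left (abs_nonneg _)) (max_le (hwb _) (hwb _)) _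
    refine h.trans ?_
    have h3 : 0 ≤ |w1 - w2| * ((d.k + 1 : ℕ) : ℝ) := by positivity
    have := mul_le_mul_of_nonneg_left h2 h3
    linarith
  have hG := d.hGpos _ (d.X_mem t)
  have hG2 := d.hGle _ (d.X_mem t)
  have heq : w1 * (d.G (d.X t) * w1 ^ d.k - (d.D - d.b * d.X t ^ 2)) -
      w2 * (d.G (d.X t) * w2 ^ d.k - (d.D - d.b * d.X t ^ 2)) =
      d.G (d.X t) * (w1 ^ (d.k + 1) - w2 ^ (d.k + 1)) - (d.D - d.b * d.X t ^ 2) * (w1 - w2) := by ring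
  rw [heq]
  refine (abs_sub _ _).trans ?_
  rw [abs_mul, abs_mul, abs_of_pos hG]
  have h5 : d.G (d.X t) * |w1 ^ (d.k + 1) - w2 ^ (d.k + 1)| ≤ d.G0 * (((d.k + 1 : ℕ) * d.M ^ d.k) * |w1 - w2|) :=
    mul_le_mul hG2 h1 (abs_nonneg _) d.G0_pos.le
  have h6 := mul_le_mul_of_nonneg_right (d.coef_bd t) (abs_nonneg (w1 - w2))
  have h7 := mul_le_mul_of_nonneg_left hw d.Lf_nonneg
  unfold Lf at h7 ⊢
  linarith

noncomputable def K : ℝ := 1 + |d.A| + d.xm ^ 2 + d.Lf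

theorem K_pos : 0 < d.K := by
  have := d.Lf_nonneg
  unfold K; positivity

theorem vec_lip (t : ℝ) (y z : ℝ × ℝ) : ‖d.vec t y - d.vec t z‖ ≤ d.K * ‖y - z‖ := by
  have hL := d.Lf_nonneg
  have h1 : |y.1 - z.1| ≤ ‖y - z‖ := norm_fst_le (y - z)
  have h2 : |y.2 - z.2| ≤ ‖y - z‖ := norm_snd_le (y - z)
  have hn := norm_nonneg (y - z)
  have hx := d.X_mem t
  have hx2 : d.X t ^ 2 ≤ d.xm ^ 2 := pow_le_pow_left₀ hx.1.le hx.2 2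
  rw [Prod.norm_def]
  apply max_le
  · change |y.2 - z.2| ≤ _
    refine h2.trans ?_
    apply le_mul_of_one_le_left hn
    unfold K; nlinarith [abs_nonneg d.A, sq_nonneg d.xm]
  · change |(d.A - d.X t ^ 2 / 2) * y.2 + d.fld t y.1 - ((d.A - d.X t ^ 2 / 2) * z.2 + d.fld t z.1)| ≤ _
    have heq : (d.A - d.X t ^ 2 / 2) * y.2 + d.fld t y.1 - ((d.A - d.X t ^ 2 / 2) * z.2 + d.fld t z.1)
      = (d.A - d.X t ^ 2 / 2) * (y.2 - z.2) + (d.fld t y.1 - d.fld t z.1) := by ring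
    rw [heq]
    refine (abs_add_le _ _).trans ?_
    rw [abs_mul]
    have h3 := d.fld_lip t y.1 z.1
    have h4 : |d.A - d.X t ^ 2 / 2| ≤ |d.A| + d.xm ^ 2 := by
      refine (abs_sub _ _).trans ?_
      rw [abs_of_nonneg (by positivity : 0 ≤ d.X t ^ 2 / 2)]
      nlinarith [sq_nonneg (d.X t)]
    have h5 : |d.A - d.X t ^ 2 / 2| * |y.2 - z.2| ≤ (|d.A| + d.xm ^ 2) * ‖y - z‖ :=
      mul_le_mul h4 h2 (abs_nonneg _) (by positivity)
    have h6 := mul_le_mul_of_nonneg_left h1 hL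
    unfold K
    linarith

theorem vec_zero (t : ℝ) : ‖d.vec t 0‖ ≤ d.M * (d.G0 * d.M ^ d.k + (|d.D| + d.b * d.xm ^ 2)) := by
  have hM : 0 < d.M := d.hl.trans d.lM
  have hG0 := d.G0_pos
  have hb := d.hb
  rw [Prod.norm_def]
  apply max_le
  · change ‖(0:ℝ)‖ ≤ _
    rw [norm_zero]; positivity
  · have : (d.vec t 0).2 = d.fld t 0 := by simp [vec]
    rw [this]
    unfold fld
    have hm : max d.l (min 0 d.M) = d.l := max_eq_left ((min_le_left _ _).trans d.hl.le)
    rw [hm, Real.norm_eq_abs, abs_mul, abs_of_pos d.hl]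
    have hG := d.hGpos _ (d.X_mem t)
    have hG2 := d.hGle _ (d.X_mem t)
    have hl := d.hl
    have h1 : d.l ^ d.k ≤ d.M ^ d.k := pow_le_pow_left₀ hl.le d.lM.le _
    have h2 : |d.G (d.X t) * d.l ^ d.k| ≤ d.G0 * d.M ^ d.k := by
      rw [abs_of_pos (by positivity)]
      exact mul_le_mul hG2 h1 (by positivity) hG0.le
    have h3 := d.coef_bd t
    apply mul_le_mul d.lM.le ((abs_sub _ _).trans (by linarith)) (abs_nonneg _) hM.le

noncomputable def sol (t0 c : ℝ) : ℝ → ℝ × ℝ :=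
  Classical.choose (global_ode d.vec d.vec_cont d.K _ d.K_pos d.vec_lip d.vec_zero t0 (c, 0))

theorem sol_init (t0 c : ℝ) : d.sol t0 c t0 = (c, 0) :=
  (Classical.choose_spec (global_ode d.vec d.vec_cont d.K _ d.K_pos d.vec_lip d.vec_zero t0 (c, 0))).1

theorem sol_deriv (t0 c t : ℝ) : HasDerivAt (d.sol t0 c) (d.vec t (d.sol t0 c t)) t :=
  (Classical.choose_spec (global_ode d.vec d.vec_cont d.K _ d.K_pos d.vec_lip d.vec_zero t0 (c, 0))).2 t

/-- being a solution of the planar system -/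
def IsSol (m r : ℝ → ℝ) : Prop :=
  (∀ t, HasDerivAt m (r t) t) ∧
  ∀ t, HasDerivAt r ((d.A - d.X t ^ 2 / 2) * r t + d.fld t (m t)) t

theorem sol_isSol (t0 c : ℝ) : d.IsSol (fun t => (d.sol t0 c t).1) (fun t => (d.sol t0 c t).2) :=
  ⟨fun t => ((ContinuousLinearMap.fst ℝ ℝ ℝ).hasFDerivAt.comp_hasDerivAt t (d.sol_deriv t0 c t)),
   fun t => ((ContinuousLinearMap.snd ℝ ℝ ℝ).hasFDerivAt.comp_hasDerivAt t (d.sol_deriv t0 c t))⟩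

theorem sol_tendsto (t0 c t : ℝ) (ht : t < t0) :
    Tendsto (fun p : ℝ × ℝ => d.sol p.1 p.2 t) (𝓝 (t0, c)) (𝓝 (d.sol t0 c t)) := by
  rw [tendsto_iff_dist_tendsto_zero]
  have hc : Continuous (d.sol t0 c) :=
    continuous_iff_continuousAt.2 fun t => (d.sol_deriv t0 c t).continuousAt
  have h0 : Tendsto (fun p : ℝ × ℝ => dist ((p.2, 0) : ℝ × ℝ) (d.sol t0 c p.1) * Real.exp (d.K * (p.1 - t)))
      (𝓝 (t0, c)) (𝓝 0) := by
    have : Continuous (fun p : ℝ × ℝ => dist ((p.2, 0) : ℝ × ℝ) (d.sol t0 c p.1) * Real.exp (d.K * (p.1 - t))) := by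
      fun_prop
    have h := this.tendsto (t0, c)
    simpa [d.sol_init] using h
  refine squeeze_zero' (Eventually.of_forall fun _ => dist_nonneg) ?_ h0
  have : ∀ᶠ p : ℝ × ℝ in 𝓝 (t0, c), t < p.1 :=
    (continuous_fst.tendsto (t0, c)).eventually (lt_mem_nhds ht)
  filter_upwards [this] with p hp
  have := gron d.vec d.K d.K_pos d.vec_lip (d.sol p.1 p.2) (d.sol t0 c) (d.sol_deriv _ _) (d.sol_deriv _ _)
    p.1 t hp.le
  rwa [d.sol_init p.1 p.2] at this

theorem expmem {t : ℝ} (ht : t < Real.log d.xm) : Real.exp t ∈ Ioo 0 d.xm :=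
  ⟨Real.exp_pos _, (Real.lt_log_iff_exp_lt d.hxm).1 ht⟩

variable {d}

theorem IsSol.r_cont {m r : ℝ → ℝ} (h : d.IsSol m r) : Continuous r :=
  continuous_iff_continuousAt.2 fun t => (h.2 t).continuousAt

theorem IsSol.m_cont {m r : ℝ → ℝ} (h : d.IsSol m r) : Continuous m :=
  continuous_iff_continuousAt.2 fun t => (h.1 t).continuousAt

theorem IsSol.mono {m r : ℝ → ℝ} (h : d.IsSol m r) (s t : ℝ) (hst : s < t)
    (hr : ∀ x ∈ Ioo s t, 0 < r x) : m s < m t := by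
  have := strictMonoOn_of_deriv_pos (convex_Icc s t) h.m_cont.continuousOn (by
    intro x hx
    rw [interior_Icc] at hx
    rw [(h.1 x).deriv]
    exact hr x hx)
  exact this ⟨le_refl _, hst.le⟩ ⟨hst.le, le_refl _⟩ hst

theorem IsSol.anti {m r : ℝ → ℝ} (h : d.IsSol m r) (s t : ℝ) (hst : s < t)
    (hr : ∀ x ∈ Ioo s t, r x < 0) : m t < m s := by
  have := strictAntiOn_of_deriv_neg (convex_Icc s t) h.m_cont.continuousOn (by
    intro x hx
    rw [interior_Icc] at hx
    rw [(h.1 x).deriv]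
    exact hr x hx)
  exact this ⟨le_refl _, hst.le⟩ ⟨hst.le, le_refl _⟩ hst

theorem IsSol.up {m r : ℝ → ℝ} (h : d.IsSol m r) (t1 : ℝ) (ht1 : t1 < Real.log d.xm)
    (hm : d.C (Real.exp t1) ≤ m t1) (hr : r t1 ≤ 0) (t : ℝ) (ht : t < t1) : r t < 0 := by
  apply lemG r t t1 ht (fun s _ => h.r_cont.continuousAt)
  · rcases hr.lt_or_eq with hr | hr
    · exact (h.r_cont.continuousAt.eventually (gt_mem_nhds hr)).filter_mono nhdsWithin_le_nhds
    · obtain ⟨c, hc, hcd⟩ := d.hCd _ (d.expmem ht1)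
      have hg : HasDerivAt (fun t => d.C (Real.exp t) - m t) (c * Real.exp t1 - r t1) t1 :=
        (hcd.comp t1 (Real.hasDerivAt_exp t1)).sub (h.1 t1)
      have h1 := left_lt _ t1 _ (by rw [hr, sub_zero]; exact mul_pos hc (Real.exp_pos _)) hg.hasDerivWithinAt
      obtain ⟨a, ha, ha2⟩ := (mem_nhdsLT_iff_exists_Ioo_subset).1 h1
      have hIoo : Ioo a t1 ∈ 𝓝[<] t1 := Ioo_mem_nhdsLT ha
      filter_upwards [hIoo] with s hs
      by_contra hcon
      push Not at hcon
      obtain ⟨τ, hτ, hτmax⟩ := isCompact_Icc.exists_isMaxOn (nonempty_Icc.2 hs.2.le) (h.r_cont.continuousOn (s := Icc s t1))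
      obtain ⟨σ, hσ, hσmax⟩ : ∃ σ ∈ Ico s t1, ∀ x ∈ Icc s t1, r x ≤ r σ := by
        rcases hτ.2.lt_or_eq with h3 | h3
        · exact ⟨τ, ⟨hτ.1, h3⟩, fun x hx => hτmax hx⟩
        · refine ⟨s, ⟨le_refl _, hs.2⟩, fun x hx => ?_⟩
          have : r x ≤ r τ := hτmax hx
          rw [h3, hr] at this; linarith
      have hσ0 : 0 ≤ r σ := hcon.trans (hσmax s ⟨le_refl _, hs.2.le⟩)
      have hσC : d.C (Real.exp σ) < m σ := by
        have : d.C (Real.exp σ) - m σ < d.C (Real.exp t1) - m t1 := ha2 ⟨lt_of_lt_of_le hs.1 hσ.1, hσ.2⟩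
        linarith
      have hf : 0 < d.fld σ (m σ) := d.fld_pos σ _ (by rwa [d.X_eq (hσ.2.trans ht1).le])
      have hco : 0 ≤ d.A - d.X σ ^ 2 / 2 := by
        have hx := d.X_mem σ
        have hx2 : d.X σ ^ 2 ≤ d.xm ^ 2 := pow_le_pow_left₀ hx.1.le hx.2 2
        linarith [d.hA]
      have h4 := right_gt r σ _ (by have := mul_nonneg hco hσ0; linarith) (h.2 σ)
      obtain ⟨x, hx, hx2⟩ := (h4.and (Ioo_mem_nhdsGT hσ.2)).exists
      have := hσmax x ⟨hσ.1.trans hx2.1.le, hx2.2.le⟩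
      linarith
  · intro s hs hs0 hneg
    refine ⟨_, ?_, h.2 s⟩
    rw [hs0, mul_zero, zero_add]
    apply d.fld_pos
    rw [d.X_eq (hs.2.trans ht1).le]
    have h1 := h.anti s t1 hs.2 hneg
    have h2 := d.hCmono (Ioo_subset_Ioc_self (d.expmem (hs.2.trans ht1))) (Ioo_subset_Ioc_self (d.expmem ht1))
      (Real.exp_lt_exp.2 hs.2)
    linarith

theorem IsSol.pos_aux {m r : ℝ → ℝ} (h : d.IsSol m r) (t1 : ℝ)
    (hm : m t1 < d.C (d.X t1)) (hr : 0 ≤ r t1)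
    (hz : ∀ s < t1, r s = 0 → (∀ x ∈ Ioo s t1, 0 < r x) → m s < d.C (d.X s))
    (t : ℝ) (ht : t < t1) : 0 < r t := by
  have key : (fun t => - r t) t < 0 := by
    apply lemG (fun t => - r t) t t1 ht (fun s _ => h.r_cont.neg.continuousAt)
    · rcases hr.lt_or_eq with hr | hr
      · filter_upwards [(h.r_cont.continuousAt.eventually (lt_mem_nhds hr)).filter_mono nhdsWithin_le_nhds] with x hx
        linarith
      · have hd := (h.2 t1).fun_neg
        have hf := d.fld_neg t1 _ hm
        have := left_lt _ t1 _ (by rw [← hr, mul_zero, zero_add]; linarith) hd.hasDerivWithinAt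
        filter_upwards [this] with x hx
        linarith
    · intro s hs hs0 hneg
      have hs0 : r s = 0 := by simpa using hs0
      refine ⟨_, ?_, (h.2 s).fun_neg⟩
      rw [hs0, mul_zero, zero_add]
      have := d.fld_neg s _ (hz s hs.2 hs0 (fun x hx => by have := hneg x hx; linarith))
      linarith
  simpa using key

theorem IsSol.down {m r : ℝ → ℝ} (h : d.IsSol m r) (t1 : ℝ)
    (hm : m t1 ≤ d.l) (hr : 0 ≤ r t1) (t : ℝ) (ht : t < t1) : 0 < r t := by
  apply h.pos_aux t1 (hm.trans_lt (d.hCl _ (d.X_mem _))) hr _ t ht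
  intro s hs _ hp
  exact (h.mono s t1 hs hp).trans (hm.trans_lt (d.hCl _ (d.X_mem _)))

def PA (d : Dat) (m r : ℝ → ℝ) (t0 : ℝ) : Prop := ∃ t < t0, m t < d.l ∧ 0 < r t
def PB (d : Dat) (m r : ℝ → ℝ) (t0 : ℝ) : Prop := ∃ t < t0, d.C (Real.exp t) < m t ∧ r t < 0

theorem IsSol.PA_of {m r : ℝ → ℝ} (h : d.IsSol m r) (t0 : ℝ) (hr : r t0 = 0) (hm : m t0 ≤ d.l) :
    PA d m r t0 := by
  have h1 := h.down t0 hm hr.ge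
  exact ⟨t0 - 1, by linarith, (h.mono _ t0 (by linarith) fun x hx => h1 x hx.2).trans_le hm, h1 _ (by linarith)⟩

theorem IsSol.PB_of {m r : ℝ → ℝ} (h : d.IsSol m r) (t0 : ℝ) (ht0 : t0 < Real.log d.xm) (hr : r t0 = 0)
    (hm : d.C (Real.exp t0) ≤ m t0) : PB d m r t0 := by
  have h1 := h.up t0 ht0 hm hr.le
  refine ⟨t0 - 1, by linarith, ?_, h1 _ (by linarith)⟩
  have h2 := h.anti (t0 - 1) t0 (by linarith) fun x hx => h1 x hx.2
  have h3 := d.hCmono (Ioo_subset_Ioc_self (d.expmem (by linarith : t0 - 1 < _))) (Ioo_subset_Ioc_self (d.expmem ht0))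
      (Real.exp_lt_exp.2 (by linarith))
  linarith

theorem IsSol.disj {m r : ℝ → ℝ} (h : d.IsSol m r) (t0 : ℝ) (ht0 : t0 < Real.log d.xm)
    (ha : PA d m r t0) (hb : PB d m r t0) : False := by
  obtain ⟨t1, ht1, h1, h2⟩ := ha
  obtain ⟨t2, ht2, h3, h4⟩ := hb
  have h5 := h.down t1 h1.le h2.le (min t1 t2 - 1) (by linarith [min_le_left t1 t2])
  have h6 := h.up t2 (ht2.trans ht0) h3.le h4.le (min t1 t2 - 1) (by linarith [min_le_right t1 t2])
  linarith

theorem IsSol.neither {m r : ℝ → ℝ} (h : d.IsSol m r) (t0 : ℝ) (ht0 : t0 < Real.log d.xm) (hr : r t0 = 0)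
    (ha : ¬ PA d m r t0) (hb : ¬ PB d m r t0) :
    d.l < m t0 ∧ m t0 < d.C (Real.exp t0) ∧ ∀ t < t0, 0 < r t ∧ d.l ≤ m t ∧ m t < m t0 := by
  have h1 : d.l < m t0 := by
    by_contra hc; push Not at hc; exact ha (h.PA_of t0 hr hc)
  have h2 : m t0 < d.C (Real.exp t0) := by
    by_contra hc; push Not at hc; exact hb (h.PB_of t0 ht0 hr hc)
  have h3 : ∀ t < t0, 0 < r t := by
    apply h.pos_aux t0 (by rwa [d.X_eq ht0.le]) hr.ge
    intro s hs hs0 _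
    by_contra hc
    push Not at hc
    rw [d.X_eq (hs.trans ht0).le] at hc
    obtain ⟨t, ht, ht2⟩ := h.PB_of s (hs.trans ht0) hs0 hc
    exact hb ⟨t, ht.trans hs, ht2⟩
  refine ⟨h1, h2, fun t ht => ⟨h3 t ht, ?_, h.mono t t0 ht fun x hx => h3 x hx.2⟩⟩
  by_contra hc
  push Not at hc
  exact ha ⟨t, ht, hc, h3 t ht⟩

theorem IsSol.limit {m r : ℝ → ℝ} (h : d.IsSol m r) (t0 : ℝ) (ht0 : t0 < Real.log d.xm)
    (hM : m t0 < d.C (Real.exp t0))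
    (hp : ∀ t < t0, 0 < r t ∧ d.l ≤ m t ∧ m t < m t0) : Tendsto m atBot (𝓝 d.l) := by
  have hl := d.hl
  have hsmall : ∀ ε > 0, ∃ t < t0, m t < d.l + ε := by
    intro ε hε
    by_contra hcon
    push Not at hcon
    set κ := d.G0 * (d.l + ε) ^ d.k - d.D with hκ
    have hκ0 : 0 < κ := by
      rw [hκ, ← d.hlG]
      have := pow_lt_pow_left₀ (by linarith : d.l < d.l + ε) hl.le (Nat.one_le_iff_ne_zero.1 d.hk)
      have := mul_lt_mul_of_pos_left this d.G0_pos
      linarith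
    have hexp : Tendsto Real.exp atBot (𝓝[>] 0) := Real.tendsto_exp_atBot_nhdsGT
    have h1 : Tendsto (fun t => d.G (Real.exp t) * (d.l + ε) ^ d.k - d.D) atBot (𝓝 κ) :=
      ((d.hGlim.comp hexp).mul_const _).sub_const _
    have h2 := h1.eventually (lt_mem_nhds (by linarith : κ / 2 < κ))
    obtain ⟨T', hT'⟩ := eventually_atBot.1 h2
    set T := min T' (t0 - 1) with hT
    have hTt0 : T < t0 := by linarith [min_le_right T' (t0 - 1)]
    set q := d.l * (κ / 2) with hq
    have hq0 : 0 < q := by positivity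
    have hder : ∀ t ≤ T, q ≤ (d.A - d.X t ^ 2 / 2) * r t + d.fld t (m t) := by
      intro t ht
      have htt0 := lt_of_le_of_lt ht hTt0
      obtain ⟨hr, hml, hmM⟩ := hp t htt0
      have hx := d.X_mem t
      have hco : 0 ≤ d.A - d.X t ^ 2 / 2 := by
        have hx2 : d.X t ^ 2 ≤ d.xm ^ 2 := pow_le_pow_left₀ hx.1.le hx.2 2
        linarith [d.hA]
      have hMM := d.hCM _ (Ioo_subset_Ioc_self (d.expmem ht0))
      rw [d.fld_eq t (m t) hml (by linarith)]
      have h3 := hT' t (ht.trans (min_le_left _ _))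
      have h4 := d.hGpos _ hx
      rw [d.X_eq (htt0.trans ht0).le] at h4 ⊢
      have h5 := pow_le_pow_left₀ (by linarith) (hcon t htt0) d.k
      have h6 := mul_le_mul_of_nonneg_left h5 h4.le
      have h7 : 0 ≤ d.b * Real.exp t ^ 2 := mul_nonneg d.hb (sq_nonneg _)
      have h8 : κ / 2 ≤ d.G (Real.exp t) * m t ^ d.k - (d.D - d.b * Real.exp t ^ 2) := by linarith
      have h9 := mul_le_mul hml h8 (by positivity) (by linarith)
      rw [d.X_eq (htt0.trans ht0).le] at hco
      have := mul_nonneg hco hr.le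
      linarith
    have hrT := (hp T hTt0).1
    set t := T - r T / q - 1 with htdef
    have htT : t < T := by
      have : 0 < r T / q := by positivity
      linarith
    obtain ⟨c, hc, hc2⟩ := exists_hasDerivAt_eq_slope r _ htT h.r_cont.continuousOn (fun x _ => h.2 x)
    have h10 := hder c hc.2.le
    rw [hc2, le_div_iff₀ (by linarith)] at h10
    have h11 : q * (T - t) = r T + q := by rw [htdef]; field_simp; ring
    have := (hp t (htT.trans hTt0)).1
    linarith
  rw [Metric.tendsto_nhds]
  intro ε hε
  obtain ⟨t1, ht1, hlt⟩ := hsmall ε hε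
  filter_upwards [eventually_lt_atBot t1] with t ht
  have h1 := h.mono t t1 ht fun x hx => (hp x (hx.2.trans ht1)).1
  have h2 := (hp t (ht.trans ht1)).2.1
  rw [Real.dist_eq, abs_of_nonneg (by linarith)]
  linarith

def AA (d : Dat) (t0 c : ℝ) : Prop := PA d (fun t => (d.sol t0 c t).1) (fun t => (d.sol t0 c t).2) t0
def BB (d : Dat) (t0 c : ℝ) : Prop := PB d (fun t => (d.sol t0 c t).1) (fun t => (d.sol t0 c t).2) t0

theorem AA_open (t0 c : ℝ) (h : AA d t0 c) : ∀ᶠ p : ℝ × ℝ in 𝓝 (t0, c), AA d p.1 p.2 := by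
  obtain ⟨t, ht, h1, h2⟩ := h
  have hs := d.sol_tendsto t0 c t ht
  have ht' : ∀ᶠ p : ℝ × ℝ in 𝓝 (t0, c), t < p.1 :=
    (continuous_fst.tendsto (t0, c)).eventually (lt_mem_nhds ht)
  have e1 := ((continuous_fst.tendsto _).comp hs).eventually (gt_mem_nhds h1)
  have e2 := ((continuous_snd.tendsto _).comp hs).eventually (lt_mem_nhds h2)
  filter_upwards [ht', e1, e2] with p hp hp1 hp2
  exact ⟨t, hp, hp1, hp2⟩

theorem BB_open (t0 c : ℝ) (h : BB d t0 c) : ∀ᶠ p : ℝ × ℝ in 𝓝 (t0, c), BB d p.1 p.2 := by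
  obtain ⟨t, ht, h1, h2⟩ := h
  have hs := d.sol_tendsto t0 c t ht
  have ht' : ∀ᶠ p : ℝ × ℝ in 𝓝 (t0, c), t < p.1 :=
    (continuous_fst.tendsto (t0, c)).eventually (lt_mem_nhds ht)
  have e1 := ((continuous_fst.tendsto _).comp hs).eventually (lt_mem_nhds h1)
  have e2 := ((continuous_snd.tendsto _).comp hs).eventually (gt_mem_nhds h2)
  filter_upwards [ht', e1, e2] with p hp hp1 hp2
  exact ⟨t, hp, hp1, hp2⟩

theorem AA_isOpen (t0 : ℝ) : IsOpen {c | AA d t0 c} := by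
  rw [isOpen_iff_mem_nhds]
  intro c hc
  exact ((Continuous.prodMk_right t0).tendsto c).eventually (AA_open t0 c hc)

theorem BB_isOpen (t0 : ℝ) : IsOpen {c | BB d t0 c} := by
  rw [isOpen_iff_mem_nhds]
  intro c hc
  exact ((Continuous.prodMk_right t0).tendsto c).eventually (BB_open t0 c hc)

theorem AA_low (t0 : ℝ) : AA d t0 d.l :=
  (d.sol_isSol t0 d.l).PA_of t0 (by simp [d.sol_init]) (by simp [d.sol_init])

theorem BB_high (t0 c : ℝ) (ht0 : t0 < Real.log d.xm) (hc : d.C (Real.exp t0) ≤ c) : BB d t0 c :=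
  (d.sol_isSol t0 c).PB_of t0 ht0 (by simp [d.sol_init]) (by simpa [d.sol_init] using hc)

theorem AB_disj (t0 c : ℝ) (ht0 : t0 < Real.log d.xm) (ha : AA d t0 c) (hb : BB d t0 c) : False :=
  (d.sol_isSol t0 c).disj t0 ht0 ha hb

theorem exists_neither (t0 : ℝ) (ht0 : t0 < Real.log d.xm) : ∃ c, ¬ AA d t0 c ∧ ¬ BB d t0 c := by
  by_contra hcon
  push Not at hcon
  have := isPreconnected_univ (α := ℝ) _ _ (AA_isOpen (d := d) t0) (BB_isOpen (d := d) t0)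
    (fun c _ => by by_cases h : AA d t0 c; exacts [Or.inl h, Or.inr (hcon c h)])
    ⟨d.l, trivial, AA_low t0⟩ ⟨_, trivial, BB_high t0 _ ht0 le_rfl⟩
  obtain ⟨c, -, h1, h2⟩ := this
  exact AB_disj t0 c ht0 h1 h2

theorem main (d : Dat) (huniq : ∀ t0 < Real.log d.xm, ∀ c c', ¬ AA d t0 c → ¬ BB d t0 c → ¬ AA d t0 c' → ¬ BB d t0 c' → c ≤ c') :
    ∃ c0 : ℝ → ℝ, ContinuousOn c0 (Iio (Real.log d.xm)) ∧
      ∀ t0 < Real.log d.xm, ¬ AA d t0 (c0 t0) ∧ ¬ BB d t0 (c0 t0) := by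
  classical
  choose! c0 hc0 using fun t0 (ht : t0 < Real.log d.xm) => exists_neither (d := d) t0 ht
  refine ⟨c0, ?_, hc0⟩
  have hne : ∀ t0 < Real.log d.xm, ∀ c, c ≠ c0 t0 → AA d t0 c ∨ BB d t0 c := by
    intro t0 ht c hc
    by_contra hcon
    push Not at hcon
    exact hc (le_antisymm (huniq t0 ht _ _ hcon.1 hcon.2 (hc0 t0 ht).1 (hc0 t0 ht).2)
      (huniq t0 ht _ _ (hc0 t0 ht).1 (hc0 t0 ht).2 hcon.1 hcon.2))
  have hbet : ∀ t0 < Real.log d.xm, d.l < c0 t0 ∧ c0 t0 < d.C (Real.exp t0) := by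
    intro t0 ht
    have := (d.sol_isSol t0 (c0 t0)).neither t0 ht (by simp [d.sol_init]) (hc0 t0 ht).1 (hc0 t0 ht).2
    simp only [d.sol_init] at this
    exact ⟨this.1, this.2.1⟩
  have hlow : ∀ t0 < Real.log d.xm, ∀ c < c0 t0, AA d t0 c := by
    intro t0 ht c hc
    by_contra hcon
    have hB := (hne t0 ht c hc.ne).resolve_left hcon
    obtain ⟨x, -, h1, h2⟩ := isPreconnected_Iio (a := c0 t0) _ _ (AA_isOpen (d := d) t0) (BB_isOpen (d := d) t0)
      (fun x hx => hne t0 ht x (ne_of_lt hx)) ⟨d.l, (hbet t0 ht).1, AA_low t0⟩ ⟨c, hc, hB⟩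
    exact AB_disj t0 x ht h1 h2
  have hhigh : ∀ t0 < Real.log d.xm, ∀ c > c0 t0, BB d t0 c := by
    intro t0 ht c hc
    by_contra hcon
    have hB := (hne t0 ht c hc.ne').resolve_right hcon
    obtain ⟨x, -, h1, h2⟩ := isPreconnected_Ioi (a := c0 t0) _ _ (AA_isOpen (d := d) t0) (BB_isOpen (d := d) t0)
      (fun x hx => hne t0 ht x (ne_of_gt hx)) ⟨c, hc, hB⟩ ⟨_, (hbet t0 ht).2, BB_high t0 _ ht le_rfl⟩
    exact AB_disj t0 x ht h1 h2
  intro t0 ht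
  have ht : t0 < Real.log d.xm := ht
  apply ContinuousAt.continuousWithinAt
  rw [ContinuousAt, tendsto_order]
  have hev : ∀ᶠ s in 𝓝 t0, s < Real.log d.xm := gt_mem_nhds ht
  constructor
  · intro a ha
    filter_upwards [hev, ((Continuous.prodMk_left a).tendsto t0).eventually (AA_open t0 a (hlow t0 ht a ha))] with s hs hA
    by_contra hcon
    push Not at hcon
    rcases hcon.lt_or_eq with h | h
    · exact AB_disj s a hs hA (hhigh s hs a h)
    · exact (hc0 s hs).1 (h ▸ hA)
  · intro a ha
    filter_upwards [hev, ((Continuous.prodMk_left a).tendsto t0).eventually (BB_open t0 a (hhigh t0 ht a ha))] with s hs hB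
    by_contra hcon
    push Not at hcon
    rcases hcon.lt_or_eq with h | h
    · exact AB_disj s a hs (hlow s hs a h) hB
    · exact (hc0 s hs).2 (h ▸ hB)

end Dat

theorem c2_deriv_pos (n : ℕ) (hn : 4 ≤ n) (ξm : ℝ) (hξm : ξm ∈ Ioo 0 (xi0 n))
    (hchar : deriv (om1 n) ξm * c2 n ξm ^ (n - 1) + deriv (om2 n) ξm = 0)
    (x : ℝ) (hx : x ∈ Ioo 0 ξm) : ∃ d, 0 < d ∧ HasDerivAt (c2 n) d x := by
  have hx' : x ∈ Ioo 0 (xi0 n) := ⟨hx.1, hx.2.trans hξm.2⟩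
  obtain ⟨p, hp, hd⟩ := c2_deriv n hn x hx'
  refine ⟨_, mul_pos hp ?_, hd⟩
  have h1 := hchar_use n hn ξm hξm hchar
  have h2 := phi_anti (show x ∈ Ioi 0 from hx.1) (show ξm ∈ Ioi 0 from hξm.1) hx.2.le
  simp only at h2
  have h4 := nr n hn
  have hA : x ^ 2 < ξm ^ 2 := pow_lt_pow_left₀ hx.2 hx.1.le (by norm_num)
  have hB : ξm ^ 2 < xi0 n ^ 2 := pow_lt_pow_left₀ hξm.2 hξm.1.le (by norm_num)
  have hphi : 0 < (mu1 ξm - ξm * dmu ξm) / (ξm ^ 2 * mu1 ξm) := by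
    by_contra hc
    push Not at hc
    have : n * (xi0 n ^ 2 - ξm ^ 2) * ((mu1 ξm - ξm * dmu ξm) / (ξm ^ 2 * mu1 ξm)) ≤ 0 :=
      mul_nonpos_of_nonneg_of_nonpos (mul_nonneg (by linarith) (by linarith)) hc
    linarith
  have h5 : n * (xi0 n ^ 2 - ξm ^ 2) * ((mu1 ξm - ξm * dmu ξm) / (ξm ^ 2 * mu1 ξm)) <
      n * (xi0 n ^ 2 - x ^ 2) * ((mu1 ξm - ξm * dmu ξm) / (ξm ^ 2 * mu1 ξm)) := by
    apply mul_lt_mul_of_pos_right _ hphi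
    apply mul_lt_mul_of_pos_left _ (by linarith)
    linarith
  have h6 : n * (xi0 n ^ 2 - x ^ 2) * ((mu1 ξm - ξm * dmu ξm) / (ξm ^ 2 * mu1 ξm)) ≤
      n * (xi0 n ^ 2 - x ^ 2) * ((mu1 x - x * dmu x) / (x ^ 2 * mu1 x)) := by
    apply mul_le_mul_of_nonneg_left h2
    apply mul_nonneg <;> linarith
  linarith

theorem c2_mono (n : ℕ) (hn : 4 ≤ n) (ξm : ℝ) (hξm : ξm ∈ Ioo 0 (xi0 n))
    (hchar : deriv (om1 n) ξm * c2 n ξm ^ (n - 1) + deriv (om2 n) ξm = 0) :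
    StrictMonoOn (c2 n) (Ioc 0 ξm) := by
  apply strictMonoOn_of_deriv_pos (convex_Ioc 0 ξm)
  · intro x hx
    obtain ⟨p, -, hd⟩ := c2_deriv n hn x ⟨hx.1, hx.2.trans_lt hξm.2⟩
    exact hd.continuousAt.continuousWithinAt
  · intro x hx
    rw [interior_Ioc] at hx
    obtain ⟨p, hp, hd⟩ := c2_deriv_pos n hn ξm hξm hchar x hx
    rwa [hd.deriv]

theorem lam_lt_c2 (n : ℕ) (hn : 4 ≤ n) (ξm : ℝ) (hξm : ξm ∈ Ioo 0 (xi0 n))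
    (hchar : deriv (om1 n) ξm * c2 n ξm ^ (n - 1) + deriv (om2 n) ξm = 0)
    (x : ℝ) (hx : x ∈ Ioc 0 ξm) : lam n < c2 n x := by
  have hmono := c2_mono n hn ξm hξm hchar
  have hx0 := hx.1
  have hk : 0 < kap := by unfold kap; have := Real.pi_pos; positivity
  have hy : x / 2 ∈ Ioc 0 ξm := ⟨by linarith, by linarith [hx.2]⟩
  have hy' : x / 2 ∈ Ioo 0 (xi0 n) := ⟨hy.1, hy.2.trans_lt hξm.2⟩
  have hlt := hmono hy hx (by linarith)
  have hle : lam n ≤ c2 n (x / 2) := by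
    have hpow : lam n ^ (n - 1) ≤ c2 n (x / 2) ^ (n - 1) := by
      have hlim : Tendsto (fun y => ((n : ℝ) * eps n / 2) / (2 * mu1 y / y) ^ n * (xi0 n ^ 2 - y ^ 2)) (𝓝[>] 0)
          (𝓝 (((n : ℝ) * eps n / 2) / (2 * kap) ^ n * (xi0 n ^ 2 - 0 ^ 2))) := by
        apply Tendsto.mul
        · exact tendsto_const_nhds.div (g_lim.pow n) (by positivity)
        · have : Continuous fun y : ℝ => xi0 n ^ 2 - y ^ 2 := by fun_prop
          exact (this.tendsto 0).mono_left nhdsWithin_le_nhds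
      have e : ((n : ℝ) * eps n / 2) / (2 * kap) ^ n * (xi0 n ^ 2 - 0 ^ 2) = lam n ^ (n - 1) := by
        have h1 := lam_pow n hn
        rw [← xi0_sq n hn] at h1
        have h2 : (2 * kap) ^ n ≠ 0 := by positivity
        rw [div_mul_eq_mul_div, div_eq_iff h2]
        linarith
      rw [e] at hlim
      apply le_of_tendsto hlim
      filter_upwards [Ioo_mem_nhdsGT hy.1] with y hyy
      have hy2 : y ∈ Ioc 0 ξm := ⟨hyy.1, hyy.2.le.trans hy.2⟩
      have hy3 : y ∈ Ioo 0 (xi0 n) := ⟨hyy.1, hy2.2.trans_lt hξm.2⟩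
      rw [← c2_pow n hn y hy3]
      exact pow_le_pow_left₀ (c2_pos n hn y hy3).le (hmono hy2 hy hyy.2).le _
    exact le_of_pow_le_pow_left₀ (by omega) (c2_pos n hn _ hy').le hpow
  exact hle.trans_lt hlt

noncomputable def mkDat (n : ℕ) (hn : 4 ≤ n) (ξm : ℝ) (hξm : ξm ∈ Ioo 0 (xi0 n))
    (hchar : deriv (om1 n) ξm * c2 n ξm ^ (n - 1) + deriv (om2 n) ξm = 0) : Dat where
  k := n - 1
  hk := by omega
  D := del n * (del n + 1)
  b := (n : ℝ) * eps n / 2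
  l := lam n
  M := c2 n ξm + 1
  G0 := (2 * kap) ^ n
  xm := ξm
  A := 1 + 2 * del n
  G := fun x => (2 * mu1 x / x) ^ n
  C := c2 n
  hl := lam_pos n hn
  hxm := hξm.1
  hb := (b_pos n hn).le
  hA := by
    have := xi0_A n hn
    have : ξm ^ 2 < xi0 n ^ 2 := pow_lt_pow_left₀ hξm.2 hξm.1.le (by norm_num)
    linarith
  hG := fun x hx => ((g_deriv x hx.1).fun_pow n).continuousAt.continuousWithinAt
  hGpos := fun x hx => pow_pos (g_pos x hx.1) n
  hGle := fun x hx => by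
    apply pow_le_pow_left₀ (g_pos x hx.1).le
    have := mu1_le x hx.1
    rw [div_le_iff₀ hx.1]; linarith
  hGlim := g_lim.pow n
  hlG := lam_pow n hn
  hC := fun x hx => G_c2 n hn x ⟨hx.1, hx.2.trans_lt hξm.2⟩
  hCl := fun x hx => lam_lt_c2 n hn ξm hξm hchar x hx
  hCM := fun x hx => by
    have := (c2_mono n hn ξm hξm hchar).monotoneOn hx ⟨hξm.1, le_refl _⟩ hx.2
    linarith
  hCd := fun x hx => c2_deriv_pos n hn ξm hξm hchar x hx
  hCmono := c2_mono n hn ξm hξm hchar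

theorem shoot_le (n : ℕ) (hn : 4 ≤ n) (ξ : ℝ) (hξ : 0 < ξ) (ρ₁ ρ₂ : ℝ) (m₁ m₂ : ℝ → ℝ)
    (h₁ : IsShootSol n ξ ρ₁ m₁) (h₂ : IsShootSol n ξ ρ₂ m₂) : ρ₁ ≤ ρ₂ := by
  by_contra hlt
  push Not at hlt
  set S := Ioc (0:ℝ) ξ with hS
  have hud : UniqueDiffOn ℝ S := uniqueDiffOn_Ioc 0 ξ
  -- derivative facts for one solution
  have facts : ∀ ρ m, IsShootSol n ξ ρ m → ∀ x ∈ S,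
      HasDerivWithinAt m (derivWithin m S x) S x ∧
      HasDerivWithinAt (derivWithin m S) (derivWithin (derivWithin m S) S x) S x := by
    intro ρ m h x hx
    refine ⟨((h.1.differentiableOn (by norm_num)) x hx).hasDerivWithinAt, ?_⟩
    have : ContDiffOn ℝ 1 (derivWithin m S) S := h.1.derivWithin hud (by norm_num)
    exact ((this.differentiableOn (by norm_num)) x hx).hasDerivWithinAt
  set r₁ := derivWithin m₁ S
  set r₂ := derivWithin m₂ S
  obtain ⟨-, eq₁, hi₁, hz₁, hp₁, hl₁⟩ := id h₁
  obtain ⟨-, eq₂, hi₂, hz₂, hp₂, hl₂⟩ := id h₂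
  set R : ℝ → ℝ := fun x => r₁ x / m₁ x - r₂ x / m₂ x with hR
  set U : ℝ → ℝ := fun x => Real.log (m₁ x) - Real.log (m₂ x) with hU
  have hUd : ∀ x ∈ S, HasDerivWithinAt U (R x) S x := fun x hx =>
    ((facts _ _ h₁ x hx).1.log (hp₁ x hx).ne').fun_sub ((facts _ _ h₂ x hx).1.log (hp₂ x hx).ne')
  have hRd : ∀ x ∈ S, ∃ dd, HasDerivWithinAt R dd S x ∧ (R x = 0 → m₂ x < m₁ x → 0 < dd) := by
    intro x hx
    have hm1 := hp₁ x hx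
    have hm2 := hp₂ x hx
    have hx0 : 0 < x := hx.1
    refine ⟨_, ((facts _ _ h₁ x hx).2.fun_div (facts _ _ h₁ x hx).1 hm1.ne').fun_sub
      ((facts _ _ h₂ x hx).2.fun_div (facts _ _ h₂ x hx).1 hm2.ne'), ?_⟩
    intro hR0 hmm
    have e1 := eq₁ x hx
    have e2 := eq₂ x hx
    change r₁ x / m₁ x - r₂ x / m₂ x = 0 at hR0
    change derivWithin r₁ S x + (x / 2 - 2 * del n / x) * r₁ x + _ = _ at e1
    change derivWithin r₂ S x + (x / 2 - 2 * del n / x) * r₂ x + _ = _ at e2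
    change 0 < (derivWithin r₁ S x * m₁ x - r₁ x * r₁ x) / m₁ x ^ 2 - (derivWithin r₂ S x * m₂ x - r₂ x * r₂ x) / m₂ x ^ 2
    have hg := g_pos x hx0
    have p1 : (1 / x ^ 2) * (2 * mu1 x * m₁ x / x) ^ n = (1 / x ^ 2 * (2 * mu1 x / x) ^ n) * m₁ x ^ (n - 1) * m₁ x := by
      have e : (2 * mu1 x * m₁ x / x) ^ n = (2 * mu1 x / x) ^ n * (m₁ x ^ (n - 1) * m₁ x) := by
        rw [← pow_succ, show n - 1 + 1 = n by omega, ← mul_pow]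
        congr 1; ring
      rw [e]; ring
    have p2 : (1 / x ^ 2) * (2 * mu1 x * m₂ x / x) ^ n = (1 / x ^ 2 * (2 * mu1 x / x) ^ n) * m₂ x ^ (n - 1) * m₂ x := by
      have e : (2 * mu1 x * m₂ x / x) ^ n = (2 * mu1 x / x) ^ n * (m₂ x ^ (n - 1) * m₂ x) := by
        rw [← pow_succ, show n - 1 + 1 = n by omega, ← mul_pow]
        congr 1; ring
      rw [e]; ring
    rw [p1] at e1
    rw [p2] at e2
    have hq : 0 < 1 / x ^ 2 * (2 * mu1 x / x) ^ n := by positivity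
    have hpw := pow_lt_pow_left₀ hmm hm2.le (show n - 1 ≠ 0 by omega)
    set q := 1 / x ^ 2 * (2 * mu1 x / x) ^ n
    set P := x / 2 - 2 * del n / x
    set Z := del n * (del n + 1) / x ^ 2 - (del n / 2 - eps n)
    set a := r₁ x / m₁ x with ha
    have hb : r₂ x / m₂ x = a := by linarith
    have hr1 : r₁ x = a * m₁ x := by rw [ha]; field_simp
    have hr2 : r₂ x = a * m₂ x := by rw [← hb]; field_simp
    rw [hr1] at e1 ⊢
    rw [hr2] at e2 ⊢
    have f1 : derivWithin r₁ S x = (q * m₁ x ^ (n - 1) - P * a - Z) * m₁ x := by linarith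
    have f2 : derivWithin r₂ S x = (q * m₂ x ^ (n - 1) - P * a - Z) * m₂ x := by linarith
    rw [f1, f2]
    have : ((q * m₁ x ^ (n - 1) - P * a - Z) * m₁ x * m₁ x - a * m₁ x * (a * m₁ x)) / m₁ x ^ 2 -
        ((q * m₂ x ^ (n - 1) - P * a - Z) * m₂ x * m₂ x - a * m₂ x * (a * m₂ x)) / m₂ x ^ 2 =
        q * (m₁ x ^ (n - 1) - m₂ x ^ (n - 1)) := by
      field_simp; ring
    rw [this]
    exact mul_pos hq (by linarith)
  have hInt : ∀ x ∈ Ioo 0 ξ, S ∈ 𝓝 x := fun x hx => Ioc_mem_nhds hx.1 hx.2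
  have hξS : ξ ∈ S := ⟨hξ, le_refl _⟩
  have hUξ : 0 < U ξ := by
    simp only [hU, hi₁, hi₂]
    have : 0 < ρ₂ := by rw [← hi₂]; exact hp₂ ξ hξS
    have := Real.log_lt_log this hlt
    linarith
  have hanti : ∀ s ∈ Ioo 0 ξ, (∀ x ∈ Ioo s ξ, R x < 0) → U ξ < U s := by
    intro s hs hneg
    have := strictAntiOn_of_deriv_neg (f := U) (convex_Icc s ξ)
      (fun x hx => ((hUd x ⟨hs.1.trans_le hx.1, hx.2⟩).continuousWithinAt).mono
        (fun y hy => ⟨hs.1.trans_le hy.1, hy.2⟩))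
      (by
        intro x hx
        rw [interior_Icc] at hx
        have hx' : x ∈ Ioo 0 ξ := ⟨hs.1.trans hx.1, hx.2⟩
        rw [((hUd x ⟨hx'.1, hx'.2.le⟩).hasDerivAt (hInt x hx')).deriv]
        exact hneg x hx)
    exact this ⟨le_refl _, hs.2.le⟩ ⟨hs.2.le, le_refl _⟩ hs.2
  have hneg : ∀ x ∈ Ioo 0 ξ, R x < 0 := by
    intro x hx
    have hsub : ∀ s ∈ Ico x ξ, s ∈ Ioo 0 ξ := fun s hs => ⟨hx.1.trans_le hs.1, hs.2⟩
    apply lemG R x ξ hx.2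
    · intro s hs
      obtain ⟨dd, hdd, -⟩ := hRd s (Ioo_subset_Ioc_self (hsub s hs))
      exact (hdd.hasDerivAt (hInt s (hsub s hs))).continuousAt
    · obtain ⟨dd, hdd, hpos⟩ := hRd ξ hξS
      have hR0 : R ξ = 0 := by
        have a1 : r₁ ξ = 0 := hz₁
        have a2 : r₂ ξ = 0 := hz₂
        change r₁ ξ / m₁ ξ - r₂ ξ / m₂ ξ = 0
        rw [a1, a2]; simp
      have hmm : m₂ ξ < m₁ ξ := by rw [hi₁, hi₂]; exact hlt
      have h3 : HasDerivWithinAt R dd (Iio ξ) ξ :=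
        hdd.mono_of_mem_nhdsWithin (mem_of_superset (Ioo_mem_nhdsLT hξ) Ioo_subset_Ioc_self)
      have := left_lt R ξ dd (hpos hR0 hmm) h3
      rwa [hR0] at this
    · intro s hs hs0 hsn
      have hs' := hsub s hs
      have hsS := Ioo_subset_Ioc_self hs'
      obtain ⟨dd, hdd, hpos⟩ := hRd s hsS
      refine ⟨dd, hpos hs0 ?_, hdd.hasDerivAt (hInt s hs')⟩
      have h4 := hanti s hs' hsn
      have h5 : Real.log (m₂ s) < Real.log (m₁ s) := by
        have : 0 < Real.log (m₁ s) - Real.log (m₂ s) := hUξ.trans h4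
        linarith
      exact (Real.log_lt_log_iff (hp₂ s hsS) (hp₁ s hsS)).1 h5
  have hlim : Tendsto U (𝓝[>] 0) (𝓝 (Real.log (lam n) - Real.log (lam n))) :=
    (hl₁.log (lam_pos n hn).ne').sub (hl₂.log (lam_pos n hn).ne')
  rw [sub_self] at hlim
  have : U ξ ≤ 0 := by
    apply ge_of_tendsto hlim
    filter_upwards [Ioo_mem_nhdsGT hξ] with s hs
    exact (hanti s hs fun x hx => hneg x ⟨hs.1.trans hx.1, hx.2⟩).le
  linarith

theorem shoot_of_neither (n : ℕ) (hn : 4 ≤ n) (ξm : ℝ) (hξm : ξm ∈ Ioo 0 (xi0 n))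
    (hchar : deriv (om1 n) ξm * c2 n ξm ^ (n - 1) + deriv (om2 n) ξm = 0)
    (ξ : ℝ) (hξ : ξ ∈ Ioo 0 ξm) (c : ℝ)
    (ha : ¬ Dat.AA (mkDat n hn ξm hξm hchar) (Real.log ξ) c)
    (hb : ¬ Dat.BB (mkDat n hn ξm hξm hchar) (Real.log ξ) c) :
    lam n < c ∧ c < c2 n ξ ∧ ∃ m, IsShootSol n ξ c m := by
  set d := mkDat n hn ξm hξm hchar with hd
  set t0 := Real.log ξ with ht0def
  have ht0 : t0 < Real.log d.xm := Real.log_lt_log hξ.1 hξ.2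
  have hsol := d.sol_isSol t0 c
  set m := fun t => (d.sol t0 c t).1 with hm
  set r := fun t => (d.sol t0 c t).2 with hr
  have hm0 : m t0 = c := by simp [hm, d.sol_init]
  have hr0 : r t0 = 0 := by simp [hr, d.sol_init]
  obtain ⟨h1, h2, h3⟩ := hsol.neither t0 ht0 hr0 ha hb
  have hlim := hsol.limit t0 ht0 h2 h3
  have hexp : Real.exp t0 = ξ := Real.exp_log hξ.1
  have hMM := d.hCM _ (Ioo_subset_Ioc_self (d.expmem ht0))
  rw [hexp] at h2
  rw [hm0] at h1 h2
  refine ⟨h1, h2, fun x => m (Real.log x), ?_⟩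
  have hbounds : ∀ x ∈ Ioc 0 ξ, Real.log x ≤ t0 ∧ d.l ≤ m (Real.log x) ∧ m (Real.log x) ≤ d.M := by
    intro x hx
    have hle : Real.log x ≤ t0 := Real.log_le_log hx.1 hx.2
    refine ⟨hle, ?_⟩
    rw [hexp] at hMM
    rcases hle.lt_or_eq with h | h
    · obtain ⟨-, h4, h5⟩ := h3 _ h
      rw [hm0] at h5
      exact ⟨h4, by linarith⟩
    · rw [h, hm0]; exact ⟨h1.le, by linarith⟩
  have hud : UniqueDiffOn ℝ (Ioc 0 ξ) := uniqueDiffOn_Ioc 0 ξ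
  have hd1 : ∀ x, 0 < x → HasDerivAt (fun x => m (Real.log x)) (r (Real.log x) / x) x := fun x hx =>
    ((hsol.1 (Real.log x)).comp x (Real.hasDerivAt_log hx.ne')).congr_deriv (by rw [div_eq_mul_inv])
  have hdw1 : ∀ x ∈ Ioc 0 ξ, derivWithin (fun x => m (Real.log x)) (Ioc 0 ξ) x = r (Real.log x) / x :=
    fun x hx => (hd1 x hx.1).hasDerivWithinAt.derivWithin (hud x hx)
  have hd2 : ∀ x, 0 < x → HasDerivAt (fun x => r (Real.log x) / x)
      ((((d.A - d.X (Real.log x) ^ 2 / 2) * r (Real.log x) + d.fld (Real.log x) (m (Real.log x))) - r (Real.log x)) / x ^ 2) x := by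
    intro x hx
    refine (((hsol.2 (Real.log x)).comp x (Real.hasDerivAt_log hx.ne')).fun_div (hasDerivAt_id x) hx.ne').congr_deriv ?_
    simp only [Function.comp, id]
    field_simp
  have hdw2 : ∀ x ∈ Ioc 0 ξ, derivWithin (derivWithin (fun x => m (Real.log x)) (Ioc 0 ξ)) (Ioc 0 ξ) x =
      (((d.A - d.X (Real.log x) ^ 2 / 2) * r (Real.log x) + d.fld (Real.log x) (m (Real.log x))) - r (Real.log x)) / x ^ 2 := by
    intro x hx
    rw [derivWithin_congr hdw1 (hdw1 x hx)]
    exact (hd2 x hx.1).hasDerivWithinAt.derivWithin (hud x hx)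
  refine ⟨?_, ?_, ?_, ?_, ?_, ?_⟩
  · have hr1 : ContDiff ℝ 1 r := by
      rw [contDiff_one_iff_deriv]
      refine ⟨fun t => (hsol.2 t).differentiableAt, ?_⟩
      have : deriv r = fun t => (d.A - d.X t ^ 2 / 2) * r t + d.fld t (m t) := funext fun t => (hsol.2 t).deriv
      rw [this]
      have c1 := d.X_cont
      have c2 := hsol.r_cont
      have c3 : Continuous fun t => d.fld t (m t) := d.fld_cont.comp (continuous_id.prodMk hsol.m_cont)
      fun_prop
    have hm2 : ContDiff ℝ 2 m := by
      rw [show (2 : WithTop ℕ∞) = 1 + 1 by norm_num, contDiff_succ_iff_deriv]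
      refine ⟨fun t => (hsol.1 t).differentiableAt, by simp, ?_⟩
      have : deriv m = r := funext fun t => (hsol.1 t).deriv
      rwa [this]
    exact hm2.comp_contDiffOn (Real.contDiffOn_log.mono fun x hx => ne_of_gt hx.1)
  · intro x hx
    obtain ⟨hle, hl, hM⟩ := hbounds x hx
    have hx0 := hx.1
    rw [hdw2 x hx, hdw1 x hx, d.fld_eq _ _ hl hM, d.X_eq (hle.trans ht0.le), Real.exp_log hx.1, b_eq n hn]
    change (((1 + 2 * del n - x ^ 2 / 2) * r (Real.log x) +
      m (Real.log x) * ((2 * mu1 x / x) ^ n * m (Real.log x) ^ (n - 1) -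
        (del n * (del n + 1) - (n : ℝ) * eps n / 2 * x ^ 2))) - r (Real.log x)) / x ^ 2 + _ + _ = _
    have e : (2 * mu1 x * m (Real.log x) / x) ^ n = (2 * mu1 x / x) ^ n * (m (Real.log x) ^ (n - 1) * m (Real.log x)) := by
      rw [← pow_succ, show n - 1 + 1 = n by omega, ← mul_pow]
      congr 1; ring
    simp only [e]
    generalize (2 * mu1 x / x) ^ n = q
    generalize m (Real.log x) ^ (n - 1) = p
    field_simp
    ring
  · exact hm0
  · rw [hdw1 ξ ⟨hξ.1, le_refl _⟩]
    simp [← ht0def, hr0]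
  · intro x hx
    exact lt_of_lt_of_le d.hl (hbounds x hx).2.1
  · exact hlim.comp Real.tendsto_log_nhdsGT_zero

end helpers

/-- First shooting argument: for every ξ ∈ (0, ξ_m) there is a unique
c₀(ξ) ∈ (λ, c₂(ξ)) such that the solution with data (ξ, c₀(ξ)) is positive on (0,ξ]
and tends to λ at 0⁺; moreover ξ ↦ c₀(ξ) is continuous. -/
theorem shooting_towards_zero (n : ℕ) (hn : 4 ≤ n)
    (ξm : ℝ) (hξm : ξm ∈ Set.Ioo 0 (xi0 n))
    (hchar : deriv (om1 n) ξm * c2 n ξm ^ (n - 1) + deriv (om2 n) ξm = 0) :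
    ∃ c0 : ℝ → ℝ, ContinuousOn c0 (Set.Ioo 0 ξm) ∧
      ∀ ξ ∈ Set.Ioo (0:ℝ) ξm,
        (lam n < c0 ξ ∧ c0 ξ < c2 n ξ ∧ ∃ m : ℝ → ℝ, IsShootSol n ξ (c0 ξ) m) ∧
        (∀ ρ : ℝ, lam n < ρ → ρ < c2 n ξ → (∃ m : ℝ → ℝ, IsShootSol n ξ ρ m) →
          ρ = c0 ξ) := by
  obtain ⟨c, hc, hc2⟩ := Dat.main (mkDat n hn ξm hξm hchar) (by
    intro t0 ht0 c c' h1 h2 h3 h4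
    have ht0 : t0 < Real.log ξm := ht0
    have hξ : Real.exp t0 ∈ Set.Ioo 0 ξm := ⟨Real.exp_pos _, (Real.lt_log_iff_exp_lt hξm.1).1 ht0⟩
    rw [← Real.log_exp t0] at h1 h2 h3 h4
    obtain ⟨-, -, m, hm⟩ := shoot_of_neither n hn ξm hξm hchar _ hξ c h1 h2
    obtain ⟨-, -, m', hm'⟩ := shoot_of_neither n hn ξm hξm hchar _ hξ c' h3 h4
    exact shoot_le n hn _ hξ.1 c c' m m' hm hm')
  refine ⟨fun ξ => c (Real.log ξ), ?_, ?_⟩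
  · refine hc.comp (Real.continuousOn_log.mono fun x hx => ne_of_gt hx.1) ?_
    intro x hx
    exact Real.log_lt_log hx.1 hx.2
  · intro ξ hξ
    have hlog : Real.log ξ < Real.log ξm := Real.log_lt_log hξ.1 hξ.2
    obtain ⟨h1, h2⟩ := hc2 (Real.log ξ) hlog
    obtain ⟨g1, g2, m, hm⟩ := shoot_of_neither n hn ξm hξm hchar ξ hξ _ h1 h2
    refine ⟨⟨g1, g2, m, hm⟩, ?_⟩
    rintro ρ - - ⟨m', hm'⟩
    exact le_antisymm (shoot_le n hn ξ hξ.1 _ _ m' m hm' hm) (shoot_le n hn ξ hξ.1 _ _ m m' hm hm')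
end
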